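/- arXiv:1904.07713 — 4 statements merged into one kernel-verified Lean document; each statement's English description precedes it below -/
import Mathlib

section
/- Let n ≥ 1, 0 < a < 1, b = √(1 − a²), and let Ω ⊆ ℝⁿ be a nonempty open connected set. Let u : Ω → ℝ be a C² function with D²u(x) > −(a+b)I for every x ∈ Ω (admissibility), satisfying (√(a²+1)/b) · Σ_{i=1}^n arctan((λ_i(D²u(x)) + a − b)/(λ_i(D²u(x)) + a + b)) = −u(x) + (1/2)⟨x, Du(x)⟩ for all x ∈ Ω. Assume that |Du| = ∞ on ∂Ω or |u| = ∞ on ∂Ω. Then Ω = ℝⁿ and u is a quadratic polynomial. -/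
open Real Filter Matrix
open scoped RealInnerProductSpace

noncomputable section

/-- The Hessian matrix of `u` at `x`, with entries the second iterated derivatives
in the coordinate directions. -/
def Hess (n : ℕ) (u : EuclideanSpace ℝ (Fin n) → ℝ) (x : EuclideanSpace ℝ (Fin n)) :
    Matrix (Fin n) (Fin n) ℝ :=
  Matrix.of fun i j =>
    iteratedFDeriv ℝ 2 u x ![EuclideanSpace.single i 1, EuclideanSpace.single j 1]

open Classical in
/-- The eigenvalues of a real symmetric matrix (junk value `0` if not symmetric). -/
def eigs {n : ℕ} (A : Matrix (Fin n) (Fin n) ℝ) : Fin n → ℝ :=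
  if h : A.IsHermitian then h.eigenvalues else 0

/-- `u` is a quadratic polynomial:
`u x = (1/2)⟨x, A x⟩ + ⟨β, x⟩ + c` with `A` symmetric. -/
def IsQuadPoly (n : ℕ) (u : EuclideanSpace ℝ (Fin n) → ℝ) : Prop :=
  ∃ (A : Matrix (Fin n) (Fin n) ℝ) (β : EuclideanSpace ℝ (Fin n)) (c : ℝ), A.IsSymm ∧
    ∀ x, u x = (1/2) * (∑ i, ∑ j, A i j * x i * x j) + ⟪β, x⟫ + c

/-!
Since `arctan ((t + a - b) / (t + a + b)) = arctan ((t + a) / b) - π / 4`, the function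
`w = b⁻¹ u + (a / 2b) |x|²` solves `∑ᵢ (K arctan λᵢ(D²w) + k) = -w + ½⟨x, Dw⟩` with `D²w > -I`.

Blow-up at the boundary makes the graph of `Du` closed. If `|Du| → ∞` this is immediate; if
`|u| → ∞`, then the right-hand side `-u + ½⟨x, Du⟩`, called the phase of `u`, is bounded by the
equation, so `|u(rx) - r²u(x)| ≤ C |r² - 1|`, no ray leaves `Ω`, and `Ω` is the whole space.
The map `x ↦ Dw(x) + 2x` is locally expanding with closed graph over `Ω`. Lifting the rays from a
base value gives it a continuous right inverse `S` on the whole space, although `Ω` need not be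
convex. The Lewy rotation of `w` along `S` is then an entire solution `V` of an equation of the
same kind, now with bounded Hessian, hence uniformly elliptic.

The phase of `V` is constant. Formally it satisfies `∑ᵢ f'(λᵢ) ∂ᵢᵢφ = ½⟨x, Dφ⟩`, the drift term
makes `ε|x|² - e^(-α|x|²)` a coercive strict supersolution away from the origin, and so `φ` attains
its extrema at the origin. As `φ` is only `C¹`, the comparison is carried out on the scaling
quotient `(V(sx) - s²V(x)) / (s² - 1)`, whose limit as `s → 1` is `φ`. A constant phase means that
`DV` is homogeneous of degree one, and it is differentiable at the origin, so it is linear. Then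
`S` is linear and injective, hence surjective, so `Ω` is the whole space; the phase of `w` is
constant as well, and `w` is quadratic.
-/

section Spectral

open scoped NNReal

variable {E : Type*} [NormedAddCommGroup E] [InnerProductSpace ℝ E] {ι : Type*} [Fintype ι]

/-- `e` is an orthonormal basis of eigenvectors of the operator `T`, with eigenvalues `θ`. -/
def IsEigenbasis (T : E →L[ℝ] E) (e : OrthonormalBasis ι ℝ E) (θ : ι → ℝ) : Prop :=
  ∀ i, T (e i) = θ i • e i

namespace IsEigenbasis

variable {A A' : E →L[ℝ] E} {e e' : OrthonormalBasis ι ℝ E} {θ θ' : ι → ℝ}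

lemma inner_map (h : IsEigenbasis A e θ) (i : ι) (x : E) : ⟪e i, A x⟫ = θ i * ⟪e i, x⟫ := by
  have hx : A x = ∑ j, (⟪e j, x⟫ * θ j) • e j := by
    conv_lhs => rw [← e.sum_repr' x]
    simp only [map_sum, map_smul, h _, smul_smul]
  rw [hx, e.orthonormal.inner_right_fintype, mul_comm]

lemma isSymmetric (h : IsEigenbasis A e θ) : A.IsSymmetric := fun x y => by
  change ⟪A x, y⟫ = ⟪x, A y⟫
  rw [← e.sum_inner_mul_inner (A x) y, ← e.sum_inner_mul_inner x (A y)]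
  refine Finset.sum_congr rfl fun i _ => ?_
  rw [real_inner_comm, h.inner_map, h.inner_map, real_inner_comm]
  ring

lemma inner_map_self (h : IsEigenbasis A e θ) (x : E) :
    ⟪x, A x⟫ = ∑ i, θ i * ⟪e i, x⟫ ^ 2 := by
  rw [← e.sum_inner_mul_inner x (A x)]
  refine Finset.sum_congr rfl fun i _ => ?_
  rw [h.inner_map, real_inner_comm]
  ring

lemma mul_norm_sq_le_inner_map_self (h : IsEigenbasis A e θ) {b : ℝ} (hb : ∀ i, b ≤ θ i) (x : E) :
    b * ‖x‖ ^ 2 ≤ ⟪x, A x⟫ := by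
  rw [h.inner_map_self, ← e.sum_sq_inner_right x, Finset.mul_sum]
  gcongr with i
  exact hb i

lemma inner_sub_map (h : IsEigenbasis A e θ) (h' : IsEigenbasis A' e' θ') (i j : ι) :
    ⟪e' j, (A' - A) (e i)⟫ = (θ' j - θ i) * ⟪e' j, e i⟫ := by
  rw [_root_.sub_apply, inner_sub_right, h'.inner_map, h i, real_inner_smul_right]
  ring

lemma inner_sub_map_self (h : IsEigenbasis A e θ) (h' : IsEigenbasis A' e' θ') (i : ι) :
    ⟪e i, (A' - A) (e i)⟫ = ∑ j, ⟪e' j, e i⟫ ^ 2 * (θ' j - θ i) := by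
  rw [← e'.sum_inner_mul_inner (e i)]
  refine Finset.sum_congr rfl fun j _ => ?_
  rw [h.inner_sub_map h', real_inner_comm]
  ring

lemma sum_sq_mul_sq_sub_le (h : IsEigenbasis A e θ) (h' : IsEigenbasis A' e' θ') (i : ι) :
    ∑ j, ⟪e' j, e i⟫ ^ 2 * (θ' j - θ i) ^ 2 ≤ ‖A' - A‖ ^ 2 :=
  calc ∑ j, ⟪e' j, e i⟫ ^ 2 * (θ' j - θ i) ^ 2 = ‖(A' - A) (e i)‖ ^ 2 := by
        rw [← e'.sum_sq_inner_right]
        exact Finset.sum_congr rfl fun j _ => by rw [h.inner_sub_map h']; ring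
    _ ≤ ‖A' - A‖ ^ 2 := by
        gcongr
        simpa only [e.norm_eq_one, mul_one] using (A' - A).le_opNorm (e i)

end IsEigenbasis

lemma exists_isEigenbasis_of_isSymmetric (e : OrthonormalBasis ι ℝ E) {A : E →L[ℝ] E}
    (hA : A.IsSymmetric) : ∃ (e' : OrthonormalBasis ι ℝ E) (θ : ι → ℝ), IsEigenbasis A e' θ := by
  have : FiniteDimensional ℝ E := e.toBasis.finiteDimensional_of_finite
  have hn : Module.finrank ℝ E = Fintype.card ι := Module.finrank_eq_card_basis e.toBasis
  let σ : Fin (Fintype.card ι) ≃ ι := (Fintype.equivFin ι).symm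
  refine ⟨(hA.eigenvectorBasis hn).reindex σ, hA.eigenvalues hn ∘ σ.symm, fun i => ?_⟩
  rw [OrthonormalBasis.reindex_apply]
  exact hA.apply_eigenvectorBasis hn (σ.symm i)

section TraceFunction

variable {f : ℝ → ℝ} {C : ℝ≥0} {A A' B : E →L[ℝ] E} {e e' : OrthonormalBasis ι ℝ E}
  {θ θ' : ι → ℝ}

lemma abs_sub_sub_deriv_mul_sub_le (hf : Differentiable ℝ f) (hC : LipschitzWith C (deriv f))
    (x y : ℝ) : |f y - f x - deriv f x * (y - x)| ≤ C * (y - x) ^ 2 := by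
  have hderiv : ∀ t ∈ Set.uIcc x y, HasDerivWithinAt (fun s => f s - deriv f x * s)
      (deriv f t - deriv f x) (Set.uIcc x y) t := fun t _ =>
    ((hf t).hasDerivAt.sub (hasDerivAt_const_mul (deriv f x))).hasDerivWithinAt
  have hbound : ∀ t ∈ Set.uIcc x y, ‖deriv f t - deriv f x‖ ≤ C * |y - x| := fun t ht =>
    (hC.norm_sub_le t x).trans <|
      mul_le_mul_of_nonneg_left (Set.abs_sub_left_of_mem_uIcc ht) C.coe_nonneg
  have := (convex_uIcc x y).norm_image_sub_le_of_norm_hasDerivWithin_le hderiv hbound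
    Set.left_mem_uIcc Set.right_mem_uIcc
  calc |f y - f x - deriv f x * (y - x)|
      = ‖f y - deriv f x * y - (f x - deriv f x * x)‖ := by rw [Real.norm_eq_abs]; congr 1; ring
    _ ≤ C * |y - x| * ‖y - x‖ := this
    _ = C * (y - x) ^ 2 := by rw [Real.norm_eq_abs, mul_assoc, abs_mul_abs_self, sq]

-- The squared overlaps `⟪e i, e' j⟫ ^ 2` form a doubly stochastic matrix, so the remainder is
-- an average of scalar Taylor remainders.
lemma abs_sum_map_eigenvalues_sub_le (hf : Differentiable ℝ f) (hC : LipschitzWith C (deriv f))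
    (hA : IsEigenbasis A e θ) (hA' : IsEigenbasis A' e' θ') :
    |∑ j, f (θ' j) - ∑ i, f (θ i) - ∑ i, deriv f (θ i) * ⟪e i, (A' - A) (e i)⟫|
      ≤ C * Fintype.card ι * ‖A' - A‖ ^ 2 := by
  have hrow : ∀ i, ∑ j, ⟪e' j, e i⟫ ^ 2 = 1 := fun i => by
    rw [e'.sum_sq_inner_right, e.norm_eq_one, one_pow]
  have hcol : ∀ j, ∑ i, ⟪e' j, e i⟫ ^ 2 = 1 := fun j => by
    rw [e.sum_sq_inner_left, e'.norm_eq_one, one_pow]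
  have hsplit : ∑ j, f (θ' j) - ∑ i, f (θ i) - ∑ i, deriv f (θ i) * ⟪e i, (A' - A) (e i)⟫
      = ∑ i, ∑ j, ⟪e' j, e i⟫ ^ 2 * (f (θ' j) - f (θ i) - deriv f (θ i) * (θ' j - θ i)) := by
    have h1 : ∑ j, f (θ' j) = ∑ i, ∑ j, ⟪e' j, e i⟫ ^ 2 * f (θ' j) := by
      rw [Finset.sum_comm]
      simp only [← Finset.sum_mul, hcol, one_mul]
    have h2 : ∑ i, f (θ i) = ∑ i, ∑ j, ⟪e' j, e i⟫ ^ 2 * f (θ i) := by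
      simp only [← Finset.sum_mul, hrow, one_mul]
    rw [h1, h2]
    simp only [hA.inner_sub_map_self hA', Finset.mul_sum, ← Finset.sum_sub_distrib]
    exact Finset.sum_congr rfl fun i _ => Finset.sum_congr rfl fun j _ => by ring
  rw [hsplit]
  calc _ ≤ ∑ i, ∑ j, ⟪e' j, e i⟫ ^ 2 * (C * (θ' j - θ i) ^ 2) := by
        refine (Finset.abs_sum_le_sum_abs _ _).trans (Finset.sum_le_sum fun i _ => ?_)
        refine (Finset.abs_sum_le_sum_abs _ _).trans (Finset.sum_le_sum fun j _ => ?_)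
        rw [abs_mul, abs_of_nonneg (sq_nonneg _)]
        gcongr
        exact abs_sub_sub_deriv_mul_sub_le hf hC _ _
    _ = ∑ i, C * ∑ j, ⟪e' j, e i⟫ ^ 2 * (θ' j - θ i) ^ 2 := by
        simp only [Finset.mul_sum, mul_left_comm]
    _ ≤ ∑ _i : ι, C * ‖A' - A‖ ^ 2 := by
        gcongr with i
        exact hA.sum_sq_mul_sq_sub_le hA' i
    _ = C * Fintype.card ι * ‖A' - A‖ ^ 2 := by
        rw [Finset.sum_const, Finset.card_univ, nsmul_eq_mul]
        ring

lemma sum_map_eigenvalues_mono (hf : Differentiable ℝ f) (hC : LipschitzWith C (deriv f))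
    (hmono : 0 ≤ deriv f) (hA : IsEigenbasis A e θ) (hA' : IsEigenbasis A' e' θ')
    (hle : ∀ x, ⟪x, A x⟫ ≤ ⟪x, A' x⟫) : ∑ i, f (θ i) ≤ ∑ i, f (θ' i) := by
  set D := A' - A with hD
  have hDsymm : D.IsSymmetric := hA'.isSymmetric.sub hA.isSymmetric
  have hDnonneg : ∀ x, 0 ≤ ⟪x, D x⟫ := fun x => by
    simpa only [hD, _root_.sub_apply, inner_sub_right, sub_nonneg] using hle x
  have hline : ∀ t : ℝ, (A + t • D).IsSymmetric := fun t =>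
    hA.isSymmetric.add (hDsymm.smul (conj_trivial t))
  choose b ω hω using fun t => exists_isEigenbasis_of_isSymmetric e (hline t)
  have hderiv : ∀ t, HasDerivAt (fun s => ∑ i, f (ω s i))
      (∑ i, deriv f (ω t i) * ⟪b t i, D (b t i)⟫) t := fun t => by
    refine .of_isLittleO <| Asymptotics.IsBigO.trans_isLittleO ?_
      (Asymptotics.isLittleO_pow_sub_sub t one_lt_two)
    refine .of_bound (C * Fintype.card ι * ‖D‖ ^ 2) (.of_forall fun s => ?_)
    have h := abs_sum_map_eigenvalues_sub_le hf hC (hω t) (hω s)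
    rw [add_sub_add_left_eq_sub, ← sub_smul, norm_smul] at h
    simp only [_root_.smul_apply, real_inner_smul_right, mul_left_comm _ (s - t),
      ← Finset.mul_sum] at h
    rw [smul_eq_mul, Real.norm_eq_abs]
    refine h.trans_eq ?_
    rw [norm_pow, norm_norm]
    ring
  have hg : Monotone fun t => ∑ i, f (ω t i) := monotone_of_deriv_nonneg
    (fun t => (hderiv t).differentiableAt) fun t => by
      rw [(hderiv t).deriv]
      exact Finset.sum_nonneg fun i _ => mul_nonneg (hmono _) (hDnonneg _)
  have hunique : ∀ {T : E →L[ℝ] E} {b b' : OrthonormalBasis ι ℝ E} {η η' : ι → ℝ},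
      IsEigenbasis T b η → IsEigenbasis T b' η' → ∑ i, f (η i) = ∑ i, f (η' i) := fun h h' => by
    simpa [sub_eq_zero] using abs_sum_map_eigenvalues_sub_le hf hC h' h
  calc ∑ i, f (θ i) = ∑ i, f (ω 0 i) := hunique hA (by simpa using hω 0)
    _ ≤ ∑ i, f (ω 1 i) := hg zero_le_one
    _ = ∑ i, f (θ' i) := hunique (by simpa [hD] using hω 1) hA'

lemma sum_map_eigenvalues_le_of_le_add_smul (hf : Differentiable ℝ f)
    (hC : LipschitzWith C (deriv f)) (hmono : 0 ≤ deriv f)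
    (hA : IsEigenbasis A e θ) (hA' : IsEigenbasis A' e' θ') (hB : B.IsSymmetric) {t : ℝ}
    (hle : ∀ x, ⟪x, A' x⟫ ≤ ⟪x, A x⟫ + t * ⟪x, B x⟫) :
    ∑ i, f (θ' i) ≤ ∑ i, f (θ i) + t * ∑ i, deriv f (θ i) * ⟪e i, B (e i)⟫
      + t ^ 2 * (C * Fintype.card ι * ‖B‖ ^ 2) := by
  obtain ⟨b, ω, hω⟩ := exists_isEigenbasis_of_isSymmetric (A := A + t • B) e
    (hA.isSymmetric.add (hB.smul (conj_trivial t)))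
  have hmonotone := sum_map_eigenvalues_mono hf hC hmono hA' hω fun x => by
    simpa only [_root_.add_apply, _root_.smul_apply, inner_add_right, real_inner_smul_right]
      using hle x
  have htaylor := (abs_le.mp (abs_sum_map_eigenvalues_sub_le hf hC hA hω)).2
  rw [add_sub_cancel_left, norm_smul, mul_pow, Real.norm_eq_abs, sq_abs] at htaylor
  simp only [_root_.smul_apply, real_inner_smul_right, mul_left_comm _ t,
    ← Finset.mul_sum] at htaylor
  linarith

end TraceFunction

end Spectral

section Hessian

open scoped Gradient Topology

variable {E : Type*} [NormedAddCommGroup E] [InnerProductSpace ℝ E] [CompleteSpace E]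
  {u : E → ℝ} {x : E}

/-- The Hessian of `u` at `x` as an operator: the derivative of the gradient. -/
def hessian (u : E → ℝ) (x : E) : E →L[ℝ] E := fderiv ℝ (∇ u) x

/-- The right-hand side `-u + ½ ⟨x, Du⟩` of the equation. On a solution it equals the Lagrangian
phase `∑ f(λᵢ(D²u))`; along rays it measures how far `u` is from being homogeneous of degree 2. -/
def phase (u : E → ℝ) (x : E) : ℝ := -u x + (1 / 2) * ⟪x, ∇ u x⟫

lemma hasDerivAt_comp_of_hasGradientAt {g v : E} {γ : ℝ → E} {t : ℝ}
    (hu : HasGradientAt u g (γ t)) (hγ : HasDerivAt γ v t) :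
    HasDerivAt (fun s => u (γ s)) ⟪g, v⟫ t :=
  hu.hasFDerivAt.comp_hasDerivAt t hγ

lemma contDiffAt_gradient (hu : ContDiffAt ℝ 2 u x) : ContDiffAt ℝ 1 (∇ u) x := by
  let toVector : StrongDual ℝ E ≃ₗᵢ[ℝ] E := (InnerProductSpace.toDual ℝ E).symm
  exact toVector.contDiff.contDiffAt.comp x (hu.fderiv_right one_add_one_eq_two.le)

lemma differentiableAt_gradient (hu : ContDiffAt ℝ 2 u x) : DifferentiableAt ℝ (∇ u) x :=
  (contDiffAt_gradient hu).differentiableAt one_ne_zero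

lemma hasFDerivAt_gradient (hu : DifferentiableAt ℝ (∇ u) x) :
    HasFDerivAt (∇ u) (hessian u x) x :=
  hu.hasFDerivAt

lemma continuous_hessian (hu : ContDiff ℝ 2 u) : Continuous (hessian u) :=
  (contDiff_iff_contDiffAt.mpr fun _ => contDiffAt_gradient hu.contDiffAt).continuous_fderiv
    one_ne_zero

lemma hasFDerivAt_fderiv (hu : DifferentiableAt ℝ (∇ u) x) :
    HasFDerivAt (fderiv ℝ u) ((innerSL ℝ : E →L[ℝ] E →L[ℝ] ℝ) ∘L hessian u x) x := by
  have h := (innerSL ℝ : E →L[ℝ] E →L[ℝ] ℝ).hasFDerivAt.comp x hu.hasFDerivAt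
  rwa [show (innerSL ℝ : E →L[ℝ] E →L[ℝ] ℝ) ∘ ∇ u = fderiv ℝ u from
    funext fun y => ContinuousLinearMap.ext fun v => inner_gradient_left] at h

lemma fderiv_fderiv_apply (hu : DifferentiableAt ℝ (∇ u) x) (v w : E) :
    fderiv ℝ (fderiv ℝ u) x v w = ⟪hessian u x v, w⟫ := by
  rw [(hasFDerivAt_fderiv hu).fderiv]
  rfl

lemma hessian_isSymmetric (hu : ContDiffAt ℝ 2 u x) : (hessian u x).IsSymmetric := fun v w => by
  have hdiff : ∀ᶠ y in 𝓝 x, HasFDerivAt u (fderiv ℝ u y) y :=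
    (hu.eventually (by simp)).mono fun y hy => (hy.differentiableAt two_ne_zero).hasFDerivAt
  have h := second_derivative_symmetric_of_eventually hdiff
    (hasFDerivAt_fderiv (differentiableAt_gradient hu)) v w
  exact h.trans (real_inner_comm _ _)

lemma deriv_deriv_nonneg_of_isLocalMin {f : ℝ → ℝ} {t : ℝ} (hmin : IsLocalMin f t)
    (hcont : ContinuousAt f t) : 0 ≤ deriv (deriv f) t := by
  by_contra! hneg
  have hmax := isLocalMax_of_deriv_deriv_neg hneg hmin.deriv_eq_zero hcont
  have hconst : f =ᶠ[𝓝 t] fun _ => f t := by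
    filter_upwards [hmin, hmax] with s hs hs' using le_antisymm hs' hs
  have h := hconst.deriv.deriv_eq
  simp only [deriv_const', deriv_const] at h
  exact hneg.ne h

lemma inner_hessian_nonneg_of_isLocalMin {Q : E → ℝ} {G : E → E} {H : E →L[ℝ] E}
    (hmin : IsLocalMin Q x) (hQ : ∀ᶠ y in 𝓝 x, HasGradientAt Q (G y) y) (hG : HasFDerivAt G H x)
    (v : E) : 0 ≤ ⟪v, H v⟫ := by
  let γ : ℝ → E := fun t => x + t • v
  have hγ : ∀ t, HasDerivAt γ v t := fun t => by
    simpa only [one_smul] using (hasDerivAt_id' t).smul_const v |>.const_add x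
  have hγ0 : γ 0 = x := by simp only [γ, zero_smul, add_zero]
  have hγx : Tendsto γ (𝓝 0) (𝓝 x) := hγ0 ▸ (hγ 0).continuousAt
  have hderiv : ∀ᶠ t in 𝓝 0, HasDerivAt (fun s => Q (γ s)) ⟪G (γ t), v⟫ t :=
    (hγx.eventually hQ).mono fun t ht => hasDerivAt_comp_of_hasGradientAt ht (hγ t)
  have hderiv2 : HasDerivAt (fun t => ⟪G (γ t), v⟫) ⟪v, H v⟫ 0 := by
    rw [← hγ0] at hG
    have h := (hG.comp_hasDerivAt 0 (hγ 0)).inner ℝ (hasDerivAt_const 0 v)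
    rw [inner_zero_right, zero_add, real_inner_comm] at h
    exact h
  have hmin' : IsLocalMin (fun t => Q (γ t)) 0 := by
    filter_upwards [hγx.eventually hmin] with t ht
    simpa only [hγ0] using ht
  have hd : deriv (fun t => Q (γ t)) =ᶠ[𝓝 0] fun t => ⟪G (γ t), v⟫ :=
    hderiv.mono fun t ht => ht.deriv
  rw [← hderiv2.deriv, ← hd.deriv_eq]
  exact deriv_deriv_nonneg_of_isLocalMin hmin' hderiv.self_of_nhds.continuousAt

-- Cauchy's mean value theorem for `r ↦ u (r • x) / r ^ 2` against `r ↦ 1 / r ^ 2`.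
lemma exists_phase_smul_eq {s t : ℝ} (hs : 0 < s) (hst : s < t)
    (hu : ∀ r ∈ Set.Icc s t, DifferentiableAt ℝ u (r • x)) :
    ∃ c ∈ Set.Ioo s t,
      u (t • x) * s ^ 2 - u (s • x) * t ^ 2 = (t ^ 2 - s ^ 2) * phase u (c • x) := by
  have hu' : ∀ r ∈ Set.Icc s t, HasDerivAt (fun r => u (r • x)) ⟪∇ u (r • x), x⟫ r :=
    fun r hr => hasDerivAt_comp_of_hasGradientAt (γ := (· • x)) (hu r hr).hasGradientAt
      (by simpa only [one_smul] using (hasDerivAt_id' r).smul_const x)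
  have hpos : ∀ r ∈ Set.Icc s t, r ≠ 0 := fun r hr => (hs.trans_le hr.1).ne'
  have hinv : ∀ r ∈ Set.Icc s t, HasDerivAt (fun r : ℝ => (r ^ 2)⁻¹) (-(2 * r) / (r ^ 2) ^ 2) r :=
    fun r hr => by simpa using (hasDerivAt_pow 2 r).fun_inv (pow_ne_zero 2 (hpos r hr))
  have hquot := fun r hr => (hu' r hr).mul (hinv r hr)
  obtain ⟨c, hc, h⟩ := exists_ratio_hasDerivAt_eq_ratio_slope _ _ hst
    (fun r hr => (hquot r hr).continuousAt.continuousWithinAt)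
    (fun r hr => hquot r (Set.Ioo_subset_Icc_self hr)) _ _
    (fun r hr => (hinv r hr).continuousAt.continuousWithinAt)
    (fun r hr => hinv r (Set.Ioo_subset_Icc_self hr))
  have hc0 := hpos c (Set.Ioo_subset_Icc_self hc)
  have ht0 := (hs.trans hst).ne'
  refine ⟨c, hc, ?_⟩
  simp only [Pi.mul_apply] at h
  rw [phase, real_inner_smul_left, real_inner_comm]
  field_simp at h
  linear_combination (1 / 2) * h

end Hessian

section Gradient

open scoped Gradient

variable {E : Type*} [NormedAddCommGroup E] [InnerProductSpace ℝ E] [CompleteSpace E]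

lemma hasGradientAt_of_hasFDerivAt {u : E → ℝ} {L : E →L[ℝ] ℝ} {g x : E} (h : HasFDerivAt u L x)
    (hL : ∀ v, L v = ⟪g, v⟫) : HasGradientAt u g x :=
  hasGradientAt_iff_hasFDerivAt.mpr <| h.congr_fderiv <| ContinuousLinearMap.ext hL

lemma gradient_eq_zero_of_isLocalMin {Q : E → ℝ} {g x : E} (hmin : IsLocalMin Q x)
    (hQ : HasGradientAt Q g x) : g = 0 :=
  (InnerProductSpace.toDual ℝ E).map_eq_zero_iff.mp (hmin.hasFDerivAt_eq_zero hQ.hasFDerivAt)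

end Gradient

section ScalingQuotient

open scoped Gradient Topology

variable {E : Type*} [NormedAddCommGroup E] [InnerProductSpace ℝ E] [CompleteSpace E]
  {V : E → ℝ} {s : ℝ}

/-- The difference quotient of `V` in the scaling parameter. It tends to `phase V` as `s → 1`;
being as smooth as `V` itself, it replaces `phase V` wherever a second derivative is needed. -/
def scalingQuotient (V : E → ℝ) (s : ℝ) (x : E) : ℝ := (V (s • x) - s ^ 2 * V x) / (s ^ 2 - 1)

omit [CompleteSpace E] in
lemma continuous_scalingQuotient (hV : Continuous V) (s : ℝ) : Continuous (scalingQuotient V s) :=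
  ((hV.comp (continuous_const_smul s)).sub (hV.const_mul (s ^ 2))).div_const _

lemma exists_scalingQuotient_eq_phase (hV : Differentiable ℝ V) (hs : 1 < s) (x : E) :
    ∃ σ ∈ Set.Ioo 1 s, scalingQuotient V s x = phase V (σ • x) := by
  obtain ⟨σ, hσ, h⟩ := exists_phase_smul_eq one_pos hs fun r _ => hV (r • x)
  have hs2 : s ^ 2 - 1 ≠ 0 := (sub_pos.mpr (one_lt_pow₀ hs two_ne_zero)).ne'
  refine ⟨σ, hσ, ?_⟩
  rw [scalingQuotient, div_eq_iff hs2]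
  rw [one_smul] at h
  linear_combination h

lemma abs_scalingQuotient_le (hV : Differentiable ℝ V) {M : ℝ} (hM : ∀ x, |phase V x| ≤ M)
    (hs : 1 < s) (x : E) : |scalingQuotient V s x| ≤ M := by
  obtain ⟨σ, -, h⟩ := exists_scalingQuotient_eq_phase hV hs x
  exact h ▸ hM (σ • x)

lemma eventually_abs_scalingQuotient_sub_phase_lt (hV : Differentiable ℝ V)
    (hphase : Continuous (phase V)) {K : Set E} (hK : IsCompact K) {δ : ℝ} (hδ : 0 < δ) :
    ∀ᶠ s in 𝓝[>] (1 : ℝ), ∀ x ∈ K, |scalingQuotient V s x - phase V x| < δ := by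
  have hnear : ∀ᶠ σ in 𝓝 (1 : ℝ), ∀ x ∈ K, |phase V (σ • x) - phase V x| < δ := by
    refine hK.eventually_forall_of_forall_eventually fun x _ => ?_
    have hcont : Continuous fun z : ℝ × E => |phase V (z.1 • z.2) - phase V z.2| := by fun_prop
    refine hcont.continuousAt.eventually_lt continuousAt_const ?_
    simpa only [one_smul, sub_self, abs_zero] using hδ
  obtain ⟨t, ht, hsub⟩ := mem_nhdsGT_iff_exists_Ioo_subset.mp (mem_nhdsWithin_of_mem_nhds hnear)
  filter_upwards [Ioo_mem_nhdsGT ht] with s hs x hx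
  obtain ⟨σ, hσ, h⟩ := exists_scalingQuotient_eq_phase hV hs.1 x
  rw [h]
  exact hsub ⟨hσ.1, hσ.2.trans hs.2⟩ x hx

lemma hasGradientAt_scalingQuotient (hV : Differentiable ℝ V) (s : ℝ) (x : E) :
    HasGradientAt (scalingQuotient V s)
      ((s ^ 2 - 1)⁻¹ • (s • ∇ V (s • x) - s ^ 2 • ∇ V x)) x := by
  have hscaled : HasFDerivAt (fun y => V (s • y))
      (fderiv ℝ V (s • x) ∘L (s • ContinuousLinearMap.id ℝ E)) x :=
    (hV (s • x)).hasFDerivAt.comp (f := (s • ·)) x ((hasFDerivAt_id x).const_smul s)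
  have h := (hscaled.sub ((hV x).hasFDerivAt.const_mul (s ^ 2))).mul_const (s ^ 2 - 1)⁻¹
  refine hasGradientAt_of_hasFDerivAt h fun v => ?_
  simp [real_inner_smul_left, inner_sub_left, inner_gradient_left]

lemma hasFDerivAt_gradient_scalingQuotient (hV : Differentiable ℝ (∇ V)) (s : ℝ) (x : E) :
    HasFDerivAt (fun y => (s ^ 2 - 1)⁻¹ • (s • ∇ V (s • y) - s ^ 2 • ∇ V y))
      ((s ^ 2 / (s ^ 2 - 1)) • (hessian V (s • x) - hessian V x)) x := by
  have hscaled : HasFDerivAt (fun y => ∇ V (s • y))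
      (hessian V (s • x) ∘L (s • ContinuousLinearMap.id ℝ E)) x :=
    (hV (s • x)).hasFDerivAt.comp (f := (s • ·)) x ((hasFDerivAt_id x).const_smul s)
  refine (((hscaled.const_smul s).sub ((hV x).hasFDerivAt.const_smul (s ^ 2))).const_smul
    (s ^ 2 - 1)⁻¹).congr_fderiv ?_
  ext v
  simp only [hessian, ContinuousLinearMap.comp_smulₛₗ, ringHom_apply, ContinuousLinearMap.comp_id,
    smul_smul, smul_sub, _root_.sub_apply, _root_.smul_apply]
  ring_nf

lemma hasGradientAt_sub_scalingQuotient (hV : Differentiable ℝ V) {Ψ : E → ℝ} {x : E}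
    (hΨ : DifferentiableAt ℝ Ψ x) : HasGradientAt (fun y => Ψ y - scalingQuotient V s y)
      (∇ Ψ x - (s ^ 2 - 1)⁻¹ • (s • ∇ V (s • x) - s ^ 2 • ∇ V x)) x :=
  hasGradientAt_of_hasFDerivAt
    (hΨ.hasFDerivAt.sub (hasGradientAt_scalingQuotient hV s x).hasFDerivAt) fun v => by
      rw [_root_.sub_apply, inner_sub_left, inner_gradient_left]
      rfl

lemma phase_smul_of_isLocalMin_sub_scalingQuotient (hV : Differentiable ℝ V) {Ψ : E → ℝ} {x : E}
    (hΨ : DifferentiableAt ℝ Ψ x) (hs : 1 < s)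
    (hmin : IsLocalMin (fun y => Ψ y - scalingQuotient V s y) x) :
    phase V (s • x)
      = s ^ 2 * phase V x + (s ^ 2 - 1) * ((1 / 2) * ⟪x, ∇ Ψ x⟫ - scalingQuotient V s x) := by
  have hs2 : s ^ 2 - 1 ≠ 0 := (sub_pos.mpr (one_lt_pow₀ hs two_ne_zero)).ne'
  have hcrit : (s ^ 2 - 1) • ∇ Ψ x = s • ∇ V (s • x) - s ^ 2 • ∇ V x := by
    have h := gradient_eq_zero_of_isLocalMin hmin (hasGradientAt_sub_scalingQuotient hV hΨ)
    rw [sub_eq_zero.mp h, smul_inv_smul₀ hs2]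
  have hinner := congrArg (fun w => ⟪x, w⟫) hcrit
  simp only [inner_sub_right, real_inner_smul_right] at hinner
  rw [phase, phase, scalingQuotient, real_inner_smul_left]
  field_simp
  linear_combination -hinner

lemma inner_hessian_smul_le_of_isLocalMin_sub_scalingQuotient (hV : Differentiable ℝ V)
    (hV' : Differentiable ℝ (∇ V)) {Ψ : E → ℝ} (hΨ : ContDiff ℝ 2 Ψ) {x : E} (hs : 1 < s)
    (hmin : IsLocalMin (fun y => Ψ y - scalingQuotient V s y) x) (v : E) :
    ⟪v, hessian V (s • x) v⟫
      ≤ ⟪v, hessian V x v⟫ + (s ^ 2 - 1) / s ^ 2 * ⟪v, hessian Ψ x v⟫ := by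
  have hs2 : 0 < s ^ 2 - 1 := sub_pos.mpr (one_lt_pow₀ hs two_ne_zero)
  have hs0 : 0 < s ^ 2 := by linarith
  have h := inner_hessian_nonneg_of_isLocalMin hmin
    (.of_forall fun y => hasGradientAt_sub_scalingQuotient hV
      (hΨ.differentiable two_ne_zero y))
    ((hasFDerivAt_gradient (differentiableAt_gradient hΨ.contDiffAt)).sub
      (hasFDerivAt_gradient_scalingQuotient hV' s x)) v
  simp only [_root_.sub_apply, _root_.smul_apply, inner_sub_right, real_inner_smul_right,
    sub_nonneg] at h
  rw [div_mul_eq_mul_div, div_le_iff₀ hs2] at h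
  rw [div_mul_eq_mul_div, ← sub_le_iff_le_add', le_div_iff₀ hs0]
  linarith

end ScalingQuotient

section MaximumPrinciple

open scoped Gradient NNReal Topology

/-- The structural conditions on `f` under which the equation `∑ f(λᵢ(D²u)) = phase u` obeys a
maximum principle: `f` is nondecreasing with Lipschitz derivative, and on the set `I` of
admissible eigenvalues it is bounded with slope pinched between positive constants. -/
structure IsUniformlyElliptic (f : ℝ → ℝ) (I : Set ℝ) : Prop where
  differentiable : Differentiable ℝ f
  lipschitzWith_deriv : ∃ C, LipschitzWith C (deriv f)
  deriv_nonneg : 0 ≤ deriv f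
  deriv_mem_Icc : ∃ l > 0, ∃ L, ∀ t ∈ I, deriv f t ∈ Set.Icc l L
  abs_le : ∃ M, ∀ t ∈ I, |f t| ≤ M

variable {E : Type*} [NormedAddCommGroup E] [InnerProductSpace ℝ E] [CompleteSpace E]

/-- `u` satisfies `∑ f(λᵢ(D²u)) = phase u` at `x`, with all Hessian eigenvalues `λᵢ` in `I`. The
type `ι` indexes the eigenvalues. -/
def SolvesAt (ι : Type*) [Fintype ι] (f : ℝ → ℝ) (I : Set ℝ) (u : E → ℝ) (x : E) : Prop :=
  ∃ (e : OrthonormalBasis ι ℝ E) (θ : ι → ℝ), IsEigenbasis (hessian u x) e θ ∧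
    (∀ i, θ i ∈ I) ∧ phase u x = ∑ i, f (θ i)

variable {ι : Type*} [Fintype ι] {f : ℝ → ℝ} {I : Set ℝ} {V Ψ : E → ℝ}

lemma SolvesAt.abs_phase_le {u : E → ℝ} {x : E} {M : ℝ} (h : SolvesAt ι f I u x)
    (hM : ∀ t ∈ I, |f t| ≤ M) : |phase u x| ≤ Fintype.card ι * M := by
  obtain ⟨_, θ, _, hθ, hphase⟩ := h
  rw [hphase]
  calc |∑ i, f (θ i)| ≤ ∑ i, |f (θ i)| := Finset.abs_sum_le_sum_abs _ _
    _ ≤ ∑ _i : ι, M := Finset.sum_le_sum fun i _ => hM _ (hθ i)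
    _ = Fintype.card ι * M := by rw [Finset.sum_const, Finset.card_univ, nsmul_eq_mul]

lemma continuous_phase (hV : Differentiable ℝ V) (hV' : Differentiable ℝ (∇ V)) :
    Continuous (phase V) :=
  hV.continuous.neg.add ((continuous_id.inner hV'.continuous).const_mul _)

lemma le_sum_of_isLocalMin_sub_scalingQuotient {C : ℝ≥0} (hf : Differentiable ℝ f)
    (hC : LipschitzWith C (deriv f)) (hmono : 0 ≤ deriv f) (hV : Differentiable ℝ V)
    (hV' : Differentiable ℝ (∇ V)) (hΨ : ContDiff ℝ 2 Ψ) {s : ℝ} (hs : 1 < s) {x : E}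
    (hmin : IsLocalMin (fun y => Ψ y - scalingQuotient V s y) x)
    {e e' : OrthonormalBasis ι ℝ E} {θ θ' : ι → ℝ}
    (hA : IsEigenbasis (hessian V x) e θ) (hphase : phase V x = ∑ i, f (θ i))
    (hA' : IsEigenbasis (hessian V (s • x)) e' θ') (hphase' : phase V (s • x) = ∑ i, f (θ' i)) :
    s ^ 2 * (phase V x - scalingQuotient V s x + (1 / 2) * ⟪x, ∇ Ψ x⟫)
      ≤ ∑ i, deriv f (θ i) * ⟪e i, hessian Ψ x (e i)⟫
        + (s ^ 2 - 1) / s ^ 2 * (C * Fintype.card ι * ‖hessian Ψ x‖ ^ 2) := by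
  have hs2 : 0 < s ^ 2 - 1 := sub_pos.mpr (one_lt_pow₀ hs two_ne_zero)
  have hs0 : 0 < s ^ 2 := by linarith
  have hle := sum_map_eigenvalues_le_of_le_add_smul hf hC hmono hA hA'
    (hessian_isSymmetric hΨ.contDiffAt)
    (inner_hessian_smul_le_of_isLocalMin_sub_scalingQuotient hV hV' hΨ hs hmin)
  rw [← hphase, ← hphase', phase_smul_of_isLocalMin_sub_scalingQuotient hV
    (hΨ.differentiable two_ne_zero x) hs hmin] at hle
  refine le_of_mul_le_mul_left ?_ (div_pos hs2 hs0)
  have hcancel : (s ^ 2 - 1) / s ^ 2 * s ^ 2 = s ^ 2 - 1 := div_mul_cancel₀ _ hs0.ne'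
  rw [← mul_assoc, hcancel]
  linarith

lemma le_of_isLocalMin_sub_scalingQuotient {C : ℝ≥0} (hf : Differentiable ℝ f)
    (hC : LipschitzWith C (deriv f)) (hmono : 0 ≤ deriv f) (hV : Differentiable ℝ V)
    (hV' : Differentiable ℝ (∇ V)) (hsol : ∀ x, SolvesAt ι f I V x) (hΨ : ContDiff ℝ 2 Ψ)
    {s : ℝ} (hs : 1 < s) {x : E} (hmin : IsLocalMin (fun y => Ψ y - scalingQuotient V s y) x)
    {κ : ℝ} (hbarrier : ∀ (e : OrthonormalBasis ι ℝ E) (θ : ι → ℝ), (∀ i, θ i ∈ I) →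
      ∑ i, deriv f (θ i) * ⟪e i, hessian Ψ x (e i)⟫ ≤ -κ + (1 / 2) * ⟪x, ∇ Ψ x⟫) :
    κ ≤ s ^ 2 * (scalingQuotient V s x - phase V x)
      + (s ^ 2 - 1) * (C * Fintype.card ι * ‖hessian Ψ x‖ ^ 2 + |(1 / 2) * ⟪x, ∇ Ψ x⟫|) := by
  obtain ⟨e, θ, hA, hθ, hphase⟩ := hsol x
  obtain ⟨e', θ', hA', -, hphase'⟩ := hsol (s • x)
  have hlin := le_sum_of_isLocalMin_sub_scalingQuotient hf hC hmono hV hV' hΨ hs hmin hA hphase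
    hA' hphase'
  have hs2 : 1 < s ^ 2 := one_lt_pow₀ hs two_ne_zero
  have hcurv : (s ^ 2 - 1) / s ^ 2 * (C * Fintype.card ι * ‖hessian Ψ x‖ ^ 2)
      ≤ (s ^ 2 - 1) * (C * Fintype.card ι * ‖hessian Ψ x‖ ^ 2) := by
    gcongr
    exact div_le_self (by linarith) hs2.le
  have hdrift := mul_le_mul_of_nonneg_left (neg_le_abs ((1 / 2) * ⟪x, ∇ Ψ x⟫))
    (sub_pos.mpr hs2).le
  linarith [hbarrier e θ hθ]

lemma exists_forall_sub_scalingQuotient_le (hV : Differentiable ℝ V) {M : ℝ}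
    (hM : ∀ x, |phase V x| ≤ M) (hΨ : Continuous Ψ) (hcoercive : Tendsto Ψ (cocompact E) atTop)
    {s : ℝ} (hs : 1 < s) :
    ∃ x, ∀ y, Ψ x - scalingQuotient V s x ≤ Ψ y - scalingQuotient V s y := by
  refine (hΨ.sub (continuous_scalingQuotient hV.continuous s)).exists_forall_le ?_
  refine tendsto_atTop_mono (fun x => ?_) (tendsto_atTop_add_const_right _ (-M) hcoercive)
  exact sub_le_sub_left (abs_le.mp (abs_scalingQuotient_le hV hM hs x)).2 (Ψ x)

lemma exists_minimizer_sub_scalingQuotient_near_phase (hV : Differentiable ℝ V) {M : ℝ}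
    (hM : ∀ x, |phase V x| ≤ M) (hphase : Continuous (phase V)) (hΨ : Continuous Ψ)
    (hcoercive : Tendsto Ψ (cocompact E) atTop) {P : E → ℝ} (hP : Continuous P) {δ κ : ℝ}
    (hδ : 0 < δ) (hδκ : δ < κ) (x : E) :
    ∃ s > 1, ∃ y, (∀ z, Ψ y - scalingQuotient V s y ≤ Ψ z - scalingQuotient V s z) ∧
      |scalingQuotient V s x - phase V x| < δ ∧ |scalingQuotient V s y - phase V y| < δ ∧
      s ^ 2 * δ + (s ^ 2 - 1) * P y < κ := by
  obtain ⟨K, hK, hKΨ⟩ := mem_cocompact.mp (hcoercive.eventually_gt_atTop (Ψ x + 2 * M))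
  obtain ⟨B, hB⟩ := hK.exists_bound_of_continuousOn hP.continuousOn
  have hsmall : ∀ᶠ s in 𝓝[>] (1 : ℝ), s ^ 2 * δ + (s ^ 2 - 1) * B < κ := by
    refine (Continuous.continuousAt (by fun_prop)).eventually_lt continuousAt_const ?_
      |>.filter_mono nhdsWithin_le_nhds
    linarith
  obtain ⟨s, hs, hsδ, hsκ⟩ := (eventually_mem_nhdsWithin.and
    ((eventually_abs_scalingQuotient_sub_phase_lt hV hphase hK hδ).and hsmall)).exists
  obtain ⟨y, hy⟩ := exists_forall_sub_scalingQuotient_le hV hM hΨ hcoercive hs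
  have hq := fun z => abs_le.mp (abs_scalingQuotient_le hV hM hs z)
  have hxK : x ∈ K := by
    by_contra hxK
    linarith [show Ψ x + 2 * M < Ψ x from hKΨ hxK, (abs_nonneg _).trans (hM x)]
  have hyK : y ∈ K := by
    by_contra hyK
    linarith [show Ψ x + 2 * M < Ψ y from hKΨ hyK, hy x, (hq x).1, (hq y).2]
  refine ⟨s, hs, y, hy, hsδ x hxK, hsδ y hyK, hsκ.trans_le' ?_⟩
  have hs2 : 0 ≤ s ^ 2 - 1 := (sub_pos.mpr (one_lt_pow₀ hs two_ne_zero)).le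
  gcongr
  exact (le_abs_self _).trans (hB y hyK)

theorem phase_le_of_barrier (hf : IsUniformlyElliptic f I) (hV : Differentiable ℝ V)
    (hV' : Differentiable ℝ (∇ V)) (hsol : ∀ x, SolvesAt ι f I V x) (hΨ : ContDiff ℝ 2 Ψ)
    (hcoercive : Tendsto Ψ (cocompact E) atTop) {κ m : ℝ} (hκ : 0 < κ) {N : Set E}
    (hN : ∀ x ∈ N, phase V x ≤ m + Ψ x)
    (hbarrier : ∀ x ∉ N, ∀ (e : OrthonormalBasis ι ℝ E) (θ : ι → ℝ), (∀ i, θ i ∈ I) →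
      ∑ i, deriv f (θ i) * ⟪e i, hessian Ψ x (e i)⟫ ≤ -κ + (1 / 2) * ⟪x, ∇ Ψ x⟫) (x : E) :
    phase V x ≤ m + Ψ x := by
  by_contra! hx
  obtain ⟨C, hC⟩ := hf.lipschitzWith_deriv
  obtain ⟨M, hM⟩ := hf.abs_le
  let δ := min (κ / 2) ((phase V x - (m + Ψ x)) / 2)
  have hδ : 0 < δ := lt_min (half_pos hκ) (half_pos (sub_pos.mpr hx))
  have hδx : δ ≤ (phase V x - (m + Ψ x)) / 2 := min_le_right _ _
  have hP : Continuous fun y =>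
      C * Fintype.card ι * ‖hessian Ψ y‖ ^ 2 + |(1 / 2) * ⟪y, ∇ Ψ y⟫| := by
    have := continuous_hessian hΨ
    have : Continuous (∇ Ψ) :=
      Differentiable.continuous fun y => differentiableAt_gradient hΨ.contDiffAt
    fun_prop
  obtain ⟨s, hs, y, hy, hsx, hsy, hsκ⟩ := exists_minimizer_sub_scalingQuotient_near_phase hV
    (fun z => (hsol z).abs_phase_le hM) (continuous_phase hV hV') hΨ.continuous hcoercive hP hδ
    ((min_le_left _ _).trans_lt (half_lt_self hκ)) x
  have hyN : y ∉ N := fun hyN => by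
    linarith [hN y hyN, hy x, (abs_lt.mp hsx).1, (abs_lt.mp hsy).2]
  have hκle := le_of_isLocalMin_sub_scalingQuotient hf.differentiable hC hf.deriv_nonneg hV hV'
    hsol hΨ hs (.of_forall hy) (hbarrier y hyN)
  linarith [mul_le_mul_of_nonneg_left (abs_lt.mp hsy).2.le (sq_nonneg s)]

end MaximumPrinciple

section RadialFunctions

open scoped Gradient

variable {E : Type*} [NormedAddCommGroup E] [InnerProductSpace ℝ E] [CompleteSpace E]
  {g g' : ℝ → ℝ} {g'' : ℝ} {x : E}

lemma hasGradientAt_comp_norm_sq {d : ℝ} (hg : HasDerivAt g d (‖x‖ ^ 2)) :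
    HasGradientAt (fun y => g (‖y‖ ^ 2)) ((2 * d) • x) x := by
  refine hasGradientAt_of_hasFDerivAt
    (hg.comp_hasFDerivAt x (hasStrictFDerivAt_norm_sq x).hasFDerivAt) fun v => ?_
  rw [_root_.smul_apply, _root_.smul_apply, innerSL_apply_apply, real_inner_smul_left, nsmul_eq_mul,
    smul_eq_mul]
  push_cast
  ring

lemma hessian_comp_norm_sq_apply (hg : ∀ r, HasDerivAt g (g' r) r)
    (hg' : HasDerivAt g' g'' (‖x‖ ^ 2)) (v : E) :
    hessian (fun y => g (‖y‖ ^ 2)) x v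
      = (2 * g' (‖x‖ ^ 2)) • v + (4 * g'' * ⟪x, v⟫) • x := by
  have hgrad : ∇ (fun y : E => g (‖y‖ ^ 2)) = fun y => (2 * g' (‖y‖ ^ 2)) • y :=
    gradient_eq fun y => hasGradientAt_comp_norm_sq (hg _)
  have h := ((hg'.comp_hasFDerivAt x (hasStrictFDerivAt_norm_sq x).hasFDerivAt).const_mul 2).smul
    (hasFDerivAt_id x)
  rw [hessian, hgrad, show fderiv ℝ (fun y : E => (2 * g' (‖y‖ ^ 2)) • y) x = _ from h.fderiv]
  simp only [Function.comp_apply, smul_smul, id_eq, _root_.add_apply, _root_.smul_apply,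
    ContinuousLinearMap.id_apply, ContinuousLinearMap.smulRight_apply, coe_innerSL_apply,
    nsmul_eq_mul, Nat.cast_ofNat, smul_eq_mul, add_right_inj]
  ring_nf

lemma sum_mul_inner_hessian_comp_norm_sq_le {ι : Type*} [Fintype ι] (e : OrthonormalBasis ι ℝ E)
    {w : ι → ℝ} {l L : ℝ} (hw : ∀ i, w i ∈ Set.Icc l L) (hg : ∀ r, HasDerivAt g (g' r) r)
    (hg' : HasDerivAt g' g'' (‖x‖ ^ 2)) (hg'_nonneg : 0 ≤ g' (‖x‖ ^ 2)) (hg''_nonpos : g'' ≤ 0) :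
    ∑ i, w i * ⟪e i, hessian (fun y => g (‖y‖ ^ 2)) x (e i)⟫
      ≤ 2 * Fintype.card ι * L * g' (‖x‖ ^ 2) + 4 * l * g'' * ‖x‖ ^ 2 := by
  have hterm : ∀ i, w i * ⟪e i, hessian (fun y => g (‖y‖ ^ 2)) x (e i)⟫
      ≤ 2 * L * g' (‖x‖ ^ 2) + 4 * l * g'' * ⟪e i, x⟫ ^ 2 := fun i => by
    rw [hessian_comp_norm_sq_apply hg hg', inner_add_right, real_inner_smul_right,
      real_inner_smul_right, real_inner_self_eq_norm_sq, e.norm_eq_one, real_inner_comm x]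
    nlinarith [mul_le_mul_of_nonneg_right (hw i).2 hg'_nonneg,
      mul_le_mul_of_nonneg_right (hw i).1
        (mul_nonneg (neg_nonneg.mpr hg''_nonpos) (sq_nonneg ⟪x, e i⟫))]
  refine (Finset.sum_le_sum fun i _ => hterm i).trans_eq ?_
  rw [Finset.sum_add_distrib, ← Finset.mul_sum _ _ (4 * l * g''), e.sum_sq_inner_right,
    Finset.sum_const, Finset.card_univ, nsmul_eq_mul]
  ring

end RadialFunctions

section Liouville

open scoped Gradient Topology

lemma exists_barrier_parameters {D l r : ℝ} (hD : 0 ≤ D) (hl : 0 < l) (hr : 0 < r) :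
    ∃ ε > 0, ∃ α > 0, ∀ ρ ≥ r ^ 2,
      (ε + α * exp (-(α * ρ))) * (D - ρ) - 4 * l * (α ^ 2 * exp (-(α * ρ))) * ρ ≤ -ε := by
  obtain ⟨α, hα, hαr⟩ : ∃ α > 0, 4 * l * α * r ^ 2 = D + 1 :=
    ⟨(D + 1) / (4 * l * r ^ 2), by positivity, by field_simp⟩
  obtain ⟨ε, hε, hεα⟩ : ∃ ε > 0, ε * (D + 1) = α * exp (-(α * (D + 1))) :=
    ⟨α * exp (-(α * (D + 1))) / (D + 1), by positivity, by field_simp⟩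
  refine ⟨ε, hε, α, hα, fun ρ hρ => ?_⟩
  have hp : 0 < α * exp (-(α * ρ)) := by positivity
  have hρ0 : 0 ≤ ρ := (sq_nonneg r).trans hρ
  have hlαρ : D + 1 ≤ 4 * l * α * ρ := hαr ▸ mul_le_mul_of_nonneg_left hρ (by positivity)
  rcases le_total ρ (D + 1) with hle | hge
  · have hpε : ε * (D + 1) ≤ α * exp (-(α * ρ)) := by
      rw [hεα]
      gcongr
    nlinarith [mul_le_mul_of_nonneg_left hlαρ hp.le, mul_nonneg hp.le hρ0, mul_nonneg hε.le hρ0]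
  · nlinarith [mul_le_mul_of_nonneg_left hlαρ hp.le, mul_le_mul_of_nonneg_left hge hp.le,
      mul_le_mul_of_nonneg_left hge hε.le]

lemma hasDerivAt_barrier (c ε α ρ : ℝ) :
    HasDerivAt (fun ρ => c * (ε * ρ - exp (-(α * ρ)))) (c * (ε + α * exp (-(α * ρ)))) ρ := by
  refine (((hasDerivAt_const_mul ε).sub (hasDerivAt_const_mul α).fun_neg.exp).const_mul
    c).congr_deriv ?_
  ring

lemma hasDerivAt_deriv_barrier (c ε α ρ : ℝ) :
    HasDerivAt (fun ρ => c * (ε + α * exp (-(α * ρ)))) (-(c * (α ^ 2 * exp (-(α * ρ))))) ρ := by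
  refine ((((hasDerivAt_const_mul α).fun_neg.exp.const_mul α).const_add ε).const_mul
    c).congr_deriv ?_
  ring

variable {E : Type*} [NormedAddCommGroup E] [InnerProductSpace ℝ E]

omit [InnerProductSpace ℝ E] in
lemma neg_one_le_barrier {ε α : ℝ} (hε : 0 ≤ ε) (hα : 0 ≤ α) (x : E) :
    -1 ≤ ε * ‖x‖ ^ 2 - exp (-(α * ‖x‖ ^ 2)) := by
  have hexp : exp (-(α * ‖x‖ ^ 2)) ≤ 1 := exp_le_one_iff.mpr (neg_nonpos.mpr (by positivity))
  have hsq : 0 ≤ ε * ‖x‖ ^ 2 := by positivity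
  linarith

lemma tendsto_barrier_cocompact [FiniteDimensional ℝ E] {c ε α : ℝ} (hc : 0 < c) (hε : 0 < ε)
    (hα : 0 ≤ α) :
    Tendsto (fun x : E => c * (ε * ‖x‖ ^ 2 - exp (-(α * ‖x‖ ^ 2)))) (cocompact E) atTop := by
  have : ProperSpace E := FiniteDimensional.proper ℝ E
  have hquad : Tendsto (fun x : E => ε * ‖x‖ ^ 2 - 1) (cocompact E) atTop :=
    tendsto_atTop_add_const_right _ _ <| .const_mul_atTop hε <|
      (tendsto_pow_atTop two_ne_zero).comp (tendsto_norm_cocompact_atTop (E := E))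
  refine .const_mul_atTop hc (tendsto_atTop_mono (fun x => sub_le_sub_left ?_ _) hquad)
  exact exp_le_one_iff.mpr (neg_nonpos.mpr (by positivity))

variable [CompleteSpace E] {ι : Type*} [Fintype ι] {f : ℝ → ℝ} {I : Set ℝ} {V : E → ℝ}

lemma sum_mul_inner_hessian_barrier_le {w : ι → ℝ} {l L c ε α : ℝ}
    (hw : ∀ i, w i ∈ Set.Icc l L) (hc : 0 ≤ c) (hε : 0 ≤ ε) (hα : 0 ≤ α) {x : E}
    (hode : (ε + α * exp (-(α * ‖x‖ ^ 2))) * (2 * Fintype.card ι * L - ‖x‖ ^ 2)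
      - 4 * l * (α ^ 2 * exp (-(α * ‖x‖ ^ 2))) * ‖x‖ ^ 2 ≤ -ε) (e : OrthonormalBasis ι ℝ E) :
    ∑ i, w i * ⟪e i, hessian (fun y => c * (ε * ‖y‖ ^ 2 - exp (-(α * ‖y‖ ^ 2)))) x (e i)⟫
      ≤ -(c * ε) + (1 / 2) * ⟪x, ∇ (fun y => c * (ε * ‖y‖ ^ 2 - exp (-(α * ‖y‖ ^ 2)))) x⟫ := by
  have hsum := sum_mul_inner_hessian_comp_norm_sq_le e hw (hasDerivAt_barrier c ε α)
    (hasDerivAt_deriv_barrier c ε α (‖x‖ ^ 2)) (by positivity)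
    (neg_nonpos.mpr (by positivity))
  rw [(hasGradientAt_comp_norm_sq (hasDerivAt_barrier c ε α (‖x‖ ^ 2))).gradient,
    real_inner_smul_right, real_inner_self_eq_norm_sq]
  linarith [mul_le_mul_of_nonneg_left hode hc]

lemma phase_le_of_forall_mem_ball (hf : IsUniformlyElliptic f I) (hV : Differentiable ℝ V)
    (hV' : Differentiable ℝ (∇ V)) (hsol : ∀ x, SolvesAt ι f I V x) {r m : ℝ} (hr : 0 < r)
    (hm : ∀ x ∈ Metric.ball 0 r, phase V x ≤ m) (x : E) : phase V x ≤ m := by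
  have : FiniteDimensional ℝ E := (hsol 0).choose.toBasis.finiteDimensional_of_finite
  obtain ⟨l, hl, L, hlL⟩ := hf.deriv_mem_Icc
  obtain ⟨ε, hε, α, hα, hode⟩ := exists_barrier_parameters
    (by positivity : 0 ≤ 2 * Fintype.card ι * |L|) hl hr
  let b : E → ℝ := fun y => ε * ‖y‖ ^ 2 - exp (-(α * ‖y‖ ^ 2))
  have hbound : ∀ c > 0, phase V x ≤ m + c + c * b x := fun c hc => by
    refine phase_le_of_barrier hf hV hV' hsol (Ψ := fun y => c * b y) ?_
      (tendsto_barrier_cocompact hc hε hα.le) (mul_pos hc hε) (N := Metric.ball 0 r)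
      (fun y hy => ?_) (fun y hy e θ hθ => ?_) x
    · exact contDiff_const.mul ((contDiff_const.mul (contDiff_norm_sq ℝ)).sub
        (contDiff_const.mul (contDiff_norm_sq ℝ)).neg.exp)
    · have hb := mul_le_mul_of_nonneg_left (neg_one_le_barrier hε.le hα.le y) hc.le
      linarith [hm y hy]
    · rw [mem_ball_zero_iff, not_lt] at hy
      exact sum_mul_inner_hessian_barrier_le
        (fun i => ⟨(hlL _ (hθ i)).1, (hlL _ (hθ i)).2.trans (le_abs_self L)⟩) hc.le hε.le hα.le
        (hode _ (pow_le_pow_left₀ hr.le hy 2)) e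
  have hlim : Tendsto (fun c => m + c + c * b x) (𝓝[>] 0) (𝓝 m) := by
    have : Continuous fun c => m + c + c * b x := by fun_prop
    simpa using (this.tendsto 0).mono_left nhdsWithin_le_nhds
  exact ge_of_tendsto hlim (eventually_mem_nhdsWithin.mono hbound)

theorem phase_le_phase_zero (hf : IsUniformlyElliptic f I) (hV : Differentiable ℝ V)
    (hV' : Differentiable ℝ (∇ V)) (hsol : ∀ x, SolvesAt ι f I V x) (x : E) :
    phase V x ≤ phase V 0 := by
  refine le_of_forall_pos_le_add fun η hη => ?_
  obtain ⟨r, hr, hball⟩ := Metric.eventually_nhds_iff_ball.mp <|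
    (continuous_phase hV hV').continuousAt.eventually_lt continuousAt_const
      (lt_add_of_pos_right (phase V 0) hη)
  exact phase_le_of_forall_mem_ball hf hV hV' hsol hr (fun y hy => (hball y hy).le) x

lemma IsUniformlyElliptic.neg_comp_neg (hf : IsUniformlyElliptic f I) :
    IsUniformlyElliptic (fun t => -f (-t)) (-I) := by
  have hderiv : deriv (fun t => -f (-t)) = fun t => deriv f (-t) := by
    ext t
    rw [deriv.fun_neg, deriv_comp_neg, neg_neg]
  obtain ⟨C, hC⟩ := hf.lipschitzWith_deriv
  obtain ⟨l, hl, L, hlL⟩ := hf.deriv_mem_Icc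
  obtain ⟨M, hM⟩ := hf.abs_le
  exact
    { differentiable := (hf.differentiable.comp differentiable_neg).neg
      lipschitzWith_deriv := ⟨C, by
        simpa [hderiv, Function.comp_def] using hC.comp LipschitzWith.id.neg⟩
      deriv_nonneg := by
        rw [hderiv]
        exact fun t => hf.deriv_nonneg (-t)
      deriv_mem_Icc := ⟨l, hl, L, fun t ht => by
        rw [hderiv]
        exact hlL (-t) ht⟩
      abs_le := ⟨M, fun t ht => by
        rw [abs_neg]
        exact hM (-t) ht⟩ }

lemma gradient_neg (u : E → ℝ) : ∇ (-u) = -∇ u := by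
  ext1 x
  rw [gradient, fderiv_neg, map_neg]
  rfl

lemma phase_neg (u : E → ℝ) (x : E) : phase (-u) x = -phase u x := by
  rw [phase, phase, gradient_neg, Pi.neg_apply, Pi.neg_apply, inner_neg_right]
  ring

lemma SolvesAt.neg {u : E → ℝ} {x : E} (h : SolvesAt ι f I u x) :
    SolvesAt ι (fun t => -f (-t)) (-I) (-u) x := by
  obtain ⟨e, θ, he, hθ, hphase⟩ := h
  refine ⟨e, -θ, fun i => ?_, fun i => ?_, ?_⟩
  · rw [hessian, gradient_neg, fderiv_neg, _root_.neg_apply, ← hessian, he i, Pi.neg_apply,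
      neg_smul]
  · simpa only [Pi.neg_apply, Set.mem_neg, neg_neg] using hθ i
  · simp only [phase_neg, hphase, Pi.neg_apply, neg_neg, Finset.sum_neg_distrib]

theorem phase_eq_phase_zero (hf : IsUniformlyElliptic f I) (hV : Differentiable ℝ V)
    (hV' : Differentiable ℝ (∇ V)) (hsol : ∀ x, SolvesAt ι f I V x) (x : E) :
    phase V x = phase V 0 := by
  refine (phase_le_phase_zero hf hV hV' hsol x).antisymm ?_
  have hV'_neg : Differentiable ℝ (∇ (-V)) := by
    rw [gradient_neg]
    exact hV'.neg
  have h := phase_le_phase_zero hf.neg_comp_neg hV.neg hV'_neg (fun y => (hsol y).neg) x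
  rwa [phase_neg, phase_neg, neg_le_neg_iff] at h

end Liouville

section Homogeneity

open scoped Gradient Topology

lemma eq_fderiv_zero_apply_of_fderiv_apply_self {E F : Type*} [NormedAddCommGroup E]
    [NormedSpace ℝ E] [NormedAddCommGroup F] [NormedSpace ℝ F] {G : E → F}
    (hG : Differentiable ℝ G) (hEuler : ∀ x, fderiv ℝ G x x = G x) (x : E) :
    G x = fderiv ℝ G 0 x := by
  have hray : ∀ t : ℝ, HasDerivAt (fun t : ℝ => G (t • x)) (fderiv ℝ G (t • x) x) t := fun t => by
    simpa only [one_smul, Function.comp_def] using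
      (hG (t • x)).hasFDerivAt.comp_hasDerivAt t ((hasDerivAt_id' t).smul_const x)
  have hquot : ∀ t ∈ Set.Ioi (0 : ℝ), HasDerivAt (fun t : ℝ => t⁻¹ • G (t • x)) 0 t := by
    intro t ht
    have ht0 : t ≠ 0 := ne_of_gt ht
    refine ((hasDerivAt_inv ht0).smul (hray t)).congr_deriv ?_
    rw [← hEuler (t • x), map_smul, smul_smul, ← add_smul]
    convert zero_smul ℝ (fderiv ℝ G (t • x) x)
    field_simp
    ring
  have hconst : ∀ t ∈ Set.Ioi (0 : ℝ), t⁻¹ • G (t • x) = G x := fun t ht => by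
    simpa using isOpen_Ioi.is_const_of_deriv_eq_zero isPreconnected_Ioi
      (fun s hs => (hquot s hs).differentiableAt.differentiableWithinAt)
      (fun s hs => (hquot s hs).deriv) ht (Set.mem_Ioi.mpr one_pos)
  have hlim : Tendsto (fun t : ℝ => t⁻¹ • G (t • x)) (𝓝[>] 0) (𝓝 (fderiv ℝ G 0 x)) := by
    have h := (hray 0).tendsto_slope_zero_right
    simpa only [zero_add, zero_smul, ← hEuler 0, map_zero, sub_zero] using h
  exact tendsto_nhds_unique (tendsto_const_nhds.congr' <|
    eventually_mem_nhdsWithin.mono fun t ht => (hconst t ht).symm) hlim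

variable {E : Type*} [NormedAddCommGroup E] [InnerProductSpace ℝ E] [CompleteSpace E] {V : E → ℝ}

lemma hasGradientAt_phase {x : E} (hV : DifferentiableAt ℝ V x) (hV' : DifferentiableAt ℝ (∇ V) x)
    (hsymm : (hessian V x).IsSymmetric) :
    HasGradientAt (phase V) ((1 / 2 : ℝ) • (hessian V x x - ∇ V x)) x := by
  refine hasGradientAt_of_hasFDerivAt (hV.hasFDerivAt.neg.add
    (((hasFDerivAt_id x).inner ℝ (hasFDerivAt_gradient hV')).const_mul (1 / 2))) fun v => ?_
  have hs : ⟪hessian V x x, v⟫ = ⟪x, hessian V x v⟫ := hsymm x v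
  simp only [_root_.add_apply, _root_.neg_apply, _root_.smul_apply, smul_eq_mul,
    ContinuousLinearMap.comp_apply, ContinuousLinearMap.prod_apply, ContinuousLinearMap.id_apply,
    fderivInnerCLM_apply, id_eq, ← inner_gradient_left, real_inner_smul_left, inner_sub_left, hs]
  rw [real_inner_comm]
  ring

lemma gradient_eq_hessian_zero_apply_of_phase_const (hV : Differentiable ℝ V)
    (hV' : Differentiable ℝ (∇ V)) (hsymm : ∀ x, (hessian V x).IsSymmetric)
    (hphase : ∀ x, phase V x = phase V 0) (x : E) : ∇ V x = hessian V 0 x := by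
  refine eq_fderiv_zero_apply_of_fderiv_apply_self hV' (fun y => ?_) x
  have hgrad := hasGradientAt_phase (hV y) (hV' y) (hsymm y)
  rw [show phase V = fun _ => phase V 0 from funext hphase] at hgrad
  exact sub_eq_zero.mp <| (smul_eq_zero_iff_right (by norm_num : (1 / 2 : ℝ) ≠ 0)).mp <|
    hgrad.unique (hasGradientAt_const y _)

end Homogeneity

section GlobalSection

open scoped Topology

variable {E : Type*} [NormedAddCommGroup E] [InnerProductSpace ℝ E] {F : E → E} {β : ℝ}
  {Ω C : Set E}

/-- `F` is differentiable on `Ω` with uniformly coercive derivative: `β ‖v‖² ≤ ⟨v, DF(x) v⟩`. The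
set `Ω` need not be convex, so that `F` is only locally expanding. -/
def HasCoerciveFDerivOn (F : E → E) (β : ℝ) (Ω : Set E) : Prop :=
  ∀ x ∈ Ω, DifferentiableAt ℝ F x ∧ ∀ v, β * ‖v‖ ^ 2 ≤ ⟪v, fderiv ℝ F x v⟫

lemma HasCoerciveFDerivOn.mono (hF : HasCoerciveFDerivOn F β Ω) (hC : C ⊆ Ω) :
    HasCoerciveFDerivOn F β C :=
  fun x hx => hF x (hC hx)

lemma HasCoerciveFDerivOn.mul_norm_sub_le (hF : HasCoerciveFDerivOn F β C) (hC : Convex ℝ C)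
    {x y : E} (hx : x ∈ C) (hy : y ∈ C) : β * ‖y - x‖ ≤ ‖F y - F x‖ := by
  have hderiv : ∀ t ∈ Set.Icc (0 : ℝ) 1, HasDerivAt (fun t : ℝ => ⟪y - x, F (x + t • (y - x))⟫)
      ⟪y - x, fderiv ℝ F (x + t • (y - x)) (y - x)⟫ t := fun t ht => by
    have hseg : HasDerivAt (fun t : ℝ => x + t • (y - x)) (y - x) t := by
      simpa only [one_smul] using ((hasDerivAt_id' t).smul_const (y - x)).const_add x
    have hcomp := (hF _ (hC.add_smul_sub_mem hx hy ht)).1.hasFDerivAt.comp_hasDerivAt t hseg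
    simpa [Function.comp_def] using (hasDerivAt_const t (y - x)).inner ℝ hcomp
  obtain ⟨t, ht, hslope⟩ := exists_hasDerivAt_eq_slope _ _ one_pos
    (fun t ht => (hderiv t ht).continuousAt.continuousWithinAt)
    fun t ht => hderiv t (Set.Ioo_subset_Icc_self ht)
  have hle := (hF _ (hC.add_smul_sub_mem hx hy (Set.Ioo_subset_Icc_self ht))).2 (y - x)
  rw [hslope, sub_zero, div_one, one_smul, zero_smul, add_zero, add_sub_cancel,
    ← inner_sub_right] at hle
  rcases (norm_nonneg (y - x)).eq_or_lt with hzero | hpos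
  · simp [← hzero]
  · have := hle.trans (real_inner_le_norm (y - x) (F y - F x))
    nlinarith

lemma HasCoerciveFDerivOn.injOn (hF : HasCoerciveFDerivOn F β C) (hβ : 0 < β) (hC : Convex ℝ C) :
    Set.InjOn F C := fun x hx y hy hxy => by
  have h := hF.mul_norm_sub_le hC hy hx
  rw [hxy, sub_self, norm_zero] at h
  exact sub_eq_zero.mp (norm_le_zero_iff.mp (nonpos_of_mul_nonpos_right h hβ))

variable [FiniteDimensional ℝ E]

lemma HasCoerciveFDerivOn.exists_mem_ball_eq {ρ : ℝ} {x y : E}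
    (hF : HasCoerciveFDerivOn F β (Metric.closedBall x ρ)) (hβ : 0 < β) (hρ : 0 ≤ ρ)
    (hy : ‖y - F x‖ < β * (ρ / 2)) : ∃ z ∈ Metric.ball x ρ, F z = y := by
  have : ProperSpace E := FiniteDimensional.proper ℝ E
  obtain ⟨z, hz, hmin⟩ := (isCompact_closedBall x ρ).exists_isMinOn
    ⟨x, Metric.mem_closedBall_self hρ⟩ (f := fun z => ‖F z - y‖ ^ 2)
    (ContinuousOn.pow (ContinuousOn.norm (ContinuousOn.sub
      (fun z hz => (hF z hz).1.continuousAt.continuousWithinAt) continuousOn_const)) 2)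
  have hzρ : z ∈ Metric.ball x ρ := by
    refine lt_of_le_of_ne (Metric.mem_closedBall.mp hz) fun hzx => ?_
    have hexp := hF.mul_norm_sub_le (convex_closedBall x ρ) (Metric.mem_closedBall_self hρ) hz
    have hzy := abs_le_of_sq_le_sq' (hmin (Metric.mem_closedBall_self hρ)) (norm_nonneg _)
    have htri := norm_sub_le_norm_sub_add_norm_sub (F z) y (F x)
    rw [← dist_eq_norm z, hzx] at hexp
    rw [norm_sub_rev (F x)] at hzy
    linarith [hzy.2]
  refine ⟨z, hzρ, ?_⟩
  obtain ⟨hdiff, hcoer⟩ := hF z hz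
  have hcrit := (hmin.isLocalMin (Metric.closedBall_mem_nhds_of_mem hzρ)).hasFDerivAt_eq_zero
    (hdiff.hasFDerivAt.sub_const y).norm_sq
  have hzero : ⟪F z - y, fderiv ℝ F z (F z - y)⟫ = 0 := by
    have h := DFunLike.congr_fun hcrit (F z - y)
    rw [_root_.smul_apply, ContinuousLinearMap.comp_apply, innerSL_apply_apply] at h
    exact (smul_eq_zero_iff_right two_ne_zero).mp h
  have hle := nonpos_of_mul_nonpos_right ((hcoer (F z - y)).trans hzero.le) hβ
  exact sub_eq_zero.mp (by simpa using hle.antisymm (sq_nonneg _))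

lemma exists_forall_closedBall_subset_of_isClosed_graphOn {G : Type*} [NormedAddCommGroup G]
    [ProperSpace G] {F : E → G} (hΩ : IsOpen Ω) (hgraph : IsClosed (Ω.graphOn F)) (R : ℝ) :
    ∃ ρ > 0, ∀ x ∈ Ω, ‖x‖ ≤ R → ‖F x‖ ≤ R → Metric.closedBall x ρ ⊆ Ω := by
  have : ProperSpace E := FiniteDimensional.proper ℝ E
  have hK : IsCompact (Prod.fst '' (Ω.graphOn F ∩ Metric.closedBall 0 R)) :=
    ((isCompact_closedBall 0 R).inter_left hgraph).image continuous_fst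
  have hKΩ : Prod.fst '' (Ω.graphOn F ∩ Metric.closedBall 0 R) ⊆ Ω := by
    rintro _ ⟨p, ⟨⟨x, hx, rfl⟩, -⟩, rfl⟩
    exact hx
  obtain ⟨ρ, hρ, hsub⟩ := hK.exists_cthickening_subset_open hΩ hKΩ
  refine ⟨ρ, hρ, fun x hx hxR hFR => (Metric.closedBall_subset_cthickening ?_ ρ).trans hsub⟩
  refine ⟨(x, F x), ⟨⟨x, hx, rfl⟩, ?_⟩, rfl⟩
  simpa using ⟨hxR, hFR⟩

variable {Y : Type*} [TopologicalSpace Y]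

lemma HasCoerciveFDerivOn.exists_continuous_lift_of_near (hF : HasCoerciveFDerivOn F β Ω)
    (hβ : 0 < β) {ρ : ℝ} (hρ : 0 < ρ) {s g : Y → E} (hs : Continuous s) (hg : Continuous g)
    (hball : ∀ y, Metric.closedBall (s y) ρ ⊆ Ω)
    (hnear : ∀ y, ‖g y - F (s y)‖ < β * (ρ / 4)) :
    ∃ s' : Y → E, Continuous s' ∧
      ∀ y, s' y ∈ Ω ∧ F (s' y) = g y ∧ β * ‖s' y - s y‖ ≤ ‖g y - F (s y)‖ := by
  have hFball := fun y => hF.mono (hball y)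
  have hsmall : ∀ y, Metric.closedBall (s y) (ρ / 2) ⊆ Metric.closedBall (s y) ρ := fun y =>
    Metric.closedBall_subset_closedBall (half_le_self hρ.le)
  choose s' hs'_mem hs'_eq using fun y => ((hFball y).mono (hsmall y)).exists_mem_ball_eq hβ
    (half_pos hρ).le (by simpa only [div_div, show (2 * 2 : ℝ) = 4 by norm_num] using hnear y)
  have hs'_ball : ∀ y, s' y ∈ Metric.closedBall (s y) ρ := fun y =>
    hsmall y (Metric.ball_subset_closedBall (hs'_mem y))
  refine ⟨s', continuous_iff_continuousAt.mpr fun y => ?_, fun y => ⟨hball y (hs'_ball y),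
    hs'_eq y, ?_⟩⟩
  · rw [ContinuousAt, tendsto_iff_norm_sub_tendsto_zero]
    have hclose : ∀ᶠ y' in 𝓝 y, s y' ∈ Metric.ball (s y) (ρ / 2) :=
      hs.continuousAt (Metric.ball_mem_nhds _ (half_pos hρ))
    have hlim : Tendsto (fun y' => ‖g y' - g y‖ / β) (𝓝 y) (𝓝 0) := by
      simpa using (tendsto_iff_norm_sub_tendsto_zero.mp hg.continuousAt).div_const β
    refine squeeze_zero' (.of_forall fun _ => norm_nonneg _) (hclose.mono fun y' hy' => ?_) hlim
    have hmem : s' y' ∈ Metric.closedBall (s y) ρ := by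
      have := dist_triangle (s' y') (s y') (s y)
      rw [Metric.mem_closedBall]
      linarith [Metric.mem_ball.mp (hs'_mem y'), Metric.mem_ball.mp hy']
    have hexp := (hFball y).mul_norm_sub_le (convex_closedBall _ _) (hs'_ball y) hmem
    rwa [hs'_eq, hs'_eq, ← le_div_iff₀' hβ] at hexp
  · rw [← hs'_eq y]
    exact (hFball y).mul_norm_sub_le (convex_closedBall _ _)
      (Metric.mem_closedBall_self hρ.le) (hs'_ball y)

lemma HasCoerciveFDerivOn.exists_continuous_lift_smul (hF : HasCoerciveFDerivOn F β Ω) (hβ : 0 < β)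
    {x : E} {R ρ : ℝ} (hρ : 0 < ρ)
    (hball : ∀ z ∈ Ω, β * ‖z - x‖ ≤ R → ‖F z - F x‖ ≤ R → Metric.closedBall z ρ ⊆ Ω)
    {h : Y → E} (hh : Continuous h) (hR : ∀ y, ‖h y‖ ≤ R) {a b : ℝ} (ha : 0 ≤ a) (ha1 : a ≤ 1)
    (hab : a ≤ b) (hnear : (b - a) * R < β * (ρ / 4)) {s : Y → E} (hs : Continuous s)
    (hsF : ∀ y, s y ∈ Ω ∧ F (s y) = F x + a • h y ∧ β * ‖s y - x‖ ≤ a * ‖h y‖) :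
    ∃ s' : Y → E, Continuous s' ∧
      ∀ y, s' y ∈ Ω ∧ F (s' y) = F x + b • h y ∧ β * ‖s' y - x‖ ≤ b * ‖h y‖ := by
  have hahR : ∀ y, a * ‖h y‖ ≤ R := fun y =>
    (mul_le_of_le_one_left (norm_nonneg _) ha1).trans (hR y)
  have hincr : ∀ y, ‖F x + b • h y - F (s y)‖ = (b - a) * ‖h y‖ := fun y => by
    rw [(hsF y).2.1, add_sub_add_left_eq_sub, ← sub_smul, norm_smul,
      norm_of_nonneg (sub_nonneg.mpr hab)]
  obtain ⟨s', hs', hs'F⟩ := hF.exists_continuous_lift_of_near hβ hρ hs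
    (continuous_const.add (hh.const_smul b))
    (fun y => hball (s y) (hsF y).1 ((hsF y).2.2.trans (hahR y)) (by
      rw [(hsF y).2.1, add_sub_cancel_left, norm_smul, norm_of_nonneg ha]
      exact hahR y))
    (fun y => ((hincr y).trans_le <|
      mul_le_mul_of_nonneg_left (hR y) (sub_nonneg.mpr hab)).trans_lt hnear)
  refine ⟨s', hs', fun y => ⟨(hs'F y).1, (hs'F y).2.1, ?_⟩⟩
  have htri := mul_le_mul_of_nonneg_left (norm_sub_le_norm_sub_add_norm_sub (s' y) (s y) x) hβ.le
  linarith [(hs'F y).2.2.trans_eq (hincr y), (hsF y).2.2]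

lemma HasCoerciveFDerivOn.exists_continuous_lift (hF : HasCoerciveFDerivOn F β Ω) (hβ : 0 < β)
    (hΩ : IsOpen Ω) (hgraph : IsClosed (Ω.graphOn F)) {x : E} (hx : x ∈ Ω) {h : Y → E}
    (hh : Continuous h) {R : ℝ} (hR : ∀ y, ‖h y‖ ≤ R) :
    ∃ s : Y → E, Continuous s ∧ ∀ y, s y ∈ Ω ∧ F (s y) = F x + h y ∧ β * ‖s y - x‖ ≤ ‖h y‖ := by
  obtain ⟨ρ, hρ, hball⟩ := exists_forall_closedBall_subset_of_isClosed_graphOn hΩ hgraph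
    (max (‖x‖ + R / β) (‖F x‖ + R))
  have hball' : ∀ z ∈ Ω, β * ‖z - x‖ ≤ R → ‖F z - F x‖ ≤ R → Metric.closedBall z ρ ⊆ Ω :=
    fun z hz hzx hFzx => hball z hz
      (le_max_of_le_left <| (norm_le_norm_add_norm_sub' z x).trans <|
        add_le_add_right ((le_div_iff₀' hβ).mpr hzx) _)
      (le_max_of_le_right <| (norm_le_norm_add_norm_sub' (F z) (F x)).trans <|
        add_le_add_right hFzx _)
  obtain ⟨N, hN⟩ := exists_nat_gt (R / (β * (ρ / 4)))
  rw [div_lt_iff₀ (by positivity)] at hN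
  have hN1 : (0 : ℝ) < N + 1 := by positivity
  have hstep : ∀ k ≤ N + 1, ∃ s : Y → E, Continuous s ∧ ∀ y, s y ∈ Ω ∧
      F (s y) = F x + (k / (N + 1) : ℝ) • h y ∧ β * ‖s y - x‖ ≤ k / (N + 1) * ‖h y‖ := by
    intro k hk
    induction k with
    | zero => exact ⟨fun _ => x, continuous_const, fun y => ⟨hx, by simp, by simp⟩⟩
    | succ k ih =>
      have hkN : (k : ℝ) ≤ N + 1 := by exact_mod_cast k.le_succ.trans hk
      obtain ⟨s, hs, hsF⟩ := ih (k.le_succ.trans hk)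
      refine hF.exists_continuous_lift_smul hβ hρ hball' hh hR (by positivity)
        ((div_le_one hN1).mpr hkN) (by gcongr; exact k.le_succ) ?_ hs hsF
      rw [Nat.cast_succ, ← sub_div, add_sub_cancel_left, one_div_mul_eq_div, div_lt_iff₀' hN1]
      linarith [mul_pos hβ hρ]
  obtain ⟨s, hs, hsF⟩ := hstep (N + 1) le_rfl
  refine ⟨s, hs, fun y => ?_⟩
  simpa only [Nat.cast_succ, div_self hN1.ne', one_smul, one_mul] using hsF y

omit [FiniteDimensional ℝ E] in
lemma HasCoerciveFDerivOn.eq_of_comp_eq [PreconnectedSpace Y] (hF : HasCoerciveFDerivOn F β Ω)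
    (hβ : 0 < β) (hΩ : IsOpen Ω) {s s' : Y → E} (hs : Continuous s) (hs' : Continuous s')
    (hsΩ : ∀ y, s y ∈ Ω) (hs'Ω : ∀ y, s' y ∈ Ω) (heq : ∀ y, F (s y) = F (s' y)) {y₀ : Y}
    (hy₀ : s y₀ = s' y₀) : s = s' := by
  have hinj : IsLocallyInjective (Ω.domRestrict F) := isLocallyInjective_iff_nhds.mpr fun x => by
    obtain ⟨ρ, hρ, hsub⟩ := Metric.isOpen_iff.mp hΩ x x.2
    refine ⟨Subtype.val ⁻¹' Metric.ball x.1 ρ,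
      continuous_subtype_val.continuousAt (Metric.ball_mem_nhds _ hρ), fun y hy z hz hyz => ?_⟩
    exact Subtype.ext ((hF.mono hsub).injOn hβ (convex_ball _ _) hy hz hyz)
  have hcod := (T2Space.isSeparatedMap (Ω.domRestrict F)).eq_of_comp_eq hinj
    (hs.subtype_mk hsΩ) (hs'.subtype_mk hs'Ω) (funext heq) y₀ (Subtype.ext hy₀)
  exact funext fun y => congrArg Subtype.val (congrFun hcod y)

theorem HasCoerciveFDerivOn.exists_continuous_rightInverse (hF : HasCoerciveFDerivOn F β Ω)
    (hβ : 0 < β) (hΩ : IsOpen Ω) (hne : Ω.Nonempty) (hgraph : IsClosed (Ω.graphOn F)) :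
    ∃ S : E → E, Continuous S ∧ ∀ y, S y ∈ Ω ∧ F (S y) = y := by
  obtain ⟨x, hx⟩ := hne
  choose s hs hsF using fun R : ℝ => hF.exists_continuous_lift (Y := Metric.closedBall (F x) R)
    hβ hΩ hgraph hx (h := fun y => y - F x) (by fun_prop)
    (fun y => mem_closedBall_iff_norm.mp y.2)
  have hsx : ∀ R (hxR : F x ∈ Metric.closedBall (F x) R), s R ⟨F x, hxR⟩ = x := fun R hxR => by
    have hle := nonpos_of_mul_nonpos_right ((hsF R ⟨F x, hxR⟩).2.2.trans_eq (by simp)) hβ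
    exact sub_eq_zero.mp (norm_le_zero_iff.mp hle)
  have hagree : ∀ (R R' : ℝ) (y : E) (hR : y ∈ Metric.closedBall (F x) R)
      (hR' : y ∈ Metric.closedBall (F x) R'), s R ⟨y, hR⟩ = s R' ⟨y, hR'⟩ := by
    intro R R' y hR hR'
    let B := Metric.closedBall (F x) R ∩ Metric.closedBall (F x) R'
    have hxB : F x ∈ B :=
      ⟨Metric.mem_closedBall_self (dist_nonneg.trans hR),
        Metric.mem_closedBall_self (dist_nonneg.trans hR')⟩
    have : PreconnectedSpace B := Subtype.preconnectedSpace
      ((convex_closedBall _ _).inter (convex_closedBall _ _)).isPreconnected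
    have h := hF.eq_of_comp_eq hβ hΩ
      ((hs R).comp (continuous_inclusion (Set.inter_subset_left : B ⊆ _)))
      ((hs R').comp (continuous_inclusion (Set.inter_subset_right : B ⊆ _)))
      (fun z => (hsF R _).1) (fun z => (hsF R' _).1)
      (fun z => (hsF R ⟨z, z.2.1⟩).2.1.trans (hsF R' ⟨z, z.2.2⟩).2.1.symm) (y₀ := ⟨F x, hxB⟩)
      ((hsx R hxB.1).trans (hsx R' hxB.2).symm)
    exact congrFun h ⟨y, hR, hR'⟩
  have hcover : ∀ y, ∃ R, Metric.closedBall (F x) R ∈ 𝓝 y := fun y =>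
    ⟨dist y (F x) + 1, Metric.closedBall_mem_nhds_of_mem (Metric.mem_ball.mpr (lt_add_one _))⟩
  let S := ContinuousMap.liftCover _ (fun R => ⟨s R, hs R⟩) hagree hcover
  refine ⟨S, S.continuous, fun y => ?_⟩
  obtain ⟨R, hR⟩ := hcover y
  rw [show S y = s R ⟨y, mem_of_mem_nhds hR⟩ from
    ContinuousMap.liftCover_coe (i := R) ⟨y, mem_of_mem_nhds hR⟩]
  exact ⟨(hsF R _).1, (hsF R _).2.1.trans (add_sub_cancel _ _)⟩

lemma HasCoerciveFDerivOn.exists_hasFDerivAt_rightInverse (hF : HasCoerciveFDerivOn F β Ω)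
    (hβ : 0 < β) {S : E → E} (hS : Continuous S) (hSF : ∀ y, S y ∈ Ω ∧ F (S y) = y) (y : E) :
    ∃ T : E ≃L[ℝ] E, T = fderiv ℝ F (S y) ∧ HasFDerivAt S (T.symm : E →L[ℝ] E) y := by
  obtain ⟨hdiff, hcoer⟩ := hF (S y) (hSF y).1
  have hinj : Function.Injective (fderiv ℝ F (S y) : E →ₗ[ℝ] E) := by
    refine (injective_iff_map_eq_zero _).mpr fun v hv => ?_
    have hv0 : fderiv ℝ F (S y) v = 0 := hv
    have hle := hcoer v
    rw [hv0, inner_zero_right] at hle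
    simpa using (nonpos_of_mul_nonpos_right hle hβ).antisymm (sq_nonneg _)
  let T := (LinearEquiv.ofInjectiveEndo _ hinj).toContinuousLinearEquiv
  have hT : (T : E →L[ℝ] E) = fderiv ℝ F (S y) := ContinuousLinearMap.ext fun _ => rfl
  exact ⟨T, hT, .of_local_left_inverse hS.continuousAt (hT ▸ hdiff.hasFDerivAt)
    (.of_forall fun z => (hSF z).2)⟩

end GlobalSection

section LewyRotation

open scoped Gradient

lemma arctan_lewyRotation {m t : ℝ} (hm : 0 < m) (ht : -m < t) :
    arctan ((m ^ 2 + 1) / (t + m) - m) = arctan (1 / m) - arctan t := by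
  have htm : 0 < t + m := by linarith
  have hprod : ((m ^ 2 + 1) / (t + m) - m) * t = 1 - m * (1 + t ^ 2) / (t + m) := by
    field_simp
    ring
  have hpos : 0 < m * (1 + t ^ 2) / (t + m) := by positivity
  rw [eq_sub_iff_add_eq, arctan_add (by linarith), hprod, sub_sub_cancel]
  congr 1
  field_simp
  ring

lemma isUniformlyElliptic_mul_arctan_add {K : ℝ} (hK : 0 < K) (k : ℝ) {I : Set ℝ}
    (hI : Bornology.IsBounded I) : IsUniformlyElliptic (fun t => K * arctan t + k) I := by
  have hderiv : deriv (fun t => K * arctan t + k) = fun t => K / (1 + t ^ 2) := by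
    ext t
    rw [(((hasDerivAt_arctan t).const_mul K).add_const k).deriv, mul_one_div]
  obtain ⟨R, hR⟩ := isBounded_iff_forall_norm_le.mp hI
  refine ⟨(differentiable_arctan.const_mul K).add_const k, ⟨K.toNNReal, ?_⟩, ?_,
    ⟨K / (1 + R ^ 2), by positivity, K, ?_⟩, ⟨K * (π / 2) + |k|, ?_⟩⟩
  · refine LipschitzWith.of_dist_le_mul fun s t => ?_
    have hnum : |t + s| ≤ (1 + s ^ 2) * (1 + t ^ 2) := abs_le.mpr
      ⟨by nlinarith [sq_nonneg (s + 1), sq_nonneg (t + 1), sq_nonneg (s * t)],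
        by nlinarith [sq_nonneg (s - 1), sq_nonneg (t - 1), sq_nonneg (s * t)]⟩
    have hdiff : K / (1 + s ^ 2) - K / (1 + t ^ 2)
        = K * ((t + s) / ((1 + s ^ 2) * (1 + t ^ 2))) * (t - s) := by
      field_simp
      ring
    rw [hderiv, coe_toNNReal K hK.le, dist_comm s t, dist_eq, dist_eq, hdiff, abs_mul, abs_mul,
      abs_of_pos hK, abs_div, abs_of_pos (by positivity : 0 < (1 + s ^ 2) * (1 + t ^ 2))]
    gcongr
    exact mul_le_of_le_one_right hK.le ((div_le_one (by positivity)).mpr hnum)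
  · rw [hderiv]
    exact fun t => by positivity
  · rw [hderiv]
    refine fun t ht => ⟨?_, div_le_self hK.le (by linarith [sq_nonneg t])⟩
    have := sq_le_sq' (abs_le.mp (hR t ht)).1 (abs_le.mp (hR t ht)).2
    exact div_le_div_of_nonneg_left hK.le (by positivity) (by linarith)
  · refine fun t _ => (abs_add_le _ _).trans ?_
    rw [abs_mul, abs_of_pos hK]
    gcongr
    exact abs_le.mpr ⟨(neg_pi_div_two_lt_arctan t).le, (arctan_lt_pi_div_two t).le⟩

variable {E : Type*} [NormedAddCommGroup E] [InnerProductSpace ℝ E] [CompleteSpace E]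
  {w : E → ℝ} {S : E → E} {m : ℝ} {y : E}

/-- The potential whose gradient graph is that of `w` after a Lewy rotation: if `S` inverts
`x ↦ ∇w(x) + m x`, an eigenvalue `tan φ` of `D²w` at `S y` becomes the eigenvalue `tan (σ - φ)` of
the Hessian at `y`, where `tan σ = 1 / m`. -/
def lewyRotation (m : ℝ) (w : E → ℝ) (S : E → E) (y : E) : ℝ :=
  (m ^ 2 + 1) * (⟪y, S y⟫ - w (S y) - m / 2 * ‖S y‖ ^ 2) - m / 2 * ‖y‖ ^ 2

lemma hasGradientAt_lewyRotation (hw : DifferentiableAt ℝ w (S y)) (hS : DifferentiableAt ℝ S y)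
    (hSy : ∇ w (S y) + m • S y = y) :
    HasGradientAt (lewyRotation m w S) ((m ^ 2 + 1) • S y - m • y) y := by
  have hderiv := (((((hasFDerivAt_id y).inner ℝ hS.hasFDerivAt).sub
    (hw.hasFDerivAt.comp y hS.hasFDerivAt)).sub
    (hS.hasFDerivAt.norm_sq.const_mul (m / 2))).const_mul (m ^ 2 + 1)).sub
    ((hasFDerivAt_id y).norm_sq.const_mul (m / 2))
  refine hasGradientAt_of_hasFDerivAt hderiv fun v => ?_
  have hcancel : ⟪y, fderiv ℝ S y v⟫
      = ⟪∇ w (S y), fderiv ℝ S y v⟫ + m * ⟪S y, fderiv ℝ S y v⟫ := by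
    rw [← real_inner_smul_left, ← inner_add_left, hSy]
  simp only [id_eq, ContinuousLinearMap.comp_id, _root_.sub_apply, _root_.smul_apply,
    ContinuousLinearMap.comp_apply, ContinuousLinearMap.prod_apply, ContinuousLinearMap.id_apply,
    fderivInnerCLM_apply, hcancel, ← inner_gradient_left, coe_innerSL_apply, nsmul_eq_mul,
    Nat.cast_ofNat, smul_eq_mul, real_inner_comm v, inner_sub_right, real_inner_smul_right]
  ring

lemma phase_lewyRotation (hw : DifferentiableAt ℝ w (S y)) (hS : DifferentiableAt ℝ S y)
    (hSy : ∇ w (S y) + m • S y = y) :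
    phase (lewyRotation m w S) y = -(m ^ 2 + 1) * phase w (S y) := by
  have hinner : ⟪y, S y⟫ = ⟪S y, ∇ w (S y)⟫ + m * ‖S y‖ ^ 2 := by
    rw [← real_inner_self_eq_norm_sq, ← real_inner_smul_right, ← inner_add_right, hSy,
      real_inner_comm]
  rw [phase, (hasGradientAt_lewyRotation hw hS hSy).gradient, lewyRotation, phase,
    inner_sub_right, real_inner_smul_right, real_inner_smul_right, real_inner_self_eq_norm_sq,
    hinner]
  ring

end LewyRotation

section RotatedEquation

open scoped Gradient

variable {E : Type*} [NormedAddCommGroup E] [InnerProductSpace ℝ E] [FiniteDimensional ℝ E]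
  {ι : Type*} [Fintype ι] {f : ℝ → ℝ} {w : E → ℝ} {S : E → E} {m : ℝ} {Ω : Set E}

lemma hasFDerivAt_gradient_add_smul {x : E} (hw' : DifferentiableAt ℝ (∇ w) x) :
    HasFDerivAt (fun x => ∇ w x + m • x) (hessian w x + m • ContinuousLinearMap.id ℝ E) x :=
  (hasFDerivAt_gradient hw').add ((hasFDerivAt_id x).const_smul m)

lemma hasCoerciveFDerivOn_gradient_add_smul {a : ℝ} (hw' : ∀ x ∈ Ω, DifferentiableAt ℝ (∇ w) x)
    (hsol : ∀ x ∈ Ω, SolvesAt ι f (Set.Ioi a) w x) (m : ℝ) :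
    HasCoerciveFDerivOn (fun x => ∇ w x + m • x) (a + m) Ω := fun x hx => by
  have hderiv := hasFDerivAt_gradient_add_smul (m := m) (hw' x hx)
  obtain ⟨e, θ, he, hθ, -⟩ := hsol x hx
  refine ⟨hderiv.differentiableAt, fun v => ?_⟩
  rw [hderiv.fderiv, _root_.add_apply, _root_.smul_apply, ContinuousLinearMap.id_apply,
    inner_add_right, real_inner_smul_right, real_inner_self_eq_norm_sq, add_mul]
  gcongr
  exact he.mul_norm_sq_le_inner_map_self (fun i => (hθ i).le) v

lemma hessian_lewyRotation (hw : ∀ x ∈ Ω, DifferentiableAt ℝ w x) (hS : Differentiable ℝ S)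
    (hSΩ : ∀ y, S y ∈ Ω ∧ ∇ w (S y) + m • S y = y) (y : E) :
    hessian (lewyRotation m w S) y
      = (m ^ 2 + 1) • fderiv ℝ S y - m • ContinuousLinearMap.id ℝ E := by
  have hgrad : ∇ (lewyRotation m w S) = fun y => (m ^ 2 + 1) • S y - m • y := gradient_eq fun y =>
    hasGradientAt_lewyRotation (hw _ (hSΩ y).1) (hS y) (hSΩ y).2
  rw [hessian, hgrad]
  exact (((hS y).hasFDerivAt.const_smul (m ^ 2 + 1)).sub
    ((hasFDerivAt_id y).const_smul m)).fderiv

lemma solvesAt_lewyRotation {K k : ℝ} (hm : 1 < m) (hw : ∀ x ∈ Ω, DifferentiableAt ℝ w x)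
    (hw' : ∀ x ∈ Ω, DifferentiableAt ℝ (∇ w) x)
    (hsol : ∀ x ∈ Ω, SolvesAt ι (fun t => K * arctan t + k) (Set.Ioi (-1)) w x)
    (hS : Continuous S) (hSΩ : ∀ y, S y ∈ Ω ∧ ∇ w (S y) + m • S y = y) (y : E) :
    SolvesAt ι (fun t => (m ^ 2 + 1) * K * arctan t - (m ^ 2 + 1) * (K * arctan (1 / m) + k))
      (Set.Ioo (-m) ((m ^ 2 + 1) / (m - 1) - m)) (lewyRotation m w S) y := by
  have hm0 : 0 < m - 1 := by linarith
  have hcoer := hasCoerciveFDerivOn_gradient_add_smul hw' hsol m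
  have hSdiff : Differentiable ℝ S := fun y =>
    let ⟨_, _, hT⟩ := hcoer.exists_hasFDerivAt_rightInverse (by linarith) hS hSΩ y
    hT.differentiableAt
  obtain ⟨T, hTF, hTS⟩ := hcoer.exists_hasFDerivAt_rightInverse (by linarith) hS hSΩ y
  obtain ⟨e, θ, he, hθ, hphase⟩ := hsol (S y) (hSΩ y).1
  have hθm : ∀ i, m - 1 < θ i + m := fun i => by linarith [Set.mem_Ioi.mp (hθ i)]
  have hTe : ∀ i, T.symm (e i) = (θ i + m)⁻¹ • e i := fun i => by
    have hT : T (e i) = (θ i + m) • e i := by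
      rw [← ContinuousLinearEquiv.coe_coe, hTF,
        (hasFDerivAt_gradient_add_smul (hw' _ (hSΩ y).1)).fderiv, _root_.add_apply,
        _root_.smul_apply, ContinuousLinearMap.id_apply, add_smul]
      congr 1
      exact he i
    rw [T.symm_apply_eq, map_smul, hT, inv_smul_smul₀ (hm0.trans (hθm i)).ne']
  refine ⟨e, fun i => (m ^ 2 + 1) / (θ i + m) - m, fun i => ?_, fun i => ⟨?_, ?_⟩, ?_⟩
  · have hhess := hessian_lewyRotation hw hSdiff hSΩ y
    rw [hTS.fderiv] at hhess
    rw [sub_smul, div_eq_mul_inv, mul_smul, ← hTe, hhess]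
    rfl
  · have := hm0.trans (hθm i)
    linarith [show 0 < (m ^ 2 + 1) / (θ i + m) by positivity]
  · exact sub_lt_sub_right (div_lt_div_of_pos_left (by positivity) hm0 (hθm i)) m
  · rw [phase_lewyRotation (hw _ (hSΩ y).1) (hSdiff y) (hSΩ y).2, hphase, Finset.mul_sum]
    refine Finset.sum_congr rfl fun i _ => ?_
    beta_reduce
    rw [arctan_lewyRotation (by linarith : 0 < m) (by linarith [hθm i] : -m < θ i)]
    ring

end RotatedEquation

section QuadraticSolutions

open scoped Gradient

variable {E : Type*} [NormedAddCommGroup E] [InnerProductSpace ℝ E]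

lemma isClosed_graphOn_of_eq_smul_add_smul {Ω : Set E} {G H : E → E} {l m : ℝ}
    (hG : IsClosed (Ω.graphOn G)) (hl : l ≠ 0) (hH : ∀ x ∈ Ω, H x = l • G x + m • x) :
    IsClosed (Ω.graphOn H) := by
  have hpre : Ω.graphOn H = (fun p : E × E => (p.1, l⁻¹ • (p.2 - m • p.1))) ⁻¹' Ω.graphOn G := by
    ext ⟨x, y⟩
    simp only [Set.mem_graphOn, Set.mem_preimage]
    refine and_congr_right fun hx => ?_
    rw [hH x hx, eq_inv_smul_iff₀ hl, eq_sub_iff_add_eq]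
  exact hpre ▸ hG.preimage (by fun_prop)

lemma eq_half_inner_hessian_of_phase_const [CompleteSpace E] {w : E → ℝ}
    (hw : Differentiable ℝ w) (hw' : Differentiable ℝ (∇ w))
    (hsymm : ∀ x, (hessian w x).IsSymmetric) (hphase : ∀ x, phase w x = phase w 0) (x : E) :
    w x = 1 / 2 * ⟪x, hessian w 0 x⟫ - phase w 0 := by
  rw [← hphase x, phase, gradient_eq_hessian_zero_apply_of_phase_const hw hw' hsymm hphase]
  ring

variable [FiniteDimensional ℝ E] {ι : Type*} [Fintype ι] {w : E → ℝ} {S : E → E} {m K k : ℝ}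
  {Ω : Set E}

lemma exists_eq_continuousLinearMap_and_phase_const (hm : 1 < m) (hK : 0 < K)
    (hw : ∀ x ∈ Ω, DifferentiableAt ℝ w x) (hw' : ∀ x ∈ Ω, DifferentiableAt ℝ (∇ w) x)
    (hsol : ∀ x ∈ Ω, SolvesAt ι (fun t => K * arctan t + k) (Set.Ioi (-1)) w x)
    (hS : Continuous S) (hSΩ : ∀ y, S y ∈ Ω ∧ ∇ w (S y) + m • S y = y) :
    (∃ P : E →L[ℝ] E, ⇑P = S) ∧ ∀ y, phase w (S y) = phase w (S 0) := by
  have hm0 : (m ^ 2 + 1) ≠ 0 := by positivity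
  have hS' : Differentiable ℝ S := fun y =>
    let ⟨_, _, hT⟩ := (hasCoerciveFDerivOn_gradient_add_smul hw' hsol m
      ).exists_hasFDerivAt_rightInverse (by linarith) hS hSΩ y
    hT.differentiableAt
  let V := lewyRotation m w S
  have hV y : HasGradientAt V ((m ^ 2 + 1) • S y - m • y) y :=
    hasGradientAt_lewyRotation (hw _ (hSΩ y).1) (hS' y) (hSΩ y).2
  have hVdiff : Differentiable ℝ V := fun y => (hV y).differentiableAt
  have hV' : Differentiable ℝ (∇ V) := by
    rw [gradient_eq hV]
    fun_prop
  have hVsol := solvesAt_lewyRotation hm hw hw' hsol hS hSΩ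
  have hVphase : ∀ y, phase V y = phase V 0 :=
    phase_eq_phase_zero (isUniformlyElliptic_mul_arctan_add (by positivity) _
      (Metric.isBounded_Ioo _ _)) hVdiff hV' hVsol
  have hVsymm y : (hessian V y).IsSymmetric :=
    let ⟨_, _, he, _⟩ := hVsol y
    he.isSymmetric
  refine ⟨⟨(m ^ 2 + 1)⁻¹ • (hessian V 0 + m • ContinuousLinearMap.id ℝ E), ?_⟩, fun y => ?_⟩
  · ext y
    have hgrad := gradient_eq_hessian_zero_apply_of_phase_const hVdiff hV' hVsymm hVphase y
    rw [(hV y).gradient] at hgrad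
    rw [_root_.smul_apply, _root_.add_apply, _root_.smul_apply, ContinuousLinearMap.id_apply,
      ← hgrad, sub_add_cancel, inv_smul_smul₀ hm0]
  · have h := hVphase y
    rw [phase_lewyRotation (hw _ (hSΩ y).1) (hS' y) (hSΩ y).2,
      phase_lewyRotation (hw _ (hSΩ 0).1) (hS' 0) (hSΩ 0).2] at h
    exact mul_left_cancel₀ (neg_ne_zero.mpr hm0) h

theorem eq_univ_and_quadratic_of_isClosed_graphOn_gradient (hK : 0 < K) (hΩ : IsOpen Ω)
    (hne : Ω.Nonempty) (hw : ∀ x ∈ Ω, ContDiffAt ℝ 2 w x)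
    (hgraph : IsClosed (Ω.graphOn (∇ w)))
    (hsol : ∀ x ∈ Ω, SolvesAt ι (fun t => K * arctan t + k) (Set.Ioi (-1)) w x) :
    Ω = Set.univ ∧ ∃ (A : E →L[ℝ] E) (c : ℝ), A.IsSymmetric ∧ ∀ x, w x = 1 / 2 * ⟪x, A x⟫ + c := by
  have hw1 x (hx : x ∈ Ω) : DifferentiableAt ℝ w x := (hw x hx).differentiableAt (by norm_num)
  have hw2 x (hx : x ∈ Ω) : DifferentiableAt ℝ (∇ w) x := differentiableAt_gradient (hw x hx)
  obtain ⟨S, hS, hSΩ⟩ := (hasCoerciveFDerivOn_gradient_add_smul hw2 hsol 2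
    ).exists_continuous_rightInverse (by norm_num) hΩ hne
    (isClosed_graphOn_of_eq_smul_add_smul hgraph one_ne_zero fun _ _ => by rw [one_smul])
  obtain ⟨⟨P, hP⟩, hphase⟩ :=
    exists_eq_continuousLinearMap_and_phase_const one_lt_two hK hw1 hw2 hsol hS hSΩ
  have hinj : Function.Injective S :=
    Function.LeftInverse.injective (g := fun x => ∇ w x + (2 : ℝ) • x) fun y => (hSΩ y).2
  have hsurj : Function.Surjective S := by
    rw [← hP] at hinj ⊢
    exact P.toLinearMap.surjective_of_injective hinj
  have hmem : ∀ x, x ∈ Ω := hsurj.forall.mpr fun y => (hSΩ y).1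
  have hsymm x : (hessian w x).IsSymmetric :=
    let ⟨_, _, he, _⟩ := hsol x (hmem x)
    he.isSymmetric
  obtain ⟨y₀, hy₀⟩ := hsurj 0
  have hphase' : ∀ x, phase w x = phase w 0 :=
    hsurj.forall.mpr fun y => (hphase y).trans (hy₀ ▸ (hphase y₀).symm)
  exact ⟨Set.eq_univ_of_forall hmem, hessian w 0, -phase w 0, hsymm 0, fun x => by
    rw [eq_half_inner_hessian_of_phase_const (fun x => hw1 x (hmem x)) (fun x => hw2 x (hmem x))
      hsymm hphase', sub_eq_add_neg]⟩

end QuadraticSolutions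

section BoundaryBlowUp

open scoped Topology Gradient

section Topological

variable {X : Type*} [TopologicalSpace X] {Ω K : Set X} {φ : X → ℝ} {M : ℝ}

lemma tendsto_nhdsWithin_of_forall_seq [FirstCountableTopology X] {Y : Type*} {f : X → Y}
    {l : Filter Y} {p : X}
    (h : ∀ z : ℕ → X, (∀ k, z k ∈ Ω) → Tendsto z atTop (𝓝 p) → Tendsto (fun k => f (z k)) atTop l) :
    Tendsto f (𝓝[Ω] p) l := by
  rw [nhdsWithin, ← subtype_coe_map_comap, tendsto_map'_iff]
  exact tendsto_of_seq_tendsto fun z hz => h _ (fun k => (z k).2) (tendsto_comap_iff.mp hz)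

lemma closure_subset_of_forall_le (hφ : ∀ p ∈ frontier Ω, Tendsto φ (𝓝[Ω] p) atTop)
    (hKΩ : K ⊆ Ω) (hK : ∀ x ∈ K, φ x ≤ M) : closure K ⊆ Ω := fun x hx => by
  by_contra hxΩ
  have : (𝓝[K] x).NeBot := mem_closure_iff_nhdsWithin_neBot.mp hx
  have hlim := (hφ x ⟨closure_mono hKΩ hx, fun h => hxΩ (interior_subset h)⟩).mono_left
    (nhdsWithin_mono x hKΩ)
  obtain ⟨y, hMy, hyK⟩ := ((hlim.eventually_gt_atTop M).and self_mem_nhdsWithin).exists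
  exact (hK y hyK).not_gt hMy

lemma isClosed_graphOn_of_tendsto_norm_atTop {F : Type*} [NormedAddCommGroup F] {G : X → F}
    (hG : ContinuousOn G Ω) (hblow : ∀ p ∈ frontier Ω, Tendsto (‖G ·‖) (𝓝[Ω] p) atTop) :
    IsClosed (Ω.graphOn G) := by
  refine isClosed_of_closure_subset fun ⟨x, y⟩ hxy => Set.mem_graphOn.mpr ?_
  have : (𝓝[Ω.graphOn G] (x, y)).NeBot := mem_closure_iff_nhdsWithin_neBot.mp hxy
  have hfst : Tendsto Prod.fst (𝓝[Ω.graphOn G] (x, y)) (𝓝[Ω] x) := by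
    refine tendsto_nhdsWithin_iff.mpr ⟨continuous_fst.continuousWithinAt, ?_⟩
    exact eventually_mem_nhdsWithin.mono fun p hp => (Set.mem_graphOn.mp hp).1
  have hsnd : Tendsto (fun p => G p.1) (𝓝[Ω.graphOn G] (x, y)) (𝓝 y) :=
    (continuous_snd.continuousWithinAt (x := (x, y))).congr' <|
      eventually_mem_nhdsWithin.mono fun p hp => (Set.mem_graphOn.mp hp).2.symm
  have hx : x ∈ Ω := by
    by_contra hxΩ
    have hfront : x ∈ frontier Ω := ⟨mem_closure_of_tendsto (hfst.mono_right nhdsWithin_le_nhds)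
      (tendsto_nhdsWithin_iff.mp hfst).2, fun h => hxΩ (interior_subset h)⟩
    exact not_tendsto_nhds_of_tendsto_atTop ((hblow x hfront).comp hfst) _ hsnd.norm
  exact ⟨hx, tendsto_nhds_unique ((hG x hx).tendsto.comp hfst) hsnd⟩

lemma apply_one_mem_of_forall_le (hΩ : IsOpen Ω) (hφ : ∀ p ∈ frontier Ω, Tendsto φ (𝓝[Ω] p) atTop)
    {γ : ℝ → X} (hγ : Continuous γ) (h0 : γ 0 ∈ Ω)
    (hM : ∀ t ∈ Set.Ico (0 : ℝ) 1, (∀ s ∈ Set.Icc 0 t, γ s ∈ Ω) → φ (γ t) ≤ M) : γ 1 ∈ Ω := by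
  by_contra h1
  have hcompact : IsCompact (Set.Icc 0 1 ∩ γ ⁻¹' Ωᶜ) :=
    isCompact_Icc.inter_right (hΩ.isClosed_compl.preimage hγ)
  obtain ⟨t, ⟨ht, htΩ⟩, hleast⟩ := hcompact.exists_isLeast ⟨1, ⟨zero_le_one, le_rfl⟩, h1⟩
  have ht0 : 0 ≠ t := fun h => htΩ (h ▸ h0)
  have hbefore : ∀ s ∈ Set.Ico 0 t, γ s ∈ Ω := fun s hs => by
    by_contra hsΩ
    exact (hleast ⟨⟨hs.1, hs.2.le.trans ht.2⟩, hsΩ⟩).not_gt hs.2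
  have hclosure : closure (γ '' Set.Ico 0 t) ⊆ Ω := by
    refine closure_subset_of_forall_le (M := M) hφ (Set.image_subset_iff.mpr hbefore) ?_
    rintro _ ⟨s, hs, rfl⟩
    exact hM s ⟨hs.1, hs.2.trans_le ht.2⟩ fun r hr => hbefore r ⟨hr.1, hr.2.trans_lt hs.2⟩
  refine htΩ (hclosure (image_closure_subset_closure_image hγ ⟨t, ?_, rfl⟩))
  rw [closure_Ico ht0]
  exact ⟨ht.1, le_rfl⟩

end Topological

variable {E : Type*} [NormedAddCommGroup E] [InnerProductSpace ℝ E] [CompleteSpace E] {u : E → ℝ}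
  {x : E} {Ω : Set E} {C : ℝ}

lemma abs_apply_smul_sub_sq_mul_le {r : ℝ} (hr : 0 < r)
    (hu : ∀ s ∈ Set.uIcc 1 r, DifferentiableAt ℝ u (s • x))
    (hC : ∀ s ∈ Set.uIcc 1 r, |phase u (s • x)| ≤ C) :
    |u (r • x) - r ^ 2 * u x| ≤ C * |r ^ 2 - 1| := by
  obtain hr1 | rfl | hr1 := lt_trichotomy r 1
  · rw [Set.uIcc_of_ge hr1.le] at hu hC
    obtain ⟨s, hs, h⟩ := exists_phase_smul_eq hr hr1 hu
    rw [one_smul, one_pow, mul_one] at h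
    rw [abs_sub_comm, mul_comm (r ^ 2), h, abs_mul, abs_sub_comm, mul_comm]
    gcongr
    exact hC s (Set.Ioo_subset_Icc_self hs)
  · simp only [one_smul, one_pow, one_mul, sub_self, abs_zero, mul_zero, le_refl]
  · rw [Set.uIcc_of_le hr1.le] at hu hC
    obtain ⟨s, hs, h⟩ := exists_phase_smul_eq one_pos hr1 hu
    rw [one_smul, one_pow, mul_one] at h
    rw [mul_comm (r ^ 2), h, abs_mul, mul_comm]
    gcongr
    exact hC s (Set.Ioo_subset_Icc_self hs)

lemma smul_mem_of_tendsto_abs_atTop (hΩ : IsOpen Ω) (hu : ∀ x ∈ Ω, DifferentiableAt ℝ u x)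
    (hC : ∀ x ∈ Ω, |phase u x| ≤ C) (hblow : ∀ p ∈ frontier Ω, Tendsto (|u ·|) (𝓝[Ω] p) atTop)
    (hx : x ∈ Ω) {t : ℝ} (ht : 0 ≤ t) : t • x ∈ Ω := by
  let ρ : ℝ → ℝ := fun τ => 1 + τ * (t - 1)
  have hρ : Continuous ρ := by fun_prop
  have hρ0 : ρ 0 = 1 := by ring
  have hρ1 : ρ 1 = t := by ring
  rw [← hρ1]
  refine apply_one_mem_of_forall_le (γ := fun τ => ρ τ • x)
    (M := (t + 1) ^ 2 * |u x| + C * (t + 1) ^ 2) hΩ hblow (by fun_prop)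
    (by rwa [hρ0, one_smul]) fun τ hτ hmem => ?_
  have hρpos : 0 < ρ τ := by nlinarith [hτ.1, hτ.2]
  have hρle : ρ τ ≤ t + 1 := by nlinarith [hτ.1, hτ.2]
  have hseg : ∀ s ∈ Set.uIcc 1 (ρ τ), s • x ∈ Ω := fun s hs => by
    obtain ⟨σ, hσ, rfl⟩ := intermediate_value_uIcc hρ.continuousOn (hρ0.symm ▸ hs)
    exact hmem σ (Set.uIcc_of_le hτ.1 ▸ hσ)
  have hdist := abs_apply_smul_sub_sq_mul_le hρpos (fun s hs => hu _ (hseg s hs))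
    fun s hs => hC _ (hseg s hs)
  have hC0 : 0 ≤ C := (abs_nonneg _).trans (hC x hx)
  have hsq : ρ τ ^ 2 ≤ (t + 1) ^ 2 := by gcongr
  calc |u (ρ τ • x)| ≤ |ρ τ ^ 2 * u x| + C * |ρ τ ^ 2 - 1| := by
        linarith [abs_sub_abs_le_abs_sub (u (ρ τ • x)) (ρ τ ^ 2 * u x)]
    _ ≤ (t + 1) ^ 2 * |u x| + C * (t + 1) ^ 2 := by
        rw [abs_mul, abs_sq]
        gcongr
        exact abs_le.mpr ⟨by nlinarith, by linarith⟩

theorem eq_univ_of_tendsto_abs_atTop (hΩ : IsOpen Ω) (hne : Ω.Nonempty)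
    (hu : ∀ x ∈ Ω, DifferentiableAt ℝ u x) (hC : ∀ x ∈ Ω, |phase u x| ≤ C)
    (hblow : ∀ p ∈ frontier Ω, Tendsto (|u ·|) (𝓝[Ω] p) atTop) : Ω = Set.univ := by
  obtain ⟨x, hx⟩ := hne
  have hzero : (0 : E) ∈ Ω := by
    simpa only [zero_smul] using smul_mem_of_tendsto_abs_atTop hΩ hu hC hblow hx le_rfl
  refine Set.eq_univ_of_forall fun y => ?_
  have hlim : Tendsto (fun t : ℝ => t • y) (𝓝[>] 0) (𝓝 0) :=
    (zero_smul ℝ y ▸ (by fun_prop : Continuous fun t : ℝ => t • y).tendsto 0).mono_left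
      nhdsWithin_le_nhds
  obtain ⟨t, htΩ, ht⟩ := ((hlim.eventually_mem (hΩ.mem_nhds hzero)).and self_mem_nhdsWithin).exists
  have ht : 0 < t := ht
  simpa only [inv_smul_smul₀ ht.ne'] using
    smul_mem_of_tendsto_abs_atTop hΩ hu hC hblow htΩ (inv_nonneg.mpr ht.le)

lemma isClosed_graphOn_gradient_of_tendsto (hΩ : IsOpen Ω) (hne : Ω.Nonempty)
    (hu : ∀ x ∈ Ω, ContDiffAt ℝ 2 u x) (hC : ∀ x ∈ Ω, |phase u x| ≤ C)
    (hblow : (∀ p ∈ frontier Ω, Tendsto (‖∇ u ·‖) (𝓝[Ω] p) atTop) ∨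
      ∀ p ∈ frontier Ω, Tendsto (|u ·|) (𝓝[Ω] p) atTop) :
    IsClosed (Ω.graphOn (∇ u)) := by
  refine isClosed_graphOn_of_tendsto_norm_atTop
    (fun x hx => (differentiableAt_gradient (hu x hx)).continuousAt.continuousWithinAt) ?_
  rcases hblow with hgrad | habs
  · exact hgrad
  · rw [eq_univ_of_tendsto_abs_atTop hΩ hne (fun x hx => (hu x hx).differentiableAt two_ne_zero)
      hC habs, frontier_univ]
    exact fun p hp => absurd hp (Set.notMem_empty p)

end BoundaryBlowUp

section Normalization

open scoped Gradient Topology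

variable {E : Type*} [NormedAddCommGroup E] [InnerProductSpace ℝ E] [CompleteSpace E]
  {u : E → ℝ} {x : E} {ι : Type*} [Fintype ι] {f g : ℝ → ℝ} {I J : Set ℝ}

lemma hasGradientAt_mul_add_norm_sq (hu : DifferentiableAt ℝ u x) (l m : ℝ) :
    HasGradientAt (fun y => l * u y + m / 2 * ‖y‖ ^ 2) (l • ∇ u x + m • x) x := by
  refine hasGradientAt_of_hasFDerivAt ((hu.hasFDerivAt.const_mul l).add
    ((hasStrictFDerivAt_norm_sq x).hasFDerivAt.const_mul (m / 2))) fun v => ?_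
  simp only [_root_.add_apply, _root_.smul_apply, ← inner_gradient_left, innerSL_apply_apply,
    nsmul_eq_mul, smul_eq_mul, inner_add_left, real_inner_smul_left, Nat.cast_ofNat]
  ring

lemma phase_mul_add_norm_sq (hu : DifferentiableAt ℝ u x) (l m : ℝ) :
    phase (fun y => l * u y + m / 2 * ‖y‖ ^ 2) x = l * phase u x := by
  rw [phase, (hasGradientAt_mul_add_norm_sq hu l m).gradient, phase, inner_add_right,
    real_inner_smul_right, real_inner_smul_right, real_inner_self_eq_norm_sq]
  ring

lemma hessian_mul_add_norm_sq (hu : ContDiffAt ℝ 2 u x) (l m : ℝ) :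
    hessian (fun y => l * u y + m / 2 * ‖y‖ ^ 2) x
      = l • hessian u x + m • ContinuousLinearMap.id ℝ E := by
  have hgrad : ∇ (fun y => l * u y + m / 2 * ‖y‖ ^ 2) =ᶠ[𝓝 x] fun y => l • ∇ u y + m • y :=
    (hu.eventually (by norm_num)).mono fun y hy =>
      (hasGradientAt_mul_add_norm_sq (hy.differentiableAt two_ne_zero) l m).gradient
  rw [hessian, hgrad.fderiv_eq]
  exact (((hasFDerivAt_gradient (differentiableAt_gradient hu)).const_smul l).add
    ((hasFDerivAt_id x).const_smul m)).fderiv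

lemma SolvesAt.mul_add_norm_sq (h : SolvesAt ι f I u x) (hu : ContDiffAt ℝ 2 u x) {l m : ℝ}
    (hIJ : ∀ t ∈ I, l * t + m ∈ J) (hfg : ∀ t ∈ I, l * f t = g (l * t + m)) :
    SolvesAt ι g J (fun y => l * u y + m / 2 * ‖y‖ ^ 2) x := by
  obtain ⟨e, θ, he, hθ, hphase⟩ := h
  refine ⟨e, fun i => l * θ i + m, fun i => ?_, fun i => hIJ _ (hθ i), ?_⟩
  · rw [hessian_mul_add_norm_sq hu, _root_.add_apply, _root_.smul_apply, _root_.smul_apply, he i,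
      ContinuousLinearMap.id_apply, smul_smul, add_smul]
  · rw [phase_mul_add_norm_sq (hu.differentiableAt two_ne_zero), hphase, Finset.mul_sum]
    exact Finset.sum_congr rfl fun i _ => hfg _ (hθ i)

lemma arctan_sub_div_add {a b t : ℝ} (hb : 0 < b) (ht : -(a + b) < t) :
    arctan ((t + a - b) / (t + a + b)) = arctan ((t + a) / b) - π / 4 := by
  have hs : -1 < (t + a) / b := by
    rw [lt_div_iff₀ hb]
    linarith
  have hs' : t + a + b ≠ 0 := by linarith
  have h := arctan_lewyRotation one_pos hs
  rw [div_one, arctan_one] at h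
  rw [← neg_sub (π / 4), ← h, ← arctan_neg]
  congr 1
  field_simp
  ring

end Normalization

section NormalizedEquation

open scoped Gradient

variable {E : Type*} [NormedAddCommGroup E] [InnerProductSpace ℝ E] [FiniteDimensional ℝ E]
  {ι : Type*} [Fintype ι] {Ω : Set E} {u : E → ℝ} {a b c : ℝ}

theorem eq_univ_and_quadratic_of_solvesAt (hb : 0 < b) (hc : 0 < c) (hΩ : IsOpen Ω)
    (hne : Ω.Nonempty) (hu : ∀ x ∈ Ω, ContDiffAt ℝ 2 u x) (hgraph : IsClosed (Ω.graphOn (∇ u)))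
    (hsol : ∀ x ∈ Ω, SolvesAt ι (fun t => c * arctan ((t + a - b) / (t + a + b)))
      (Set.Ioi (-(a + b))) u x) :
    Ω = Set.univ ∧ ∃ (A : E →L[ℝ] E) (k : ℝ), A.IsSymmetric ∧ ∀ x, u x = 1 / 2 * ⟪x, A x⟫ + k := by
  let w : E → ℝ := fun y => b⁻¹ * u y + a / b / 2 * ‖y‖ ^ 2
  have hw x (hx : x ∈ Ω) : ContDiffAt ℝ 2 w x :=
    (contDiffAt_const.mul (hu x hx)).add (contDiffAt_const.mul (contDiff_norm_sq ℝ).contDiffAt)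
  have hwgrad x (hx : x ∈ Ω) : ∇ w x = b⁻¹ • ∇ u x + (a / b) • x :=
    (hasGradientAt_mul_add_norm_sq ((hu x hx).differentiableAt two_ne_zero) _ _).gradient
  have hscale t : b⁻¹ * t + a / b = (t + a) / b := by ring
  have hwsol x (hx : x ∈ Ω) :
      SolvesAt ι (fun t => c / b * arctan t + -(c / b * (π / 4))) (Set.Ioi (-1)) w x := by
    refine (hsol x hx).mul_add_norm_sq (hu x hx) (fun t ht => ?_) fun t ht => ?_
    · rw [hscale, Set.mem_Ioi, lt_div_iff₀ hb]
      linarith [Set.mem_Ioi.mp ht]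
    · rw [hscale, arctan_sub_div_add hb ht]
      ring
  obtain ⟨hΩ_univ, A, k, hA, hwA⟩ := eq_univ_and_quadratic_of_isClosed_graphOn_gradient
    (by positivity) hΩ hne hw
    (isClosed_graphOn_of_eq_smul_add_smul hgraph (inv_ne_zero hb.ne') hwgrad) hwsol
  refine ⟨hΩ_univ, b • A - a • ContinuousLinearMap.id ℝ E, b * k, ?_, fun x => ?_⟩
  · exact (hA.smul (by simp)).sub (LinearMap.IsSymmetric.id.smul (by simp))
  · have hux := hwA x
    rw [_root_.sub_apply, _root_.smul_apply, _root_.smul_apply, ContinuousLinearMap.id_apply,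
      inner_sub_right, real_inner_smul_right, real_inner_smul_right, real_inner_self_eq_norm_sq]
    simp only [w] at hux
    field_simp at hux
    linarith

end NormalizedEquation

section EuclideanHessian

open scoped Gradient

variable {n : ℕ} {u : EuclideanSpace ℝ (Fin n) → ℝ} {x : EuclideanSpace ℝ (Fin n)} {s : ℝ}

lemma hess_apply_eq_inner_hessian (hu : ContDiffAt ℝ 2 u x) (i j : Fin n) :
    Hess n u x i j
      = ⟪EuclideanSpace.single i 1, hessian u x (EuclideanSpace.single j (1 : ℝ))⟫ := by
  rw [Hess, of_apply, iteratedFDeriv_two_apply]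
  exact (fderiv_fderiv_apply (differentiableAt_gradient hu) _ _).trans (hessian_isSymmetric hu _ _)

lemma toEuclideanLin_symm_apply_apply
    (A : EuclideanSpace ℝ (Fin n) →L[ℝ] EuclideanSpace ℝ (Fin n)) (i j : Fin n) :
    toEuclideanLin.symm (A : _ →ₗ[ℝ] _) i j
      = ⟪EuclideanSpace.single i 1, A (EuclideanSpace.single j (1 : ℝ))⟫ := by
  rw [EuclideanSpace.inner_single_left, map_one, one_mul]
  rfl

lemma toEuclideanLin_hess (hu : ContDiffAt ℝ 2 u x) :
    toEuclideanLin (Hess n u x) = hessian u x := by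
  rw [← LinearEquiv.eq_symm_apply]
  ext i j
  rw [hess_apply_eq_inner_hessian hu, toEuclideanLin_symm_apply_apply]

lemma exists_isEigenbasis_hessian (hu : ContDiffAt ℝ 2 u x)
    (hadm : (Hess n u x + s • (1 : Matrix (Fin n) (Fin n) ℝ)).PosDef) :
    ∃ e, IsEigenbasis (hessian u x) e (eigs (Hess n u x)) ∧ ∀ i, -s < eigs (Hess n u x) i := by
  have hherm : (Hess n u x).IsHermitian := by
    rw [← isSymmetric_toEuclideanLin_iff, toEuclideanLin_hess hu]
    exact hessian_isSymmetric hu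
  have heigs : eigs (Hess n u x) = hherm.eigenvalues := dif_pos hherm
  rw [heigs]
  refine ⟨hherm.eigenvectorBasis, fun i => ?_, fun i => ?_⟩
  · rw [← ContinuousLinearMap.coe_coe, ← toEuclideanLin_hess hu, toLpLin_apply,
      hherm.mulVec_eigenvectorBasis]
    rfl
  · have hpos := hadm.dotProduct_mulVec_pos (x := hherm.eigenvectorBasis i)
      (by simpa using hherm.eigenvectorBasis.orthonormal.ne_zero i)
    have hnorm : star ⇑(hherm.eigenvectorBasis i) ⬝ᵥ ⇑(hherm.eigenvectorBasis i) = 1 := by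
      rw [dotProduct_comm, ← EuclideanSpace.inner_eq_star_dotProduct, real_inner_self_eq_norm_sq,
        hherm.eigenvectorBasis.orthonormal.1, one_pow]
    rw [add_mulVec, hherm.mulVec_eigenvectorBasis, smul_mulVec, one_mulVec, dotProduct_add,
      dotProduct_smul, dotProduct_smul, hnorm, smul_eq_mul, smul_eq_mul] at hpos
    linarith

lemma isQuadPoly_of_isSymmetric {A : EuclideanSpace ℝ (Fin n) →L[ℝ] EuclideanSpace ℝ (Fin n)}
    (hA : A.IsSymmetric) {k : ℝ} (hu : ∀ x, u x = 1 / 2 * ⟪x, A x⟫ + k) : IsQuadPoly n u := by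
  refine ⟨toEuclideanLin.symm (A : _ →ₗ[ℝ] _), 0, k, ?_, fun x => ?_⟩
  · ext i j
    rw [transpose_apply, toEuclideanLin_symm_apply_apply, toEuclideanLin_symm_apply_apply,
      real_inner_comm]
    exact hA _ _
  · have hAx : A x = toEuclideanLin (toEuclideanLin.symm (A : _ →ₗ[ℝ] _)) x := by
      rw [LinearEquiv.apply_symm_apply, ContinuousLinearMap.coe_coe]
    rw [hu, inner_zero_left, add_zero, hAx, toLpLin_apply, PiLp.inner_apply]
    simp only [mulVec, dotProduct, RCLike.inner_apply, conj_trivial, Finset.sum_mul]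
    simp only [mul_right_comm]

end EuclideanHessian

section Bernstein

open scoped Gradient Topology

variable {n : ℕ} {a b c : ℝ} {Ω : Set (EuclideanSpace ℝ (Fin n))}
  {u : EuclideanSpace ℝ (Fin n) → ℝ}

lemma solvesAt_of_posDef {x : EuclideanSpace ℝ (Fin n)} (hu : ContDiffAt ℝ 2 u x)
    (hadm : (Hess n u x + (a + b) • (1 : Matrix (Fin n) (Fin n) ℝ)).PosDef)
    (heq : c * ∑ i, arctan ((eigs (Hess n u x) i + a - b) / (eigs (Hess n u x) i + a + b))
      = -u x + 1 / 2 * ⟪x, ∇ u x⟫) :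
    SolvesAt (Fin n) (fun t => c * arctan ((t + a - b) / (t + a + b))) (Set.Ioi (-(a + b)))
      u x := by
  obtain ⟨e, he, hlt⟩ := exists_isEigenbasis_hessian hu hadm
  exact ⟨e, _, he, hlt, by rw [phase, ← heq, Finset.mul_sum]⟩

theorem bernstein_domain_tau_gt_pi_div_four_general (hb : 0 < b) (hc : 0 < c) (hΩ : IsOpen Ω)
    (hne : Ω.Nonempty) (hu : ContDiffOn ℝ 2 u Ω)
    (hadm : ∀ x ∈ Ω, (Hess n u x + (a + b) • (1 : Matrix (Fin n) (Fin n) ℝ)).PosDef)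
    (heq : ∀ x ∈ Ω,
      c * ∑ i, arctan ((eigs (Hess n u x) i + a - b) / (eigs (Hess n u x) i + a + b))
        = -u x + 1 / 2 * ⟪x, ∇ u x⟫)
    (hblow :
      (∀ p ∈ frontier Ω, ∀ z : ℕ → EuclideanSpace ℝ (Fin n), (∀ k, z k ∈ Ω) →
        Tendsto z atTop (𝓝 p) → Tendsto (fun k => ‖∇ u (z k)‖) atTop atTop) ∨
      (∀ p ∈ frontier Ω, ∀ z : ℕ → EuclideanSpace ℝ (Fin n), (∀ k, z k ∈ Ω) →
        Tendsto z atTop (𝓝 p) → Tendsto (fun k => |u (z k)|) atTop atTop)) :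
    Ω = Set.univ ∧ IsQuadPoly n u := by
  have hu' x (hx : x ∈ Ω) : ContDiffAt ℝ 2 u x := hu.contDiffAt (hΩ.mem_nhds hx)
  have hsol x (hx : x ∈ Ω) := solvesAt_of_posDef (hu' x hx) (hadm x hx) (heq x hx)
  have hbound t : |c * arctan ((t + a - b) / (t + a + b))| ≤ c * (π / 2) := by
    rw [abs_mul, abs_of_pos hc]
    gcongr
    exact abs_le.mpr ⟨(neg_pi_div_two_lt_arctan _).le, (arctan_lt_pi_div_two _).le⟩
  have hgraph := isClosed_graphOn_gradient_of_tendsto hΩ hne hu'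
    (fun x hx => (hsol x hx).abs_phase_le fun t _ => hbound t)
    (hblow.imp (fun h p hp => tendsto_nhdsWithin_of_forall_seq (h p hp))
      fun h p hp => tendsto_nhdsWithin_of_forall_seq (h p hp))
  obtain ⟨hΩ_univ, A, k, hA, huA⟩ := eq_univ_and_quadratic_of_solvesAt hb hc hΩ hne hu' hgraph hsol
  exact ⟨hΩ_univ, isQuadPoly_of_isSymmetric hA huA⟩

end Bernstein

theorem bernstein_domain_tau_gt_pi_div_four (n : ℕ) (hn : 1 ≤ n) (a b : ℝ)
    (ha0 : 0 < a) (ha1 : a < 1) (hb : b = Real.sqrt (1 - a ^ 2))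
    (Ω : Set (EuclideanSpace ℝ (Fin n))) (hΩo : IsOpen Ω) (hΩc : IsConnected Ω)
    (u : EuclideanSpace ℝ (Fin n) → ℝ)
    (hu : ContDiffOn ℝ 2 u Ω)
    (hadm : ∀ x ∈ Ω, (Hess n u x + (a + b) • (1 : Matrix (Fin n) (Fin n) ℝ)).PosDef)
    (heq : ∀ x ∈ Ω, (Real.sqrt (a ^ 2 + 1) / b) *
        ∑ i, Real.arctan ((eigs (Hess n u x) i + a - b) / (eigs (Hess n u x) i + a + b))
      = -u x + (1/2) * ⟪x, gradient u x⟫)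
    (hblow :
      (∀ p ∈ frontier Ω, ∀ z : ℕ → EuclideanSpace ℝ (Fin n), (∀ k, z k ∈ Ω) →
        Tendsto z atTop (nhds p) → Tendsto (fun k => ‖gradient u (z k)‖) atTop atTop) ∨
      (∀ p ∈ frontier Ω, ∀ z : ℕ → EuclideanSpace ℝ (Fin n), (∀ k, z k ∈ Ω) →
        Tendsto z atTop (nhds p) → Tendsto (fun k => |u (z k)|) atTop atTop)) :
    Ω = Set.univ ∧ IsQuadPoly n u := by
  have hb_pos : 0 < b := hb ▸ Real.sqrt_pos.mpr (by nlinarith)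
  exact bernstein_domain_tau_gt_pi_div_four_general hb_pos (by positivity) hΩo hΩc.nonempty hu
    hadm heq hblow
end
end

section
/- Let n ≥ 1, a < −1 and b = √(a² − 1). Then there exists a smooth function u : ℝⁿ → ℝ with −(b+a)I < D²u(x) < (b−a)I for all x ∈ ℝⁿ, satisfying (√(a²+1)/(2b)) · Σ_{i=1}^n ln((b + a + λ_i(D²u(x)))/(b − a − λ_i(D²u(x)))) = −u(x) + (1/2)⟨x, Du(x)⟩ for all x ∈ ℝⁿ, such that u is NOT a quadratic polynomial. -/
open Real Filter Matrix
open scoped RealInnerProductSpace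

noncomputable section

/-!
Look for a separable solution `u x = ∑ i, f (x i)`. Its Hessian is diagonal, so the equation splits
into copies of one ordinary differential equation. With `φ` the inverse of
`l ↦ κ log ((b + a + l) / (b - a - l))`, a logistic curve with values in `(-(b + a), b - a)`, it
reads `f'' = φ (t f' / 2 - f)`, and admissibility holds automatically. In the unknowns
`h = f - t f'` and `g = f'` the equation becomes `h' = -t φ`, `g' = φ`, whose right-hand side is
bounded and Lipschitz on bounded time intervals, so solutions are global. A quadratic solution has
`f''` constant, hence `t f' / 2 - f` constant, hence `f' 0 = 0`; the initial value `f' 0 = 1`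
excludes this.
-/

section GlobalIntegralCurve

open Set

variable {E : Type*} [NormedAddCommGroup E] [NormedSpace ℝ E] {v : ℝ → E → E}

theorem exists_isIntegralCurveOn_Icc_of_norm_le [CompleteSpace E] {tmin tmax t₀ : ℝ}
    (ht₀ : t₀ ∈ Icc tmin tmax) {K L : NNReal}
    (hcont : ∀ x, ContinuousOn (v · x) (Icc tmin tmax))
    (hlip : ∀ t ∈ Icc tmin tmax, LipschitzWith K (v t))
    (hbdd : ∀ t ∈ Icc tmin tmax, ∀ x, ‖v t x‖ ≤ L) (x₀ : E) :
    ∃ γ : ℝ → E, γ t₀ = x₀ ∧ IsIntegralCurveOn γ v (Icc tmin tmax) := by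
  have hpl : IsPicardLindelof v (⟨t₀, ht₀⟩ : Icc tmin tmax) x₀
      (L * Real.toNNReal (max (tmax - t₀) (t₀ - tmin))) 0 L K :=
    { lipschitzOnWith := fun t ht => (hlip t ht).lipschitzOnWith
      continuousOn := fun x _ => hcont x
      norm_le := fun t ht x _ => hbdd t ht x
      mul_max_le := by
        have := mul_le_mul_of_nonneg_left
          (Real.le_coe_toNNReal (max (tmax - t₀) (t₀ - tmin))) L.coe_nonneg
        simpa using this }
  exact hpl.exists_eq_forall_mem_Icc_hasDerivWithinAt₀

theorem exists_isIntegralCurve_of_forall_Icc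
    (hlip : ∀ T : ℝ, ∃ K, ∀ t ∈ Icc (-T) T, LipschitzWith K (v t)) {x₀ : E}
    (h : ∀ T : ℝ, 0 ≤ T → ∃ γ : ℝ → E, γ 0 = x₀ ∧ IsIntegralCurveOn γ v (Icc (-T) T)) :
    ∃ γ : ℝ → E, γ 0 = x₀ ∧ IsIntegralCurve γ v := by
  have hT : ∀ t : ℝ, 0 ≤ |t| + 1 := fun t => by positivity
  choose γ hγ₀ hγ using fun t : ℝ => h (|t| + 1) (hT t)
  have hderiv : ∀ s, ∀ t ∈ Ioo (-(|s| + 1)) (|s| + 1), HasDerivAt (γ s) (v t (γ s t)) t :=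
    fun s t ht => (hγ s t (Ioo_subset_Icc_self ht)).hasDerivAt (Icc_mem_nhds ht.1 ht.2)
  have hagree : ∀ s, ∀ t ∈ Ioo (-(|s| + 1)) (|s| + 1), γ t t = γ s t := by
    intro s t ht
    obtain ⟨K, hK⟩ := hlip (|s| + 1)
    have hsol : ∀ r, min |t| |s| ≤ |r| → ∀ τ ∈ Ioo (-(min |t| |s| + 1)) (min |t| |s| + 1),
        HasDerivAt (γ r) (v τ (γ r τ)) τ ∧ γ r τ ∈ univ := fun r hr τ hτ =>
      ⟨hderiv r τ ⟨by linarith [hτ.1], by linarith [hτ.2]⟩, mem_univ _⟩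
    have hpos : 0 < min |t| |s| + 1 := by positivity
    refine ODE_solution_unique_of_mem_Ioo (fun τ hτ => (hK τ ?_).lipschitzOnWith)
      ⟨neg_lt_zero.2 hpos, hpos⟩ (hsol t (min_le_left _ _)) (hsol s (min_le_right _ _))
      ((hγ₀ t).trans (hγ₀ s).symm) ?_
    · exact ⟨by linarith [hτ.1, min_le_right |t| |s|], by linarith [hτ.2, min_le_right |t| |s|]⟩
    · rw [mem_Ioo, ← abs_lt, ← min_add_add_right]
      exact lt_min (lt_add_one _) (abs_lt.2 ht)
  refine ⟨fun t => γ t t, hγ₀ 0, fun t => ?_⟩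
  have ht : t ∈ Ioo (-(|t| + 1)) (|t| + 1) := abs_lt.1 (lt_add_one _)
  refine (hderiv t t ht).congr_of_eventuallyEq ?_
  filter_upwards [Ioo_mem_nhds ht.1 ht.2] with s hs using hagree t s hs

theorem exists_isIntegralCurve_of_norm_le [CompleteSpace E] (hcont : ∀ x, Continuous (v · x))
    (hlip : ∀ T : ℝ, ∃ K, ∀ t ∈ Icc (-T) T, LipschitzWith K (v t))
    (hbdd : ∀ T : ℝ, ∃ L : NNReal, ∀ t ∈ Icc (-T) T, ∀ x, ‖v t x‖ ≤ L) (x₀ : E) :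
    ∃ γ : ℝ → E, γ 0 = x₀ ∧ IsIntegralCurve γ v := by
  refine exists_isIntegralCurve_of_forall_Icc hlip fun T hT => ?_
  obtain ⟨K, hK⟩ := hlip T
  obtain ⟨L, hL⟩ := hbdd T
  exact exists_isIntegralCurveOn_Icc_of_norm_le (by simpa using hT)
    (fun x => (hcont x).continuousOn) hK hL x₀

theorem contDiff_of_isIntegralCurve [CompleteSpace E] {n : ℕ∞} {γ : ℝ → E}
    (hv : ContDiff ℝ n (Function.uncurry v)) (hγ : IsIntegralCurve γ v) : ContDiff ℝ n γ :=
  contDiff_iff_contDiffAt.2 fun t =>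
    (ODE.contDiffOn_enat_Icc_of_hasDerivWithinAt (u := univ) hv.contDiffOn
      (hγ.isIntegralCurveOn (Icc (t - 1) (t + 1))) (mapsTo_univ _ _)).contDiffAt
      (Icc_mem_nhds (by linarith) (by linarith))

end GlobalIntegralCurve

/-- The pair `f`, `g = f'` solves the ordinary differential equation `f'' = φ (t f' / 2 - f)`, to
which the self-similar Hessian equation reduces for functions of one variable. -/
structure IsShrinkerProfile (φ f g : ℝ → ℝ) : Prop where
  hasDerivAt : ∀ t, HasDerivAt f (g t) t
  hasDerivAt_deriv : ∀ t, HasDerivAt g (φ (t * g t / 2 - f t)) t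

section Profile

open Set

variable {φ f g : ℝ → ℝ}

/-- The vector field governing `(f - t f', f')` when `f'' = φ (t f' / 2 - f)`. Unlike the field for
`(f, f')`, it is bounded on bounded time intervals if `φ` is bounded. -/
def shrinkerField (φ : ℝ → ℝ) (t : ℝ) (y : ℝ × ℝ) : ℝ × ℝ :=
  φ (-(y.1 + t / 2 * y.2)) • (-t, 1)

theorem norm_neg_prodMk_one_le {T t : ℝ} (ht : t ∈ Icc (-T) T) : ‖(-t, (1 : ℝ))‖ ≤ 1 + T := by
  have hT : |t| ≤ T := abs_le.2 ht
  rw [Prod.norm_mk, norm_neg, norm_one, Real.norm_eq_abs]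
  exact max_le (by linarith) (by linarith [abs_nonneg t])

theorem norm_shrinkerField_le {M : ℝ} (hφ : ∀ z, ‖φ z‖ ≤ M) {T t : ℝ} (ht : t ∈ Icc (-T) T)
    (y : ℝ × ℝ) : ‖shrinkerField φ t y‖ ≤ M * (1 + T) := by
  rw [shrinkerField, norm_smul]
  exact mul_le_mul (hφ _) (norm_neg_prodMk_one_le ht) (norm_nonneg _)
    ((norm_nonneg _).trans (hφ 0))

theorem lipschitzWith_shrinkerField {K : NNReal} (hφ : LipschitzWith K φ) {T : NNReal} {t : ℝ}
    (ht : t ∈ Icc (-(T : ℝ)) T) :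
    LipschitzWith (K * (1 + T) * (1 + T)) (shrinkerField φ t) := by
  refine LipschitzWith.of_dist_le_mul fun x y => ?_
  have harg : ‖-(x.1 + t / 2 * x.2) - -(y.1 + t / 2 * y.2)‖ ≤ (1 + T) * ‖x - y‖ := by
    have ht' : ‖t / 2‖ ≤ T := by
      rw [Real.norm_eq_abs, abs_le]
      constructor <;> linarith [ht.1, ht.2, T.coe_nonneg]
    calc ‖-(x.1 + t / 2 * x.2) - -(y.1 + t / 2 * y.2)‖
        = ‖(x - y).1 + t / 2 * (x - y).2‖ := by
          rw [← norm_neg, Prod.fst_sub, Prod.snd_sub]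
          congr 1
          ring
      _ ≤ ‖(x - y).1‖ + ‖t / 2‖ * ‖(x - y).2‖ := by
          rw [← norm_mul]
          exact norm_add_le _ _
      _ ≤ ‖x - y‖ + T * ‖x - y‖ := by
          gcongr
          exacts [norm_fst_le _, norm_snd_le _]
      _ = (1 + T) * ‖x - y‖ := by ring
  calc dist (shrinkerField φ t x) (shrinkerField φ t y)
      = ‖φ (-(x.1 + t / 2 * x.2)) - φ (-(y.1 + t / 2 * y.2))‖ * ‖(-t, (1 : ℝ))‖ := by
        rw [dist_eq_norm, shrinkerField, shrinkerField, ← sub_smul, norm_smul]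
    _ ≤ K * ((1 + T) * ‖x - y‖) * (1 + T) := by
        gcongr
        exacts [(hφ.norm_sub_le _ _).trans (by gcongr), norm_neg_prodMk_one_le ht]
    _ = ↑(K * (1 + T) * (1 + T)) * dist x y := by
        rw [dist_eq_norm]
        push_cast
        ring

theorem exists_isIntegralCurve_shrinkerField {K : NNReal} {M : ℝ} (hlip : LipschitzWith K φ)
    (hbdd : ∀ z, ‖φ z‖ ≤ M) (y₀ : ℝ × ℝ) :
    ∃ γ : ℝ → ℝ × ℝ, γ 0 = y₀ ∧ IsIntegralCurve γ (shrinkerField φ) := by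
  have hIcc (T : ℝ) {t : ℝ} (ht : t ∈ Icc (-T) T) : t ∈ Icc (-(T.toNNReal : ℝ)) T.toNNReal :=
    Icc_subset_Icc (neg_le_neg (Real.le_coe_toNNReal T)) (Real.le_coe_toNNReal T) ht
  refine exists_isIntegralCurve_of_norm_le (fun y => ?_) (fun T => ?_) (fun T => ?_) y₀
  · have := hlip.continuous
    unfold shrinkerField
    fun_prop
  · exact ⟨_, fun t ht => lipschitzWith_shrinkerField hlip (hIcc T ht)⟩
  · exact ⟨(M * (1 + T)).toNNReal, fun t ht y =>
      (norm_shrinkerField_le hbdd ht y).trans (Real.le_coe_toNNReal _)⟩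

theorem isShrinkerProfile_of_isIntegralCurve {γ : ℝ → ℝ × ℝ}
    (hγ : IsIntegralCurve γ (shrinkerField φ)) :
    IsShrinkerProfile φ (fun t => (γ t).1 + t * (γ t).2) fun t => (γ t).2 := by
  have hfst (t : ℝ) : HasDerivAt (fun s => (γ s).1) (shrinkerField φ t (γ t)).1 t := (hγ t).fst
  have hsnd (t : ℝ) : HasDerivAt (fun s => (γ s).2) (shrinkerField φ t (γ t)).2 t := (hγ t).snd
  refine ⟨fun t => ?_, fun t => ?_⟩
  · refine ((hfst t).add ((hasDerivAt_id t).mul (hsnd t))).congr_deriv ?_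
    simp only [shrinkerField, Prod.smul_mk, smul_eq_mul, mul_one, one_mul, id_eq]
    ring
  · refine (hsnd t).congr_deriv ?_
    simp only [shrinkerField, Prod.smul_snd, smul_eq_mul, mul_one]
    congr 1
    ring

theorem exists_isShrinkerProfile {K : NNReal} {M : ℝ} (hlip : LipschitzWith K φ)
    (hbdd : ∀ z, ‖φ z‖ ≤ M) (p q : ℝ) :
    ∃ f g : ℝ → ℝ, f 0 = p ∧ g 0 = q ∧ IsShrinkerProfile φ f g := by
  obtain ⟨γ, hγ₀, hγ⟩ := exists_isIntegralCurve_shrinkerField hlip hbdd (p, q)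
  exact ⟨_, _, by simp [hγ₀], by simp [hγ₀], isShrinkerProfile_of_isIntegralCurve hγ⟩

theorem IsShrinkerProfile.contDiff {n : ℕ∞} (h : IsShrinkerProfile φ f g) (hφ : ContDiff ℝ n φ) :
    ContDiff ℝ n f := by
  have hγ : IsIntegralCurve (fun t => (f t, g t)) fun t y => (y.2, φ (t * y.2 / 2 - y.1)) :=
    fun t => (h.hasDerivAt t).prodMk (h.hasDerivAt_deriv t)
  refine (contDiff_of_isIntegralCurve ?_ hγ).fst
  simp only [Function.uncurry_def]
  fun_prop

theorem IsShrinkerProfile.not_quadratic (h : IsShrinkerProfile φ f g)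
    (hφ : Function.Injective φ) (hg : g 0 ≠ 0) :
    ¬ ∃ A β γ : ℝ, ∀ t, f t = A * t ^ 2 / 2 + β * t + γ := by
  rintro ⟨A, β, γ, hf⟩
  have hg_eq : ∀ t, g t = A * t + β := fun t => by
    refine (h.hasDerivAt t).unique ?_
    rw [funext hf]
    convert! ((((hasDerivAt_id t).pow 2).const_mul A).div_const 2).add
      ((hasDerivAt_id t).const_mul β) |>.add_const γ using 1
    simp only [Nat.cast_ofNat, id_eq, Nat.add_one_sub_one, pow_one, mul_one, add_left_inj]
    ring
  have hconst : ∀ t, φ (t * g t / 2 - f t) = A := fun t => by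
    refine (h.hasDerivAt_deriv t).unique ?_
    rw [funext hg_eq]
    simpa using ((hasDerivAt_id t).const_mul A).add_const β
  have hβ := hφ ((hconst 0).trans (hconst 1).symm)
  simp only [hf, hg_eq] at hβ hg
  exact hg (by linarith)

end Profile

section Logistic

/-- The inverse of `l ↦ κ log ((b + a + l) / (b - a - l))`: an affine image of the logistic sigmoid,
with values in `(-(b + a), b - a)`. -/
def logisticCurve (a b κ z : ℝ) : ℝ :=
  2 * b * Real.sigmoid (z / κ) - (b + a)

variable {a b κ : ℝ}

theorem logisticCurve_mem_Ioo (hb : 0 < b) (z : ℝ) :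
    logisticCurve a b κ z ∈ Set.Ioo (-(b + a)) (b - a) := by
  have hpos : 0 < 2 * b * Real.sigmoid (z / κ) := mul_pos (by positivity) (Real.sigmoid_pos _)
  have hlt : 2 * b * Real.sigmoid (z / κ) < 2 * b :=
    mul_lt_of_lt_one_right (by positivity) (Real.sigmoid_lt_one _)
  constructor <;> unfold logisticCurve <;> linarith

theorem norm_logisticCurve_le (hb : 0 < b) (z : ℝ) : ‖logisticCurve a b κ z‖ ≤ b + |a| := by
  obtain ⟨hlow, hupp⟩ := logisticCurve_mem_Ioo (a := a) (κ := κ) hb z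
  rw [Real.norm_eq_abs, abs_le]
  constructor <;> linarith [le_abs_self a, neg_abs_le a]

theorem contDiff_logisticCurve {n : ℕ∞} : ContDiff ℝ n (logisticCurve a b κ) := by
  have : ContDiff ℝ n Real.sigmoid := contDiff_sigmoid.of_le (by simp)
  unfold logisticCurve
  fun_prop

theorem lipschitzWith_sigmoid : LipschitzWith 1 Real.sigmoid := by
  refine lipschitzWith_of_nnnorm_deriv_le differentiable_sigmoid fun z => ?_
  have hpos := Real.sigmoid_pos z
  have hlt := Real.sigmoid_lt_one z
  rw [← NNReal.coe_le_coe, coe_nnnorm, Real.deriv_sigmoid, Real.norm_eq_abs, NNReal.coe_one, abs_le]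
  constructor <;> nlinarith

theorem lipschitzWith_logisticCurve :
    LipschitzWith (‖2 * b‖₊ * ‖κ⁻¹‖₊) (logisticCurve a b κ) := by
  refine LipschitzWith.of_dist_le_mul fun x y => ?_
  calc dist (logisticCurve a b κ x) (logisticCurve a b κ y)
      = ‖2 * b‖ * dist (Real.sigmoid (x / κ)) (Real.sigmoid (y / κ)) := by
        rw [logisticCurve, logisticCurve, dist_sub_right, dist_eq_norm, dist_eq_norm, ← mul_sub,
          norm_mul]
    _ ≤ ‖2 * b‖ * dist (x / κ) (y / κ) := by
        gcongr
        simpa using lipschitzWith_sigmoid.dist_le_mul (x / κ) (y / κ)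
    _ = ↑(‖2 * b‖₊ * ‖κ⁻¹‖₊) * dist x y := by
        rw [dist_eq_norm, dist_eq_norm, div_eq_inv_mul, div_eq_inv_mul, ← mul_sub, norm_mul κ⁻¹,
          NNReal.coe_mul, coe_nnnorm, coe_nnnorm, mul_assoc]

theorem mul_log_logisticCurve (hb : b ≠ 0) (hκ : κ ≠ 0) (z : ℝ) :
    κ * Real.log ((b + a + logisticCurve a b κ z) / (b - a - logisticCurve a b κ z)) = z := by
  have hs := (Real.sigmoid_pos (z / κ)).ne'
  have hnum : b + a + logisticCurve a b κ z = 2 * b * Real.sigmoid (z / κ) := by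
    unfold logisticCurve
    ring
  have hden : b - a - logisticCurve a b κ z
      = 2 * b * (Real.sigmoid (z / κ) * Real.exp (-(z / κ))) := by
    rw [Real.sigmoid_mul_rexp_neg, Real.sigmoid_neg, logisticCurve]
    ring
  have hexp : 2 * b * Real.sigmoid (z / κ)
      / (2 * b * (Real.sigmoid (z / κ) * Real.exp (-(z / κ)))) = Real.exp (z / κ) := by
    rw [Real.exp_neg]
    field_simp
  rw [hnum, hden, hexp, Real.log_exp, mul_div_cancel₀ _ hκ]

end Logistic

theorem sum_eigs_diagonal {M : Type*} [AddCommMonoid M] {n : ℕ} (d : Fin n → ℝ) (F : ℝ → M) :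
    ∑ i, F (eigs (Matrix.diagonal d) i) = ∑ i, F (d i) := by
  have hd : (Matrix.diagonal d).IsHermitian := Matrix.isHermitian_diagonal d
  have hroots : (Matrix.diagonal d).charpoly.roots = Finset.univ.val.map d := by
    rw [Matrix.charpoly_diagonal, Polynomial.roots_prod _ _
      (Finset.prod_ne_zero_iff.2 fun i _ => Polynomial.X_sub_C_ne_zero (d i))]
    simp
  have hmap : Finset.univ.val.map hd.eigenvalues = Finset.univ.val.map d :=
    hd.roots_charpoly_eq_eigenvalues.symm.trans hroots
  have hsum := congrArg (fun m => (Multiset.map F m).sum) hmap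
  simp only [Multiset.map_map] at hsum
  simp only [eigs, dif_pos hd]
  exact hsum

/-- The separable function `x ↦ ∑ i, f i (x i)`. -/
def separableSum {n : ℕ} (f : Fin n → ℝ → ℝ) (x : EuclideanSpace ℝ (Fin n)) : ℝ :=
  ∑ i, f i (x i)

section Separable

variable {n : ℕ} {f g k : Fin n → ℝ → ℝ}

theorem contDiff_separableSum {m : WithTop ℕ∞} (hf : ∀ i, ContDiff ℝ m (f i)) :
    ContDiff ℝ m (separableSum f) :=
  ContDiff.sum fun i _ => (hf i).comp (EuclideanSpace.proj (𝕜 := ℝ) i).contDiff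

theorem hasFDerivAt_separableSum (hf : ∀ i t, HasDerivAt (f i) (g i t) t)
    (x : EuclideanSpace ℝ (Fin n)) :
    HasFDerivAt (separableSum f)
      (∑ i, g i (x i) • (EuclideanSpace.proj i : EuclideanSpace ℝ (Fin n) →L[ℝ] ℝ)) x :=
  HasFDerivAt.fun_sum fun i _ =>
    (hf i (x i)).comp_hasFDerivAt x (EuclideanSpace.proj (𝕜 := ℝ) i).hasFDerivAt

theorem inner_gradient_separableSum (hf : ∀ i t, HasDerivAt (f i) (g i t) t)
    (x : EuclideanSpace ℝ (Fin n)) :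
    ⟪x, gradient (separableSum f) x⟫ = ∑ i, x i * g i (x i) := by
  rw [real_inner_comm, inner_gradient_left, (hasFDerivAt_separableSum hf x).fderiv]
  simp [_root_.sum_apply, mul_comm]

theorem hess_separableSum (hf : ∀ i t, HasDerivAt (f i) (g i t) t)
    (hg : ∀ i t, HasDerivAt (g i) (k i t) t) (x : EuclideanSpace ℝ (Fin n)) :
    Hess n (separableSum f) x = Matrix.diagonal fun i => k i (x i) := by
  let coord (i : Fin n) : EuclideanSpace ℝ (Fin n) →L[ℝ] ℝ := EuclideanSpace.proj i
  have hfderiv : fderiv ℝ (separableSum f) = fun y => ∑ i, g i (y i) • coord i :=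
    funext fun y => (hasFDerivAt_separableSum hf y).fderiv
  have hfderiv₂ : HasFDerivAt (fun y : EuclideanSpace ℝ (Fin n) => ∑ i, g i (y i) • coord i)
      (∑ i, (k i (x i) • coord i).smulRight (coord i)) x :=
    HasFDerivAt.fun_sum fun i _ =>
      ((hg i (x i)).comp_hasFDerivAt x (coord i).hasFDerivAt).smul_const (coord i)
  ext i j
  simp only [Hess, Matrix.of_apply, iteratedFDeriv_two_apply, hfderiv, hfderiv₂.fderiv]
  simp [_root_.sum_apply, Matrix.diagonal_apply, coord]

theorem IsQuadPoly.exists_eq_of_separableSum (hf : IsQuadPoly n (separableSum f)) (i : Fin n) :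
    ∃ A β γ : ℝ, ∀ t, f i t = A * t ^ 2 / 2 + β * t + γ := by
  obtain ⟨A, β, c, -, hquad⟩ := hf
  refine ⟨A i i, β i, c - ∑ j ∈ Finset.univ.erase i, f j 0, fun t => ?_⟩
  have hline : separableSum f (EuclideanSpace.single i t)
      = f i t + ∑ j ∈ Finset.univ.erase i, f j 0 := by
    rw [separableSum, ← Finset.add_sum_erase _ _ (Finset.mem_univ i)]
    congr 1
    · simp
    · refine Finset.sum_congr rfl fun j hj => ?_
      simp [Finset.ne_of_mem_erase hj]
  have hval : separableSum f (EuclideanSpace.single i t)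
      = 1 / 2 * (A i i * t * t) + t * β i + c := by
    rw [hquad, EuclideanSpace.inner_single_right]
    simp
  linear_combination hval - hline

variable {φ : ℝ → ℝ}

theorem hess_separableSum_of_isShrinkerProfile (h : ∀ i, IsShrinkerProfile φ (f i) (g i))
    (x : EuclideanSpace ℝ (Fin n)) :
    Hess n (separableSum f) x =
      Matrix.diagonal fun i => φ (x i * g i (x i) / 2 - f i (x i)) :=
  hess_separableSum (fun i => (h i).hasDerivAt) (fun i => (h i).hasDerivAt_deriv) x

theorem sum_eigs_hess_separableSum (h : ∀ i, IsShrinkerProfile φ (f i) (g i)) {F : ℝ → ℝ}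
    (hF : Function.LeftInverse F φ) (x : EuclideanSpace ℝ (Fin n)) :
    ∑ i, F (eigs (Hess n (separableSum f) x) i)
      = -separableSum f x + (1 / 2) * ⟪x, gradient (separableSum f) x⟫ := by
  rw [hess_separableSum_of_isShrinkerProfile h, sum_eigs_diagonal,
    inner_gradient_separableSum fun i => (h i).hasDerivAt]
  simp only [hF _, separableSum, Finset.sum_sub_distrib, Finset.mul_sum]
  rw [neg_add_eq_sub]
  congr 1
  exact Finset.sum_congr rfl fun i _ => by ring

theorem posDef_diagonal_add_smul_one {d : Fin n → ℝ} {c : ℝ} (hd : ∀ i, -c < d i) :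
    (Matrix.diagonal d + c • (1 : Matrix (Fin n) (Fin n) ℝ)).PosDef := by
  rw [Matrix.smul_one_eq_diagonal, Matrix.diagonal_add, Matrix.posDef_diagonal_iff]
  exact fun i => neg_lt_iff_pos_add.1 (hd i)

theorem posDef_smul_one_sub_diagonal {d : Fin n → ℝ} {c : ℝ} (hd : ∀ i, d i < c) :
    (c • (1 : Matrix (Fin n) (Fin n) ℝ) - Matrix.diagonal d).PosDef := by
  rw [Matrix.smul_one_eq_diagonal, Matrix.diagonal_sub, Matrix.posDef_diagonal_iff]
  exact fun i => sub_pos.2 (hd i)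

end Separable

theorem nonquadratic_solution_exists_general (n : ℕ) (hn : 1 ≤ n) (a : ℝ) {b κ : ℝ}
    (hb : 0 < b) (hκ : κ ≠ 0) :
    ∃ u : EuclideanSpace ℝ (Fin n) → ℝ, ContDiff ℝ (⊤ : ℕ∞) u ∧
      (∀ x, (Hess n u x + (b + a) • (1 : Matrix (Fin n) (Fin n) ℝ)).PosDef ∧
        ((b - a) • (1 : Matrix (Fin n) (Fin n) ℝ) - Hess n u x).PosDef) ∧
      (∀ x, κ * ∑ i, Real.log ((b + a + eigs (Hess n u x) i) / (b - a - eigs (Hess n u x) i))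
        = -u x + (1 / 2) * ⟪x, gradient u x⟫) ∧
      ¬ IsQuadPoly n u := by
  have hinv : Function.LeftInverse (fun l => κ * Real.log ((b + a + l) / (b - a - l)))
      (logisticCurve a b κ) := mul_log_logisticCurve hb.ne' hκ
  obtain ⟨f, g, -, hg₀, hfg⟩ := exists_isShrinkerProfile
    (lipschitzWith_logisticCurve (a := a) (b := b) (κ := κ)) (norm_logisticCurve_le hb) 0 1
  refine ⟨separableSum fun _ => f,
    contDiff_separableSum fun _ => hfg.contDiff contDiff_logisticCurve,
    fun x => ?_, fun x => ?_, fun hquad => ?_⟩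
  · rw [hess_separableSum_of_isShrinkerProfile fun _ => hfg]
    exact ⟨posDef_diagonal_add_smul_one fun i => (logisticCurve_mem_Ioo hb _).1,
      posDef_smul_one_sub_diagonal fun i => (logisticCurve_mem_Ioo hb _).2⟩
  · rw [Finset.mul_sum]
    exact sum_eigs_hess_separableSum (fun _ => hfg) hinv x
  · exact hfg.not_quadratic hinv.injective (by simp [hg₀])
      (hquad.exists_eq_of_separableSum ⟨0, hn⟩)

theorem nonquadratic_solution_exists (n : ℕ) (hn : 1 ≤ n) (a b : ℝ)
    (ha : a < -1) (hb : b = Real.sqrt (a ^ 2 - 1)) :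
    ∃ u : EuclideanSpace ℝ (Fin n) → ℝ, ContDiff ℝ (⊤ : ℕ∞) u ∧
      (∀ x, (Hess n u x + (b + a) • (1 : Matrix (Fin n) (Fin n) ℝ)).PosDef ∧
        ((b - a) • (1 : Matrix (Fin n) (Fin n) ℝ) - Hess n u x).PosDef) ∧
      (∀ x, (Real.sqrt (a ^ 2 + 1) / (2 * b)) *
          ∑ i, Real.log ((b + a + eigs (Hess n u x) i) / (b - a - eigs (Hess n u x) i))
        = -u x + (1/2) * ⟪x, gradient u x⟫) ∧
      ¬ IsQuadPoly n u := by
  have hb₀ : 0 < b := hb ▸ Real.sqrt_pos.2 (by nlinarith)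
  exact nonquadratic_solution_exists_general n hn a hb₀ (by positivity)
end
end

section
/- Let n ≥ 1, p > 1 and K > 0 be constants. Let h : ℝⁿ → ℝ be a C¹ function with h ≥ 0 on ℝⁿ, such that the vector field X(x) := |Dh(x)|^{p−2} Dh(x) is C¹ on ℝⁿ and satisfies div X(x) = K ⟨x, Dh(x)⟩ |Dh(x)|^{p−2} for all x ∈ ℝⁿ. Then h is constant. -/
open Real Filter Matrix
open scoped RealInnerProductSpace

noncomputable section

/-- The divergence of a vector field on `ℝⁿ`. -/
def diverg (n : ℕ) (X : EuclideanSpace ℝ (Fin n) → EuclideanSpace ℝ (Fin n))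
    (x : EuclideanSpace ℝ (Fin n)) : ℝ :=
  ∑ i, fderiv ℝ X x (EuclideanSpace.single i 1) i

/-!
Multiplying `X` by the Gaussian weight `w = exp (-K‖x‖²/2)` absorbs the drift term: the equation
becomes `div (w X) = 0`. Testing it against `f ^ p * (h + 1) ^ (1 - p)`, with `f` a cutoff function,
and absorbing the cross term by Young's inequality gives a Caccioppoli estimate
`∫ w (f ‖Dh‖ / (h + 1)) ^ p ≤ C ∫ w ‖Df‖ ^ p`. Since `w` has finite mass, the right-hand side tends
to `0` when `f` exhausts `ℝⁿ` with `‖Df‖ = O(1/R)`, so `Dh = 0`. Both steps work for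
supersolutions `div Y ≤ 0` of weighted `p`-Laplace type, where `w ‖Dh‖ ^ p ≤ ⟨Dh, Y⟩` and
`‖Y‖ ≤ Λ w ‖Dh‖ ^ (p - 1)`.
-/

open MeasureTheory Metric

section Divergence

variable {n : ℕ} {X : EuclideanSpace ℝ (Fin n) → EuclideanSpace ℝ (Fin n)}

lemma continuous_diverg (hX : ContDiff ℝ 1 X) : Continuous (diverg n X) :=
  continuous_finsetSum _ fun i _ => (EuclideanSpace.proj i).continuous.comp
    ((hX.continuous_fderiv one_ne_zero).clm_apply continuous_const)

lemma hasCompactSupport_diverg (hX : HasCompactSupport X) : HasCompactSupport (diverg n X) :=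
  (hX.fderiv ℝ).comp_left (g := fun L : EuclideanSpace ℝ (Fin n) →L[ℝ] EuclideanSpace ℝ (Fin n) =>
    ∑ i, L (EuclideanSpace.single i 1) i) (by simp)

lemma diverg_smul {g : EuclideanSpace ℝ (Fin n) → ℝ} {x : EuclideanSpace ℝ (Fin n)}
    (hg : DifferentiableAt ℝ g x) (hX : DifferentiableAt ℝ X x) :
    diverg n (fun y => g y • X y) x = fderiv ℝ g x (X x) + g x * diverg n X x := by
  have expand : fderiv ℝ g x (X x) = ∑ i, X x i * fderiv ℝ g x (EuclideanSpace.single i 1) := by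
    conv_lhs => rw [← (EuclideanSpace.basisFun (Fin n) ℝ).sum_repr (X x)]
    simp
  simp only [diverg, fderiv_fun_smul hg hX, expand, Finset.mul_sum, ← Finset.sum_add_distrib]
  refine Finset.sum_congr rfl fun i _ => ?_
  simp only [_root_.add_apply, _root_.smul_apply, ContinuousLinearMap.smulRight_apply,
    PiLp.add_apply, PiLp.smul_apply, smul_eq_mul]
  ring

theorem integral_diverg_eq_zero (hX : ContDiff ℝ 1 X) (hXs : HasCompactSupport X) :
    ∫ x, diverg n X x = 0 := by
  have hcomp (i : Fin n) : ContDiff ℝ 1 fun x => X x i := contDiff_euclidean.1 hX i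
  have hcomps (i : Fin n) : HasCompactSupport fun x => X x i :=
    hXs.comp_left (g := fun v : EuclideanSpace ℝ (Fin n) => v i) rfl
  have hderiv (i : Fin n) (x : EuclideanSpace ℝ (Fin n)) :
      fderiv ℝ X x (EuclideanSpace.single i 1) i =
        fderiv ℝ (fun y => X y i) x (EuclideanSpace.single i 1) := by
    have := (EuclideanSpace.proj i : EuclideanSpace ℝ (Fin n) →L[ℝ] ℝ).hasFDerivAt.comp x
      (hX.differentiable one_ne_zero x).hasFDerivAt
    exact (congr($(this.fderiv) (EuclideanSpace.single i 1))).symm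
  have hint (i : Fin n) :
      Integrable fun x => fderiv ℝ (fun y => X y i) x (EuclideanSpace.single i 1) :=
    (((hcomp i).continuous_fderiv one_ne_zero).clm_apply
      continuous_const).integrable_of_hasCompactSupport ((hcomps i).fderiv_apply ℝ _)
  simp only [diverg, hderiv]
  rw [integral_finsetSum _ fun i _ => hint i]
  refine Finset.sum_eq_zero fun i _ => ?_
  simpa using integral_mul_fderiv_eq_neg_fderiv_mul_of_integrable (𝕜 := ℝ) (μ := volume)
    (f := fun _ => (1 : ℝ)) (g := fun y => X y i) (v := EuclideanSpace.single i 1)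
    (by simp) (by simpa using hint i)
    (by simpa using (hcomp i).continuous.integrable_of_hasCompactSupport (hcomps i))
    (fun _ _ => differentiableAt_const _) (fun x _ => (hcomp i).differentiable one_ne_zero x)

end Divergence

lemma young_inequality_rpow_sub_one {p ε a b : ℝ} (hp : 1 ≤ p) (hε : 0 < ε) (ha : 0 ≤ a)
    (hb : 0 ≤ b) :
    p * (a ^ (p - 1) * b) ≤ (p - 1) * ε * a ^ p + ε ^ (1 - p) * b ^ p := by
  have hp0 : 0 < p := by linarith
  have amgm := geom_mean_le_arith_mean2_weighted (w₁ := (p - 1) / p) (w₂ := 1 / p)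
    (p₁ := ε * a ^ p) (p₂ := ε ^ (1 - p) * b ^ p) (div_nonneg (by linarith) hp0.le)
    (by positivity) (by positivity) (by positivity) (by field_simp; ring)
  have geom_mean : (ε * a ^ p) ^ ((p - 1) / p) * (ε ^ (1 - p) * b ^ p) ^ (1 / p) =
      a ^ (p - 1) * b := by
    have hεε : ε ^ ((p - 1) / p) * ε ^ ((1 - p) * (1 / p)) = 1 := by
      rw [← rpow_add hε, show (p - 1) / p + (1 - p) * (1 / p) = 0 by ring, rpow_zero]
    rw [mul_rpow hε.le (by positivity), mul_rpow (by positivity) (by positivity), ← rpow_mul ha,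
      ← rpow_mul hε.le, ← rpow_mul hb, mul_div_cancel₀ _ hp0.ne', mul_one_div_cancel hp0.ne',
      rpow_one, mul_mul_mul_comm, hεε, one_mul]
  calc p * (a ^ (p - 1) * b)
      ≤ p * ((p - 1) / p * (ε * a ^ p) + 1 / p * (ε ^ (1 - p) * b ^ p)) := by
        rw [← geom_mean]; gcongr
    _ = (p - 1) * ε * a ^ p + ε ^ (1 - p) * b ^ p := by field_simp

lemma eq_zero_of_forall_setIntegral_closedBall_nonpos {α : Type*} [MetricSpace α]
    [ProperSpace α] [MeasurableSpace α] [BorelSpace α] {μ : Measure α} [IsFiniteMeasureOnCompacts μ]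
    [μ.IsOpenPosMeasure] {F : α → ℝ} (hF : Continuous F) (hF0 : ∀ x, 0 ≤ F x) (x₀ : α)
    (hint : ∀ r, 0 < r → ∫ x in closedBall x₀ r, F x ∂μ ≤ 0) (x : α) : F x = 0 := by
  set r := dist x x₀ + 1
  have hr : 0 < r := by positivity
  have hzero : F =ᵐ[μ.restrict (closedBall x₀ r)] 0 := by
    rw [← setIntegral_eq_zero_iff_of_nonneg_ae (ae_of_all _ hF0)
      (hF.continuousOn.integrableOn_compact (isCompact_closedBall x₀ r))]
    exact (hint r hr).antisymm (integral_nonneg hF0)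
  exact Measure.eqOn_open_of_ae_eq (ae_restrict_of_ae_restrict_of_subset ball_subset_closedBall
    hzero) isOpen_ball hF.continuousOn continuousOn_const (by simp [r])

lemma integrable_mul_rpow_of_hasCompactSupport {α : Type*} [TopologicalSpace α]
    [MeasurableSpace α] [OpensMeasurableSpace α] {μ : Measure α} [IsFiniteMeasureOnCompacts μ]
    {w F : α → ℝ} {q : ℝ} (hq : 0 < q) (hw : Continuous w) (hF : Continuous F)
    (hFs : HasCompactSupport F) : Integrable (fun x => w x * F x ^ q) μ :=
  (hw.mul (hF.rpow_const fun _ => Or.inr hq.le)).integrable_of_hasCompactSupport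
    (hFs.comp_left (g := fun t : ℝ => t ^ q) (zero_rpow hq.ne')).mul_left

lemma exists_cutoff_norm_fderiv_le_div (E : Type*) [NormedAddCommGroup E] [NormedSpace ℝ E]
    [FiniteDimensional ℝ E] :
    ∃ M : ℝ, ∀ R : ℝ, 0 < R → ∃ f : E → ℝ, ContDiff ℝ 1 f ∧ HasCompactSupport f ∧ (∀ x, 0 ≤ f x) ∧
      (∀ x ∈ closedBall 0 R, f x = 1) ∧ ∀ x, ‖fderiv ℝ f x‖ ≤ M / R := by
  let b : ContDiffBump (0 : E) := ⟨1, 2, one_pos, one_lt_two⟩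
  have hb : ContDiff ℝ 1 b := b.contDiff
  obtain ⟨M, hM⟩ := (b.hasCompactSupport.fderiv ℝ).exists_bound_of_continuous
    (hb.continuous_fderiv one_ne_zero)
  refine ⟨M, fun R hR => ⟨fun x => b (R⁻¹ • x), hb.comp (contDiff_const_smul _),
    b.hasCompactSupport.comp_smul (inv_ne_zero hR.ne'), fun x => b.nonneg, fun x hx => ?_,
    fun x => ?_⟩⟩
  · apply b.one_of_mem_closedBall
    rw [mem_closedBall_zero_iff] at hx ⊢
    rwa [norm_smul, norm_inv, Real.norm_of_nonneg hR.le, inv_mul_le_one₀ hR]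
  · rw [show fderiv ℝ (fun x => b (R⁻¹ • x)) x = R⁻¹ • fderiv ℝ b (R⁻¹ • x) from
      fderiv_comp_smul .., norm_smul, norm_inv, Real.norm_of_nonneg hR.le, ← div_eq_inv_mul]
    gcongr
    exact hM _

section NormedSpace

variable {E : Type*} [NormedAddCommGroup E] [NormedSpace ℝ E]

lemma continuous_norm_fderiv_div {u : E → ℝ} (hu : ContDiff ℝ 1 u) (hu0 : ∀ x, u x ≠ 0) :
    Continuous fun x => ‖fderiv ℝ u x‖ / u x :=
  (hu.continuous_fderiv one_ne_zero).norm.div hu.continuous hu0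

lemma hasFDerivAt_rpow_mul_rpow {p : ℝ} (hp : 1 ≤ p) {f u : E → ℝ} {x : E}
    (hf : DifferentiableAt ℝ f x) (hu : DifferentiableAt ℝ u x) (hux : u x ≠ 0) :
    HasFDerivAt (fun y => f y ^ p * u y ^ (1 - p))
      ((u x ^ (1 - p) * (p * f x ^ (p - 1))) • fderiv ℝ f x -
        ((p - 1) * (f x ^ p * u x ^ (-p))) • fderiv ℝ u x) x := by
  convert! (hf.hasFDerivAt.rpow_const (Or.inr hp)).mul
    (hu.hasFDerivAt.rpow_const (p := 1 - p) (Or.inl hux)) using 1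
  rw [show 1 - p - 1 = -p by ring]
  module

/-- `Y` is a flux of weighted `p`-Laplace type for `u`, with weight `w` and ellipticity ratio `Λ`:
it obeys the coercivity and growth bounds of the model flux `w ‖Du‖ ^ (p - 2) Du`, so that
`div Y = 0` is a quasilinear equation of `p`-Laplace type for `u`. A constant in the coercivity
bound is absorbed into `w`. -/
structure IsPLaplaceFlux (p Λ : ℝ) (w u : E → ℝ) (Y : E → E) : Prop where
  nonneg : 0 ≤ Λ
  coercive : ∀ x, w x * ‖fderiv ℝ u x‖ ^ p ≤ fderiv ℝ u x (Y x)
  norm_le : ∀ x, ‖Y x‖ ≤ Λ * w x * ‖fderiv ℝ u x‖ ^ (p - 1)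

namespace IsPLaplaceFlux

variable {p Λ : ℝ} {w u f : E → ℝ} {Y : E → E}

lemma add_const (hY : IsPLaplaceFlux p Λ w u Y) (c : ℝ) :
    IsPLaplaceFlux p Λ w (fun x => u x + c) Y where
  nonneg := hY.nonneg
  coercive x := by simpa only [fderiv_add_const] using hY.coercive x
  norm_le x := by simpa only [fderiv_add_const] using hY.norm_le x

lemma fderiv_test_apply_le (hp : 1 ≤ p) (hY : IsPLaplaceFlux p Λ w u Y) {x : E}
    (hwx : 0 ≤ w x) (hux : 0 < u x) (hfx : 0 ≤ f x) (hu : DifferentiableAt ℝ u x)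
    (hf : DifferentiableAt ℝ f x) :
    fderiv ℝ (fun y => f y ^ p * u y ^ (1 - p)) x (Y x) ≤
      2 ^ (p - 1) * Λ ^ p * (w x * ‖fderiv ℝ f x‖ ^ p) -
        (p - 1) / 2 * (w x * (f x * (‖fderiv ℝ u x‖ / u x)) ^ p) := by
  have hΛ := hY.nonneg
  set s := ‖fderiv ℝ u x‖
  set d := ‖fderiv ℝ f x‖
  have cross : fderiv ℝ f x (Y x) ≤ d * (Λ * w x * s ^ (p - 1)) :=
    (le_abs_self _).trans ((fderiv ℝ f x).le_of_opNorm_le_of_le le_rfl (hY.norm_le x))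
  -- With `ε = 1 / 2`, half of the coercive term survives the absorption of the cross term.
  have young := young_inequality_rpow_sub_one (ε := 1 / 2) (a := f x * (s / u x)) (b := Λ * d) hp
    one_half_pos (by positivity) (by positivity)
  have rpow_div_self (q : ℝ) : (f x * (s / u x)) ^ q = f x ^ q * s ^ q * u x ^ (-q) := by
    rw [mul_rpow hfx (by positivity), div_rpow (norm_nonneg _) hux.le, rpow_neg hux.le]
    ring
  have half_rpow : (1 / 2 : ℝ) ^ (1 - p) = 2 ^ (p - 1) := by
    rw [one_div, inv_rpow zero_le_two, ← rpow_neg zero_le_two, neg_sub]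
  calc fderiv ℝ (fun y => f y ^ p * u y ^ (1 - p)) x (Y x)
      = u x ^ (1 - p) * (p * f x ^ (p - 1)) * fderiv ℝ f x (Y x) -
          (p - 1) * (f x ^ p * u x ^ (-p)) * fderiv ℝ u x (Y x) := by
        rw [(hasFDerivAt_rpow_mul_rpow hp hf hu hux.ne').fderiv]
        simp
    _ ≤ u x ^ (1 - p) * (p * f x ^ (p - 1)) * (d * (Λ * w x * s ^ (p - 1))) -
          (p - 1) * (f x ^ p * u x ^ (-p)) * (w x * s ^ p) := by
        have := hY.coercive x
        have := sub_nonneg.2 hp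
        gcongr
    _ = w x * (p * ((f x * (s / u x)) ^ (p - 1) * (Λ * d))) -
          (p - 1) * (w x * (f x * (s / u x)) ^ p) := by
        rw [rpow_div_self, rpow_div_self, neg_sub]
        ring
    _ ≤ w x * ((p - 1) * (1 / 2) * (f x * (s / u x)) ^ p + 2 ^ (p - 1) * (Λ * d) ^ p) -
          (p - 1) * (w x * (f x * (s / u x)) ^ p) := by
        rw [half_rpow] at young
        gcongr
    _ = 2 ^ (p - 1) * Λ ^ p * (w x * d ^ p) - (p - 1) / 2 * (w x * (f x * (s / u x)) ^ p) := by
        rw [mul_rpow hΛ (norm_nonneg _)]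
        ring

end IsPLaplaceFlux

end NormedSpace

namespace IsPLaplaceFlux

variable {n : ℕ} {p Λ : ℝ} {w u f : EuclideanSpace ℝ (Fin n) → ℝ}
  {Y : EuclideanSpace ℝ (Fin n) → EuclideanSpace ℝ (Fin n)}

theorem caccioppoli (hp : 1 ≤ p) (hw : Continuous w) (hw0 : ∀ x, 0 ≤ w x)
    (hu : ContDiff ℝ 1 u) (hu0 : ∀ x, 0 < u x) (hY : IsPLaplaceFlux p Λ w u Y)
    (hYC1 : ContDiff ℝ 1 Y) (hdiv : ∀ x, diverg n Y x ≤ 0) (hf : ContDiff ℝ 1 f)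
    (hfs : HasCompactSupport f) (hf0 : ∀ x, 0 ≤ f x) :
    (p - 1) / 2 * ∫ x, w x * (f x * (‖fderiv ℝ u x‖ / u x)) ^ p ≤
      2 ^ (p - 1) * Λ ^ p * ∫ x, w x * ‖fderiv ℝ f x‖ ^ p := by
  have hp0 : 0 < p := by linarith
  set g := fun x => f x ^ p * u x ^ (1 - p)
  have hg : ContDiff ℝ 1 g :=
    (ContDiff.rpow_const_of_le (m := 1) (by simpa using hf) (by simpa using hp)).mul
      (hu.rpow_const_of_ne fun x => (hu0 x).ne')
  have hgs : HasCompactSupport g :=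
    (hfs.comp_left (g := fun t : ℝ => t ^ p) (zero_rpow hp0.ne')).mul_right
  have hgY : ContDiff ℝ 1 fun x => g x • Y x := hg.smul hYC1
  have hgYs : HasCompactSupport fun x => g x • Y x := hgs.smul_right
  have pointwise (x : EuclideanSpace ℝ (Fin n)) : diverg n (fun y => g y • Y y) x ≤
      2 ^ (p - 1) * Λ ^ p * (w x * ‖fderiv ℝ f x‖ ^ p) -
        (p - 1) / 2 * (w x * (f x * (‖fderiv ℝ u x‖ / u x)) ^ p) := by
    rw [diverg_smul (hg.differentiable one_ne_zero x) (hYC1.differentiable one_ne_zero x)]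
    have hg0 : 0 ≤ g x := mul_nonneg (rpow_nonneg (hf0 x) _) (rpow_nonneg (hu0 x).le _)
    have := hY.fderiv_test_apply_le hp (hw0 x) (hu0 x) (hf0 x)
      (hu.differentiable one_ne_zero x) (hf.differentiable one_ne_zero x)
    linarith [mul_nonpos_of_nonneg_of_nonpos hg0 (hdiv x)]
  have hint_cutoff : Integrable fun x => w x * ‖fderiv ℝ f x‖ ^ p :=
    integrable_mul_rpow_of_hasCompactSupport hp0 hw (hf.continuous_fderiv one_ne_zero).norm
      (hfs.fderiv ℝ).norm
  have hint_energy : Integrable fun x => w x * (f x * (‖fderiv ℝ u x‖ / u x)) ^ p :=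
    integrable_mul_rpow_of_hasCompactSupport hp0 hw
      (hf.continuous.mul (continuous_norm_fderiv_div hu fun x => (hu0 x).ne')) hfs.mul_right
  have hmono := integral_mono
    ((continuous_diverg hgY).integrable_of_hasCompactSupport (hasCompactSupport_diverg hgYs))
    ((hint_cutoff.const_mul (2 ^ (p - 1) * Λ ^ p)).sub (hint_energy.const_mul ((p - 1) / 2)))
    pointwise
  rwa [integral_diverg_eq_zero hgY hgYs, integral_sub' (hint_cutoff.const_mul _)
    (hint_energy.const_mul _), integral_const_mul, integral_const_mul, sub_nonneg] at hmono

lemma setIntegral_le_of_cutoff (hp : 1 ≤ p) (hw : Continuous w) (hw0 : ∀ x, 0 ≤ w x)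
    (hwI : Integrable w) (hu : ContDiff ℝ 1 u) (hu0 : ∀ x, 0 < u x)
    (hY : IsPLaplaceFlux p Λ w u Y) (hYC1 : ContDiff ℝ 1 Y) (hdiv : ∀ x, diverg n Y x ≤ 0)
    (hf : ContDiff ℝ 1 f) (hfs : HasCompactSupport f) (hf0 : ∀ x, 0 ≤ f x)
    {s : Set (EuclideanSpace ℝ (Fin n))} (hs : MeasurableSet s) (hf1 : ∀ x ∈ s, f x = 1) {δ : ℝ}
    (hfδ : ∀ x, ‖fderiv ℝ f x‖ ≤ δ) :
    (p - 1) / 2 * ∫ x in s, w x * (‖fderiv ℝ u x‖ / u x) ^ p ≤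
      2 ^ (p - 1) * Λ ^ p * (δ ^ p * ∫ x, w x) := by
  have hp1 : 0 ≤ (p - 1) / 2 := by linarith
  have hΛ := hY.nonneg
  have hfδw (x) : w x * ‖fderiv ℝ f x‖ ^ p ≤ δ ^ p * w x := by
    have := hw0 x
    rw [mul_comm]
    gcongr
    exact hfδ x
  calc (p - 1) / 2 * ∫ x in s, w x * (‖fderiv ℝ u x‖ / u x) ^ p
      = (p - 1) / 2 * ∫ x in s, w x * (f x * (‖fderiv ℝ u x‖ / u x)) ^ p := by
        congr 1
        exact setIntegral_congr_fun hs fun x hx => by simp only [hf1 x hx, one_mul]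
    _ ≤ (p - 1) / 2 * ∫ x, w x * (f x * (‖fderiv ℝ u x‖ / u x)) ^ p := by
        refine mul_le_mul_of_nonneg_left (setIntegral_le_integral
          (integrable_mul_rpow_of_hasCompactSupport (by linarith) hw
            (hf.continuous.mul (continuous_norm_fderiv_div hu fun x => (hu0 x).ne')) hfs.mul_right)
          (ae_of_all _ fun x => ?_)) hp1
        have := hw0 x
        have := hu0 x
        have := hf0 x
        positivity
    _ ≤ 2 ^ (p - 1) * Λ ^ p * ∫ x, w x * ‖fderiv ℝ f x‖ ^ p :=
        hY.caccioppoli hp hw hw0 hu hu0 hYC1 hdiv hf hfs hf0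
    _ ≤ 2 ^ (p - 1) * Λ ^ p * (δ ^ p * ∫ x, w x) := by
        rw [← integral_const_mul (δ ^ p)]
        refine mul_le_mul_of_nonneg_left ?_ (by positivity)
        exact integral_mono (integrable_mul_rpow_of_hasCompactSupport (by linarith) hw
          (hf.continuous_fderiv one_ne_zero).norm (hfs.fderiv ℝ).norm) (hwI.const_mul _) hfδw

theorem fderiv_eq_zero (hp : 1 < p) (hw : Continuous w) (hw0 : ∀ x, 0 < w x)
    (hwI : Integrable w) (hu : ContDiff ℝ 1 u) (hu0 : ∀ x, 0 < u x)
    (hY : IsPLaplaceFlux p Λ w u Y) (hYC1 : ContDiff ℝ 1 Y) (hdiv : ∀ x, diverg n Y x ≤ 0)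
    (x : EuclideanSpace ℝ (Fin n)) : fderiv ℝ u x = 0 := by
  have hp0 : 0 < p := by linarith
  have hp1 : 0 < (p - 1) / 2 := by linarith
  have hv0 (x) : 0 ≤ ‖fderiv ℝ u x‖ / u x := div_nonneg (norm_nonneg _) (hu0 x).le
  have hlim (M : ℝ) : Tendsto (fun R : ℝ => 2 ^ (p - 1) * Λ ^ p * ((M / R) ^ p * ∫ x, w x)) atTop
      (nhds 0) := by
    simpa [hp0.ne'] using (((tendsto_const_nhds.div_atTop tendsto_id).rpow_const
      (Or.inr hp0.le)).mul_const (∫ x, w x)).const_mul (2 ^ (p - 1) * Λ ^ p)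
  obtain ⟨M, hM⟩ := exists_cutoff_norm_fderiv_le_div (EuclideanSpace ℝ (Fin n))
  have henergy : w x * (‖fderiv ℝ u x‖ / u x) ^ p = 0 := by
    refine eq_zero_of_forall_setIntegral_closedBall_nonpos (μ := volume)
      (hw.mul ((continuous_norm_fderiv_div hu fun x => (hu0 x).ne').rpow_const
        fun _ => Or.inr hp0.le))
      (fun x => mul_nonneg (hw0 x).le (rpow_nonneg (hv0 x) _)) 0 (fun r hr => ?_) x
    refine nonpos_of_mul_nonpos_right (ge_of_tendsto (hlim M) ?_) hp1
    filter_upwards [eventually_ge_atTop r] with R hrR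
    obtain ⟨f, hf, hfs, hf0, hf1, hfM⟩ := hM R (hr.trans_le hrR)
    exact hY.setIntegral_le_of_cutoff hp.le hw (fun x => (hw0 x).le) hwI hu hu0 hYC1 hdiv hf hfs hf0
      measurableSet_closedBall (fun x hx => hf1 x (closedBall_subset_closedBall hrR hx)) hfM
  simpa [(hw0 x).ne', (hu0 x).ne', rpow_eq_zero (hv0 x) hp0.ne'] using henergy

end IsPLaplaceFlux

theorem liouville_p_laplace_general {n : ℕ} {p Λ : ℝ} (hp : 1 < p)
    {w h : EuclideanSpace ℝ (Fin n) → ℝ} (hw : Continuous w) (hw0 : ∀ x, 0 < w x)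
    (hwI : Integrable w) (hh : ContDiff ℝ 1 h) (hbdd : BddBelow (Set.range h))
    {Y : EuclideanSpace ℝ (Fin n) → EuclideanSpace ℝ (Fin n)} (hY : IsPLaplaceFlux p Λ w h Y)
    (hYC1 : ContDiff ℝ 1 Y) (hdiv : ∀ x, diverg n Y x ≤ 0) : ∃ c : ℝ, ∀ x, h x = c := by
  obtain ⟨m, hm⟩ := hbdd
  have hpos (x) : 0 < h x + (1 - m) := by linarith [hm (Set.mem_range_self x)]
  have hzero (x) : fderiv ℝ h x = 0 := by
    simpa only [fderiv_add_const] using (hY.add_const (1 - m)).fderiv_eq_zero hp hw hw0 hwI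
      (hh.add contDiff_const) hpos hYC1 hdiv x
  exact ⟨h 0, fun x => is_const_of_fderiv_eq_zero (hh.differentiable one_ne_zero) hzero x 0⟩

lemma isPLaplaceFlux_smul_norm_rpow_smul_gradient {E : Type*} [NormedAddCommGroup E]
    [InnerProductSpace ℝ E] [CompleteSpace E] {p : ℝ} (hp : 1 < p) {w h : E → ℝ}
    (hw : ∀ x, 0 ≤ w x) :
    IsPLaplaceFlux p 1 w h fun x => w x • ‖gradient h x‖ ^ (p - 2) • gradient h x := by
  have hnorm (x) : ‖fderiv ℝ h x‖ = ‖gradient h x‖ := by simp [gradient]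
  refine ⟨zero_le_one, fun x => le_of_eq ?_, fun x => le_of_eq ?_⟩
  · rw [map_smul, map_smul, ← inner_gradient_left, real_inner_self_eq_norm_sq, hnorm, smul_eq_mul,
      smul_eq_mul, ← rpow_natCast, ← rpow_add' (norm_nonneg _) (by norm_num; linarith)]
    norm_num
  · rw [norm_smul, norm_smul, Real.norm_of_nonneg (hw x), Real.norm_of_nonneg (by positivity),
      hnorm, ← rpow_add_one' (norm_nonneg _) (by linarith), one_mul]
    ring_nf

lemma diverg_exp_neg_mul_sq_norm_smul {n : ℕ}
    {X : EuclideanSpace ℝ (Fin n) → EuclideanSpace ℝ (Fin n)} {x : EuclideanSpace ℝ (Fin n)}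
    (hX : DifferentiableAt ℝ X x) (b : ℝ) :
    diverg n (fun y => rexp (-b * ‖y‖ ^ 2) • X y) x =
      rexp (-b * ‖x‖ ^ 2) * (diverg n X x - 2 * b * ⟪x, X x⟫) := by
  have hw := ((hasStrictFDerivAt_norm_sq x).hasFDerivAt.const_mul (-b)).exp
  rw [diverg_smul hw.differentiableAt hX, hw.fderiv]
  simp only [_root_.smul_apply, innerSL_apply_apply, smul_eq_mul, nsmul_eq_mul]
  push_cast
  ring

lemma integrable_exp_neg_mul_sq_norm {E : Type*} [NormedAddCommGroup E] [InnerProductSpace ℝ E]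
    [FiniteDimensional ℝ E] [MeasurableSpace E] [BorelSpace E] {b : ℝ} (hb : 0 < b) :
    Integrable fun x : E => rexp (-b * ‖x‖ ^ 2) :=
  .of_integral_ne_zero (by rw [GaussianFourier.integral_rexp_neg_mul_sq_norm hb]; positivity)

theorem liouville_p_laplace (n : ℕ) (hn : 1 ≤ n) (p K : ℝ) (hp : 1 < p) (hK : 0 < K)
    (h : EuclideanSpace ℝ (Fin n) → ℝ)
    (hh : ContDiff ℝ 1 h) (hpos : ∀ x, 0 ≤ h x)
    (X : EuclideanSpace ℝ (Fin n) → EuclideanSpace ℝ (Fin n))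
    (hX : ∀ x, X x = ‖gradient h x‖ ^ (p - 2) • gradient h x)
    (hXC1 : ContDiff ℝ 1 X)
    (hdiv : ∀ x, diverg n X x = K * ⟪x, gradient h x⟫ * ‖gradient h x‖ ^ (p - 2)) :
    ∃ c : ℝ, ∀ x, h x = c := by
  let w (x : EuclideanSpace ℝ (Fin n)) : ℝ := rexp (-(K / 2) * ‖x‖ ^ 2)
  have hw : ContDiff ℝ 1 w := (contDiff_const.mul (contDiff_norm_sq ℝ)).exp
  have hflux : IsPLaplaceFlux p 1 w h fun x => w x • X x := by
    simpa only [hX] using isPLaplaceFlux_smul_norm_rpow_smul_gradient hp fun x => (exp_pos _).le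
  have hdivw (x) : diverg n (fun y => w y • X y) x = 0 := by
    rw [diverg_exp_neg_mul_sq_norm_smul (hXC1.differentiable one_ne_zero x), hdiv, hX,
      inner_smul_right]
    ring
  exact liouville_p_laplace_general hp hw.continuous (fun x => exp_pos _)
    (integrable_exp_neg_mul_sq_norm (half_pos hK)) hh ⟨0, Set.forall_mem_range.2 hpos⟩ hflux
    (hw.smul hXC1) fun x => (hdivw x).le
end
end

section
/- Let n ≥ 1 and let w : ℝⁿ → ℝ be a C² strictly convex function (D²w(x) is positive definite for all x) satisfying −√2 · Σ_{i=1}^n 1/λ_i(D²w(x)) = −w(x) + (1/2)⟨x, Dw(x)⟩ for all x ∈ ℝⁿ. Then the gradient map Dw : ℝⁿ → ℝⁿ is surjective, i.e. Dw(ℝⁿ) = ℝⁿ. -/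
open Real Filter Matrix
open scoped RealInnerProductSpace

noncomputable section

/-!
Write `F` for the gradient of `w` and `H x = w x - ⟪x, F x⟫ / 2`. The equation and positivity of
the Hessian bound the norm of the inverse Hessian at `x` by `H x / √2`. Since `F` is injective
with invertible derivative, its image is open, and it is enough to show that it contains the
endpoint `z` of every half-open segment `[y, z)` inside it. Lift such a segment, run at constant
velocity `q = z - y`, to a curve `X` with `F (X t) = Y t`. Then `‖X'‖ ≤ ‖q‖ H / √2`, and `H' =
(⟪Y, X'⟫ - ⟪X, q⟫) / 2` along the lift, where `D²w` no longer occurs. So the pair `(X, H)`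
satisfies a linear differential inequality; by Grönwall `X` stays bounded, and a limit point of
`X` is mapped to `z`.
-/

open Set Function AffineMap InnerProductSpace

section Segments

theorem eq_univ_of_isOpen_of_forall_lineMap_mem {E : Type*} [AddCommGroup E] [Module ℝ E]
    [TopologicalSpace E] [IsTopologicalAddGroup E] [ContinuousSMul ℝ E] {s : Set E}
    (hs : IsOpen s) (hne : s.Nonempty)
    (hend : ∀ y z : E, (∀ t ∈ Ico (0 : ℝ) 1, lineMap y z t ∈ s) → z ∈ s) : s = univ := by
  obtain ⟨y, hy⟩ := hne
  refine eq_univ_of_forall fun z => by_contra fun hz => ?_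
  have hexit : IsCompact (Icc (0 : ℝ) 1 ∩ (lineMap y z ⁻¹' s)ᶜ) :=
    isCompact_Icc.inter_right (hs.preimage lineMap_continuous).isClosed_compl
  obtain ⟨b, ⟨⟨hb₀, hb₁⟩, hbs⟩, hleast⟩ :=
    hexit.exists_isLeast ⟨1, right_mem_Icc.2 zero_le_one, by simpa using hz⟩
  refine hbs (hend y _ fun t ht => by_contra fun hts => ?_)
  rw [lineMap_lineMap_right] at hts
  have hb_pos : 0 < b := hb₀.lt_of_ne (by rintro rfl; simp [hy] at hbs)
  have htb : t * b < b := mul_lt_of_lt_one_left hb_pos ht.2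
  exact (hleast ⟨⟨mul_nonneg ht.1 hb₀, htb.le.trans hb₁⟩, hts⟩).not_gt htb

theorem surjective_of_isOpenMap_of_isBounded_preimage_lineMap {E G : Type*}
    [PseudoMetricSpace E] [ProperSpace E] [Nonempty E]
    [AddCommGroup G] [Module ℝ G] [TopologicalSpace G] [IsTopologicalAddGroup G]
    [ContinuousSMul ℝ G] [T2Space G] {F : E → G} (hcont : Continuous F) (hopen : IsOpenMap F)
    (hbdd : ∀ y z : G, (∀ t ∈ Ico (0 : ℝ) 1, lineMap y z t ∈ range F) →
      Bornology.IsBounded (F ⁻¹' (lineMap y z '' Ico (0 : ℝ) 1))) :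
    Surjective F := by
  refine range_eq_univ.1 <| eq_univ_of_isOpen_of_forall_lineMap_mem hopen.isOpen_range
    (range_nonempty F) fun y z hseg => ?_
  set K : Set E := closure (F ⁻¹' (lineMap y z '' Ico (0 : ℝ) 1))
  have hK : IsClosed (F '' K) := ((hbdd y z hseg).isCompact_closure.image hcont).isClosed
  have hsub : Ico (0 : ℝ) 1 ⊆ lineMap y z ⁻¹' (F '' K) := by
    intro t ht
    obtain ⟨x, hx⟩ := hseg t ht
    exact ⟨x, subset_closure ⟨t, ht, hx.symm⟩, hx⟩
  have hone : (1 : ℝ) ∈ closure (Ico (0 : ℝ) 1) := by simp [closure_Ico]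
  have hz : lineMap y z (1 : ℝ) ∈ F '' K :=
    closure_minimal hsub (hK.preimage lineMap_continuous) hone
  rw [lineMap_apply_one] at hz
  exact image_subset_range F K hz

theorem norm_lineMap_le {E : Type*} [SeminormedAddCommGroup E] [NormedSpace ℝ E] (y z : E) {t : ℝ}
    (ht : t ∈ Icc (0 : ℝ) 1) : ‖lineMap y z t‖ ≤ ‖z - y‖ + ‖y‖ := by
  rw [lineMap_apply_module']
  refine (norm_add_le _ _).trans (add_le_add_left ?_ _)
  rw [norm_smul, Real.norm_of_nonneg ht.1]
  exact mul_le_of_le_one_left (norm_nonneg _) ht.2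

end Segments

theorem hasDerivAt_invFun_comp {𝕜 E G : Type*} [NontriviallyNormedField 𝕜]
    [NormedAddCommGroup E] [NormedSpace 𝕜 E] [CompleteSpace E]
    [NormedAddCommGroup G] [NormedSpace 𝕜 G] {F : E → G} {L : E ≃L[𝕜] G} {x : E}
    (hF : HasStrictFDerivAt F (L : E →L[𝕜] G) x) (hinj : Injective F)
    {γ : 𝕜 → G} {γ' : G} {t : 𝕜} (hγ : HasDerivAt γ γ' t) (hx : F x = γ t) :
    HasDerivAt (fun s => invFun F (γ s)) (L.symm γ') t := by
  have hinv : HasStrictFDerivAt (invFun F) (L.symm : G →L[𝕜] E) (F x) :=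
    hF.to_local_left_inverse (Eventually.of_forall (leftInverse_invFun hinj))
  rw [hx] at hinv
  exact hinv.hasFDerivAt.comp_hasDerivAt t hγ

theorem isBounded_image_Ico_of_norm_deriv_le_mul_norm {E : Type*} [NormedAddCommGroup E]
    [NormedSpace ℝ E] {f f' : ℝ → E} {a b K : ℝ}
    (hf : ∀ t ∈ Ico a b, HasDerivAt f (f' t) t)
    (hbound : ∀ t ∈ Ico a b, ‖f' t‖ ≤ K * ‖f t‖) : Bornology.IsBounded (f '' Ico a b) := by
  refine isBounded_iff_forall_norm_le.2 ⟨‖f a‖ * exp (|K| * (b - a)), ?_⟩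
  rintro _ ⟨t, ht, rfl⟩
  have hsub : Icc a t ⊆ Ico a b := Icc_subset_Ico_right ht.2
  have hsub' : Ico a t ⊆ Ico a b := Ico_subset_Ico_right ht.2.le
  calc ‖f t‖ ≤ gronwallBound ‖f a‖ K 0 (t - a) :=
        norm_le_gronwallBound_of_norm_deriv_right_le
          (fun s hs => (hf s (hsub hs)).continuousAt.continuousWithinAt)
          (fun s hs => (hf s (hsub' hs)).hasDerivWithinAt) le_rfl
          (fun s hs => by simpa using hbound s (hsub' hs)) t (right_mem_Icc.2 ht.1)
    _ = ‖f a‖ * exp (K * (t - a)) := gronwallBound_ε0 _ _ _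
    _ ≤ ‖f a‖ * exp (|K| * (b - a)) := by
      gcongr
      · exact sub_nonneg.2 ht.1
      · exact le_abs_self K
      · exact ht.2.le

section InnerProductSpace

variable {E : Type*} [NormedAddCommGroup E] [InnerProductSpace ℝ E]

theorem injective_of_forall_inner_fderiv_pos {F : E → E} (hF : Differentiable ℝ F)
    (hpos : ∀ x v, v ≠ 0 → 0 < ⟪fderiv ℝ F x v, v⟫) : Injective F := by
  intro x y hxy
  by_contra hne
  have hderiv (t : ℝ) : HasDerivAt (fun s : ℝ => ⟪F (lineMap x y s), y - x⟫)
      ⟪fderiv ℝ F (lineMap x y t) (y - x), y - x⟫ t := by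
    simpa using ((hF (lineMap x y t)).hasFDerivAt.comp_hasDerivAt t hasDerivAt_lineMap).inner ℝ
      (hasDerivAt_const t (y - x))
  have hmono := strictMono_of_hasDerivAt_pos hderiv fun t => hpos _ _ (sub_ne_zero.2 (Ne.symm hne))
  simpa [hxy] using hmono zero_lt_one

variable [CompleteSpace E]

theorem contDiff_gradient {w : E → ℝ} {m n : WithTop ℕ∞} (hw : ContDiff ℝ n w) (hmn : m + 1 ≤ n) :
    ContDiff ℝ m (gradient w) :=
  -- `toDual` is conjugate-linear, but conjugation on `ℝ` is definitionally the identity.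
  ((toDual ℝ E).symm : StrongDual ℝ E ≃ₗᵢ[ℝ] E).contDiff.comp (hw.fderiv_right hmn)

theorem inner_fderiv_gradient_left (w : E → ℝ) (x u v : E) :
    ⟪fderiv ℝ (gradient w) x u, v⟫ = fderiv ℝ (fderiv ℝ w) x u v := by
  have h : fderiv ℝ (gradient w) x u = (toDual ℝ E).symm (fderiv ℝ (fderiv ℝ w) x u) :=
    congr($(((toDual ℝ E).symm : StrongDual ℝ E ≃ₗᵢ[ℝ] E).toContinuousLinearEquiv.comp_fderiv) u)
  rw [h, toDual_symm_apply]

theorem hasDerivAt_sub_half_inner {w : E → ℝ} {X Y : ℝ → E} {X' Y' : E} {t : ℝ}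
    (hw : HasGradientAt w (Y t) (X t)) (hX : HasDerivAt X X' t) (hY : HasDerivAt Y Y' t) :
    HasDerivAt (fun s => w (X s) - 1 / 2 * ⟪X s, Y s⟫) (1 / 2 * (⟪Y t, X'⟫ - ⟪X t, Y'⟫)) t := by
  have hwX : HasDerivAt (fun s => w (X s)) ⟪Y t, X'⟫ t :=
    hw.hasFDerivAt.comp_hasDerivAt t hX
  refine (hwX.sub ((hX.inner ℝ hY).const_mul (1 / 2))).congr_deriv ?_
  rw [real_inner_comm (Y t) X']
  ring

theorem isBounded_image_of_hasGradientAt_lineMap {w : E → ℝ} {X X' : ℝ → E} {y z : E} {c : ℝ}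
    (hc : 0 < c) (hX : ∀ t ∈ Ico (0 : ℝ) 1, HasDerivAt X (X' t) t)
    (hw : ∀ t ∈ Ico (0 : ℝ) 1, HasGradientAt w (lineMap y z t) (X t))
    (hspeed : ∀ t ∈ Ico (0 : ℝ) 1,
      c * ‖X' t‖ ≤ (w (X t) - 1 / 2 * ⟪X t, lineMap y z t⟫) * ‖z - y‖) :
    Bornology.IsBounded (X '' Ico (0 : ℝ) 1) := by
  set H : ℝ → ℝ := fun t => w (X t) - 1 / 2 * ⟪X t, lineMap y z t⟫
  set M : ℝ := ‖z - y‖ / c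
  set R : ℝ := ‖z - y‖ + ‖y‖
  have hpair : Bornology.IsBounded ((fun t => (X t, H t)) '' Ico (0 : ℝ) 1) := by
    refine isBounded_image_Ico_of_norm_deriv_le_mul_norm (K := M + R * M + ‖z - y‖)
      (fun t ht => (hX t ht).prodMk (hasDerivAt_sub_half_inner (hw t ht) (hX t ht)
        hasDerivAt_lineMap)) fun t ht => ?_
    set N : ℝ := ‖(X t, H t)‖
    have hXN : ‖X t‖ ≤ N := norm_fst_le (X t, H t)
    have hHN : H t ≤ N := (le_abs_self _).trans (norm_snd_le (X t, H t))
    have hline : ‖lineMap y z t‖ ≤ R := norm_lineMap_le y z (Ico_subset_Icc_self ht)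
    have hX'N : ‖X' t‖ ≤ M * N := by
      rw [div_mul_eq_mul_div, le_div_iff₀' hc, mul_comm ‖z - y‖]
      exact (hspeed t ht).trans (by gcongr)
    have hH'N : ‖1 / 2 * (⟪lineMap y z t, X' t⟫ - ⟪X t, z - y⟫)‖ ≤ R * (M * N) + N * ‖z - y‖ :=
      calc _ ≤ ‖⟪lineMap y z t, X' t⟫ - ⟪X t, z - y⟫‖ := by
            rw [norm_mul]
            exact mul_le_of_le_one_left (norm_nonneg _) (by norm_num)
        _ ≤ ‖lineMap y z t‖ * ‖X' t‖ + ‖X t‖ * ‖z - y‖ :=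
            (norm_sub_le _ _).trans (add_le_add (norm_inner_le_norm _ _) (norm_inner_le_norm _ _))
        _ ≤ R * (M * N) + N * ‖z - y‖ := by gcongr
    rw [add_mul, add_mul, mul_assoc R, mul_comm ‖z - y‖]
    have hMN : 0 ≤ M * N := by positivity
    have hRMN : 0 ≤ R * (M * N) := by positivity
    have hNq : 0 ≤ N * ‖z - y‖ := by positivity
    exact norm_prod_le_iff.2 ⟨by linarith, by linarith⟩
  simpa [image_image] using hpair.image_fst

end InnerProductSpace

theorem gradient_map_surjective_general {E : Type*} [NormedAddCommGroup E]
    [InnerProductSpace ℝ E] [FiniteDimensional ℝ E] {w : E → ℝ} {c : ℝ} (hc : 0 < c)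
    (hw : ContDiff ℝ 2 w) (hinj : Injective (gradient w))
    (hbound : ∀ x v,
      c * ‖v‖ ≤ (w x - 1 / 2 * ⟪x, gradient w x⟫) * ‖fderiv ℝ (gradient w) x v‖) :
    Surjective (gradient w) := by
  have hgrad : ContDiff ℝ 1 (gradient w) := contDiff_gradient hw (by norm_num)
  have hker (x : E) : Injective (fderiv ℝ (gradient w) x) := by
    refine (injective_iff_map_eq_zero _).2 fun v hv => norm_le_zero_iff.1 ?_
    refine nonpos_of_mul_nonpos_right ((hbound x v).trans_eq ?_) hc
    rw [hv, norm_zero, mul_zero]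
  set L : E → E ≃L[ℝ] E := fun x =>
    (LinearEquiv.ofInjectiveEndo (fderiv ℝ (gradient w) x : E →ₗ[ℝ] E)
      (hker x)).toContinuousLinearEquiv
  have hL (x : E) : HasStrictFDerivAt (gradient w) (L x : E →L[ℝ] E) x :=
    hgrad.contDiffAt.hasStrictFDerivAt one_ne_zero
  refine surjective_of_isOpenMap_of_isBounded_preimage_lineMap hgrad.continuous
    (isOpenMap_of_hasStrictFDerivAt_equiv hL) fun y z hseg => ?_
  set X : ℝ → E := fun t => invFun (gradient w) (lineMap y z t)
  have hX {t : ℝ} (ht : t ∈ Ico (0 : ℝ) 1) : gradient w (X t) = lineMap y z t :=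
    invFun_eq (hseg t ht)
  have hbdd : Bornology.IsBounded (X '' Ico (0 : ℝ) 1) := by
    refine isBounded_image_of_hasGradientAt_lineMap (y := y) (z := z) (w := w) hc
      (fun t ht => hasDerivAt_invFun_comp (hL (X t)) hinj hasDerivAt_lineMap (hX ht))
      (fun t ht => ?_) (fun t ht => ?_)
    · rw [← hX ht]
      exact (hw.differentiable two_ne_zero (X t)).hasGradientAt
    · have hLX : fderiv ℝ (gradient w) (X t) ((L (X t)).symm (z - y)) = z - y :=
        (L (X t)).apply_symm_apply (z - y)
      simpa only [hX ht, hLX] using hbound (X t) ((L (X t)).symm (z - y))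
  refine hbdd.subset ?_
  rintro x ⟨t, ht, hx⟩
  exact ⟨t, ht, hinj ((hX ht).trans hx)⟩

section Euclidean

variable {ι : Type*} [Fintype ι] [DecidableEq ι] {n : ℕ}

theorem hess_apply (w : EuclideanSpace ℝ (Fin n) → ℝ) (x : EuclideanSpace ℝ (Fin n))
    (i j : Fin n) :
    Hess n w x i j =
      fderiv ℝ (fderiv ℝ w) x (EuclideanSpace.single i 1) (EuclideanSpace.single j 1) := by
  simp only [Hess, Matrix.of_apply, iteratedFDeriv_two_apply, Matrix.cons_val_zero,
    Matrix.cons_val_one]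

theorem toEuclideanLin_hess_s11 {w : EuclideanSpace ℝ (Fin n) → ℝ} {x : EuclideanSpace ℝ (Fin n)}
    (hw : ContDiffAt ℝ 2 w x) (v : EuclideanSpace ℝ (Fin n)) :
    (Hess n w x).toEuclideanLin v = fderiv ℝ (gradient w) x v := by
  have hsymm : IsSymmSndFDerivAt ℝ w x := hw.isSymmSndFDerivAt (by simp)
  ext i
  calc (Hess n w x).toEuclideanLin v i
      = ∑ j, Hess n w x i j * v j := rfl
    _ = ∑ j, v j * fderiv ℝ (fderiv ℝ w) x (EuclideanSpace.single i 1)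
          (EuclideanSpace.single j 1) := by simp only [hess_apply, mul_comm]
    _ = fderiv ℝ (fderiv ℝ w) x (EuclideanSpace.single i 1)
          (∑ j, v j • EuclideanSpace.single j 1) := by simp only [map_sum, map_smul, smul_eq_mul]
    _ = fderiv ℝ (fderiv ℝ w) x v (EuclideanSpace.single i 1) := by
      rw [hsymm.eq]
      congr
      simpa using (EuclideanSpace.basisFun (Fin n) ℝ).sum_repr v
    _ = fderiv ℝ (gradient w) x v i := by
      rw [← inner_fderiv_gradient_left, EuclideanSpace.inner_single_right]
      simp

theorem inner_toEuclideanLin_self_pos {A : Matrix ι ι ℝ} (hA : A.PosDef)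
    {v : EuclideanSpace ℝ ι} (hv : v ≠ 0) : 0 < ⟪A.toEuclideanLin v, v⟫ := by
  simpa [EuclideanSpace.inner_eq_star_dotProduct] using
    hA.dotProduct_mulVec_pos (x := v.ofLp) (by simpa using hv)

theorem injective_gradient_of_forall_posDef_hess {w : EuclideanSpace ℝ (Fin n) → ℝ}
    (hw : ContDiff ℝ 2 w) (hpos : ∀ x, (Hess n w x).PosDef) : Injective (gradient w) :=
  injective_of_forall_inner_fderiv_pos
    ((contDiff_gradient hw one_add_one_eq_two.le).differentiable one_ne_zero) fun x v hv => by
      rw [← toEuclideanLin_hess_s11 hw.contDiffAt]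
      exact inner_toEuclideanLin_self_pos (hpos x) hv

theorem inner_eigenvectorBasis_toEuclideanLin {A : Matrix ι ι ℝ}
    (hA : A.IsHermitian) (i : ι) (v : EuclideanSpace ℝ ι) :
    ⟪hA.eigenvectorBasis i, A.toEuclideanLin v⟫ =
      hA.eigenvalues i * ⟪hA.eigenvectorBasis i, v⟫ := by
  have heigen : A.toEuclideanLin (hA.eigenvectorBasis i) =
      hA.eigenvalues i • hA.eigenvectorBasis i :=
    congrArg (WithLp.toLp 2) (hA.mulVec_eigenvectorBasis i)
  rw [← Matrix.isSymmetric_toEuclideanLin_iff.2 hA, heigen, real_inner_smul_left]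

theorem norm_le_sum_one_div_eigs_mul_norm {A : Matrix (Fin n) (Fin n) ℝ} (hA : A.PosDef)
    (v : EuclideanSpace ℝ (Fin n)) :
    ‖v‖ ≤ (∑ i, 1 / eigs A i) * ‖A.toEuclideanLin v‖ := by
  have heigs : eigs A = hA.isHermitian.eigenvalues := dif_pos hA.isHermitian
  rw [heigs, Finset.sum_mul]
  set b := hA.isHermitian.eigenvectorBasis
  calc ‖v‖ = ‖∑ i, ⟪b i, v⟫ • b i‖ := by rw [b.sum_repr']
    _ ≤ ∑ i, ‖⟪b i, v⟫ • b i‖ := norm_sum_le _ _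
    _ ≤ ∑ i, 1 / hA.isHermitian.eigenvalues i * ‖A.toEuclideanLin v‖ :=
      Finset.sum_le_sum fun i _ => ?_
  have hpos : 0 < hA.isHermitian.eigenvalues i := hA.eigenvalues_pos i
  rw [norm_smul, b.norm_eq_one, mul_one, one_div_mul_eq_div, le_div_iff₀' hpos]
  calc hA.isHermitian.eigenvalues i * ‖⟪b i, v⟫‖
      = ‖⟪b i, A.toEuclideanLin v⟫‖ := by
        rw [inner_eigenvectorBasis_toEuclideanLin, norm_mul, Real.norm_of_nonneg hpos.le]
    _ ≤ ‖b i‖ * ‖A.toEuclideanLin v‖ := norm_inner_le_norm _ _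
    _ = ‖A.toEuclideanLin v‖ := by rw [b.norm_eq_one, one_mul]

end Euclidean

theorem gradient_map_surjective (n : ℕ) (hn : 1 ≤ n)
    (w : EuclideanSpace ℝ (Fin n) → ℝ)
    (hw : ContDiff ℝ 2 w)
    (hconv : ∀ x, (Hess n w x).PosDef)
    (heq : ∀ x, -Real.sqrt 2 * ∑ i, 1 / eigs (Hess n w x) i
      = -w x + (1/2) * ⟪x, gradient w x⟫) :
    Function.Surjective (fun x => gradient w x) := by
  refine gradient_map_surjective_general (c := √2) (by positivity) hw
    (injective_gradient_of_forall_posDef_hess hw hconv) fun x v => ?_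
  have hv := norm_le_sum_one_div_eigs_mul_norm (hconv x) v
  rw [toEuclideanLin_hess_s11 hw.contDiffAt] at hv
  calc √2 * ‖v‖ ≤ √2 * ((∑ i, 1 / eigs (Hess n w x) i) * ‖fderiv ℝ (gradient w) x v‖) := by gcongr
    _ = (w x - 1 / 2 * ⟪x, gradient w x⟫) * ‖fderiv ℝ (gradient w) x v‖ := by
      linear_combination -‖fderiv ℝ (gradient w) x v‖ * heq x
end
end
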